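/- arXiv:1405.6866 — 8 statements merged into one kernel-verified Lean document; each statement's English description precedes it below -/
import Mathlib

section
/- There exists a family (K_α)_{α ∈ I} of compact subsets of the Hilbert cube [0,1]^ℕ, indexed by a set I of cardinality 2^{ℵ₀}, such that for all α ≠ β in I, K_α is not σ-embeddable into K_β. In particular, there is an antichain of size continuum in the σ-embeddability ordering of compact metrizable spaces (hence continuum many pairwise non-σ-homeomorphic compact metrizable spaces). -/
/-!
Call a set small if it is a countable union of zero-dimensional sets (`Small`). The heart of the
proof is a sequence of `G_δ` sets `X n` in a compact metrizable space, none of them small, such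
that for `m ≠ n` every piece of `X n` that embeds into `X m` is zero-dimensional
(`exists_avoiding_sequence`). For `S ⊆ ℕ`, the disjoint union of the `X n` with `n ∈ S` has a
compactification `K_S` in the Hilbert cube whose remainder consists of eventually vanishing
sequences, and is therefore small (`exists_compactification`, `small_finSupp`). If `K_S` were
σ-embeddable into `K_{S'}` and `n ∈ S \ S'`, then `X n` would be covered by countably many pieces,
each embedding into the small remainder or into some `X m` with `m ≠ n`; so `X n` would be small.
Hence a family of continuum many pairwise incomparable sets `S` yields the theorem.

Each `X n` is the graph of a partial function from the Cantor space to a Hilbert cube. It suffices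
to find such a graph `X` avoiding countably many given graphs `Y n` (`exists_avoiding_graph`).
Suppose that `f` embeds a piece `B` of `X` into `Y n`. As `Y n` is a graph, the point `f w` is
determined by its first coordinate, and the pull-back under `f` of countably many prescribed open
subsets of `B` is coded by a point `r` of the Cantor space. Thus `v = (r, (f w).1)` is a code for a
family of statements about coordinates of `w` itself. Fix countably many Cantor sets in `[0,1]`,
parametrized by maps `t q` and lying densely. The graph is built so that whenever a
coordinate of a point `w` equals some `t q v`, certain other coordinates of `w` are given by a
Borel function `h v` chosen to contradict what `v` asserts about them. So no coordinate of
`w ∈ B` equals `t q (r, (f w).1)`, and comparing coordinates with these continuous functions shows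
that `B` is zero-dimensional (`zeroDim_of_avoids`).

That `X` is not small rests on the Poincaré–Miranda theorem (`miranda`). A subset of the cube is
called large with respect to a set of coordinates (`Large`) if it meets the common zero set of any
functions, indexed by these coordinates, that have opposite signs on the corresponding pairs of
faces. By giving up half of the coordinates, a large closed set can be shrunk so as to
satisfy one of two alternatives: a given coordinate is on one side of a given number
(`Large.bisect`), or a given coordinate equals a fixed point of a given Cantor set or has positive
distance from that set (`Large.meet_or_far`). The coordinates are arranged along the binary tree, so
that countably many such tasks can be carried out fibrewise over the Cantor space. The choices are
Borel, hence continuous for a finer Polish topology; recording the point of the base, with respect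
to the finer topology, in half of the coordinates at each node ensures that the resulting graph is
`G_δ` in the original topology (`isGδ_of_coded`, `exists_isGδ_decided`).

The construction starts from a closed set `P₀` in the product of the Cantor space and the cube such
that every closed set has the same fibre as `P₀` over its own code. A countable union of
zero-dimensional sets is disjoint from a closed set `L` given by functions that separate
the opposite faces in infinitely many unused directions (`ZeroDim.exists_avoiding`); the fibres of
`L` are large (`large_section`), so the graph contains a point over the code of `L`, and this point
lies in `L`.
-/

open Set

/-- `X` is σ-embeddable into `Y`: `X` is a countable union of subsets each of which
(with the subspace topology) is homeomorphic to a subspace of `Y`. -/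
def SigmaEmbeddable (X : Type*) (Y : Type*) [TopologicalSpace X] [TopologicalSpace Y] : Prop :=
  ∃ A : ℕ → Set X, (⋃ n, A n) = univ ∧ ∀ n, ∃ B : Set Y, Nonempty (↥(A n) ≃ₜ ↥B)

namespace SigmaAntichain

open Filter Topology

/-! ### The Poincaré–Miranda theorem on the cube -/

section Miranda
variable {n : ℕ}

/-- The mod-2 coboundary of a cubical cochain: the cell `(v, D)` is the cube with least vertex `v`
spanned by the directions in `D`. -/
def coboundary (γ : (Fin n → ℕ) → Finset (Fin n) → ZMod 2) (v : Fin n → ℕ)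
    (D : Finset (Fin n)) : ZMod 2 :=
  ∑ i ∈ D, (γ v (D.erase i) + γ (v + Pi.single i 1) (D.erase i))

lemma zmod2_add_self (x : ZMod 2) : x + x = 0 := CharTwo.add_self_eq_zero x

lemma coboundary_one (v : Fin n → ℕ) (D : Finset (Fin n)) :
    coboundary (fun _ _ => (1 : ZMod 2)) v D = 0 := by
  simp only [coboundary, zmod2_add_self, Finset.sum_const_zero]

lemma coboundary_coboundary (γ : (Fin n → ℕ) → Finset (Fin n) → ZMod 2) (v : Fin n → ℕ)
    (D : Finset (Fin n)) : coboundary (coboundary γ) v D = 0 := by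
  simp only [coboundary, ← Finset.sum_add_distrib]
  rw [Finset.sum_sigma']
  refine Finset.sum_involution (fun p _ => ⟨p.2, p.1⟩) ?_ ?_ ?_ ?_
  · rintro ⟨i, j⟩ h
    simp only [Finset.erase_right_comm (a := j) (b := i),
      add_right_comm v (Pi.single j 1) (Pi.single i 1)]
    generalize γ v _ = p
    generalize γ (v + Pi.single j 1) _ = q
    generalize γ (v + Pi.single i 1) _ = r
    generalize γ (v + Pi.single i 1 + Pi.single j 1) _ = s
    revert p q r s
    decide
  · rintro ⟨i, j⟩ h _ h'
    simp only [Finset.mem_sigma, Finset.mem_erase] at h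
    simp only [Sigma.mk.injEq, heq_eq_eq] at h'
    exact h.2.1 h'.1
  · rintro ⟨i, j⟩ h
    simp only [Finset.mem_sigma, Finset.mem_erase] at h ⊢
    exact ⟨h.2.2, Ne.symm h.2.1, h.1⟩
  · rintro ⟨i, j⟩ h
    rfl

/-- The cocycles `β₀ = 1`, `β_{k+1} = δ (a_k β_k)` attached to 0-cochains `a_k`. -/
def labelCochain (a : ℕ → (Fin n → ℕ) → ZMod 2) :
    ℕ → (Fin n → ℕ) → Finset (Fin n) → ZMod 2
  | 0 => fun _ _ => 1
  | k + 1 => coboundary fun v D => a k v * labelCochain a k v D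

lemma coboundary_labelCochain (a : ℕ → (Fin n → ℕ) → ZMod 2) (k : ℕ) (v : Fin n → ℕ)
    (D : Finset (Fin n)) : coboundary (labelCochain a k) v D = 0 := by
  cases k with
  | zero => exact coboundary_one v D
  | succ k => exact coboundary_coboundary _ v D

/-- `u` is a vertex of the cell `(v, D)`. -/
def IsVertex (v : Fin n → ℕ) (D : Finset (Fin n)) (u : Fin n → ℕ) : Prop :=
  ∀ i, u i = v i ∨ (i ∈ D ∧ u i = v i + 1)

lemma isVertex_self (v : Fin n → ℕ) (D : Finset (Fin n)) : IsVertex v D v := fun _ => Or.inl rfl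

lemma IsVertex.of_erase {v : Fin n → ℕ} {D : Finset (Fin n)} {i : Fin n} {u : Fin n → ℕ}
    (h : IsVertex v (D.erase i) u) : IsVertex v D u := fun j =>
  (h j).imp_right fun h => ⟨Finset.mem_of_mem_erase h.1, h.2⟩

lemma IsVertex.of_add {v : Fin n → ℕ} {D : Finset (Fin n)} {i : Fin n} (hi : i ∈ D)
    {u : Fin n → ℕ} (h : IsVertex (v + Pi.single i 1) (D.erase i) u) : IsVertex v D u := by
  intro j
  rcases eq_or_ne j i with rfl | hj
  · right
    have := h j
    simpa [hi] using this
  · have := h j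
    simpa [hj] using this

/-- `β_k` vanishes on every cell on which one of `a_0, …, a_{k-1}` is constant. -/
lemma labelCochain_eq_zero (a : ℕ → (Fin n → ℕ) → ZMod 2) {k j : ℕ} (hj : j < k)
    (v : Fin n → ℕ) (D : Finset (Fin n)) (c : ZMod 2) (h : ∀ u, IsVertex v D u → a j u = c) :
    labelCochain a k v D = 0 := by
  induction k generalizing v D with
  | zero => omega
  | succ k ih =>
    rcases Nat.lt_succ_iff_lt_or_eq.1 hj with hj | rfl
    · simp only [labelCochain, coboundary]
      refine Finset.sum_eq_zero fun i hi => ?_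
      rw [ih hj v (D.erase i) fun u hu => h u hu.of_erase,
        ih hj (v + Pi.single i 1) (D.erase i) fun u hu => h u (hu.of_add hi)]
      simp
    · have : labelCochain a (j + 1) v D = c * coboundary (labelCochain a j) v D := by
        simp only [labelCochain, coboundary, Finset.mul_sum]
        refine Finset.sum_congr rfl fun i hi => ?_
        rw [h v (isVertex_self v D), h _ ((isVertex_self (v + Pi.single i 1) _).of_add hi), mul_add]
      rw [this, coboundary_labelCochain, mul_zero]

lemma sum_piFinset_fiber (t : Fin n → Finset ℕ) (i : Fin n) (g : (Fin n → ℕ) → ZMod 2) :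
    ∑ v ∈ Fintype.piFinset t, g v =
      ∑ v ∈ Fintype.piFinset (Function.update t i {0}), ∑ x ∈ t i, g (Function.update v i x) := by
  rw [← Finset.sum_product']
  refine Finset.sum_nbij' (fun v => (Function.update v i 0, v i))
    (fun p => Function.update p.1 i p.2) ?_ ?_ ?_ ?_ ?_
  · intro v hv
    simp only [Fintype.mem_piFinset, Finset.mem_product] at hv ⊢
    refine ⟨fun j => ?_, hv i⟩
    rcases eq_or_ne j i with rfl | hj <;> simp [*]
  · rintro ⟨v, x⟩ hv
    simp only [Fintype.mem_piFinset, Finset.mem_product] at hv ⊢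
    intro j
    have := hv.1 j
    rcases eq_or_ne j i with rfl | hj <;> simp_all
  · intro v hv
    simp
  · rintro ⟨v, x⟩ hv
    simp only [Fintype.mem_piFinset, Finset.mem_product] at hv
    have := hv.1 i
    simp only [Function.update_self, Finset.mem_singleton] at this
    simp [← this]
  · intro v hv
    simp

lemma sum_range_telescope (f : ℕ → ZMod 2) (N : ℕ) :
    ∑ x ∈ Finset.range N, (f x + f (x + 1)) = f 0 + f N := by
  induction N with
  | zero => simp [zmod2_add_self]
  | succ N ih =>
    rw [Finset.sum_range_succ, ih]
    linear_combination zmod2_add_self (f N)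

/-- Telescoping in the direction `i` over a box. -/
lemma sum_box_telescope (t : Fin n → Finset ℕ) (i : Fin n) (N : ℕ) (ht : t i = Finset.range N)
    (g : (Fin n → ℕ) → ZMod 2) :
    ∑ v ∈ Fintype.piFinset t, (g v + g (v + Pi.single i 1)) =
      ∑ v ∈ Fintype.piFinset (Function.update t i {0}), g v +
      ∑ v ∈ Fintype.piFinset (Function.update t i {N}), g v := by
  rw [sum_piFinset_fiber t i, sum_piFinset_fiber (Function.update t i {0}) i,
    sum_piFinset_fiber (Function.update t i {N}) i]
  simp only [Function.update_idem, Function.update_self, Finset.sum_singleton]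
  rw [← Finset.sum_add_distrib, ht]
  refine Finset.sum_congr rfl fun v hv => ?_
  have hv0 : Function.update v i 0 = v := by
    have := Fintype.mem_piFinset.1 hv i
    simp only [Function.update_self, Finset.mem_singleton] at this
    rw [← this, Function.update_eq_self]
  have : ∀ x, Function.update v i x + Pi.single i 1 = Function.update v i (x + 1) := by
    intro x
    ext j
    rcases eq_or_ne j i with rfl | hj <;> simp [*]
  simp only [this]
  have := sum_range_telescope (fun x => g (Function.update v i x)) N
  rwa [hv0] at this

/-- Among the `k`-cells spanned by the first `k` directions in the face
`v_k = … = v_{n-1} = N`, an odd number carries the value `1`. -/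
lemma sum_labelCochain (a : ℕ → (Fin n → ℕ) → ZMod 2) (N : ℕ)
    (h0 : ∀ (j : Fin n) v, v j = 0 → a j v = 0) (h1 : ∀ (j : Fin n) v, v j = N → a j v = 1)
    (k : ℕ) (hk : k ≤ n) :
    ∑ v ∈ Fintype.piFinset (fun i : Fin n => if (i : ℕ) < k then Finset.range N else {N}),
      labelCochain a k v (Finset.univ.filter fun i : Fin n => (i : ℕ) < k) = 1 := by
  induction k with
  | zero => simp [labelCochain]
  | succ k ih =>
    set t : Fin n → Finset ℕ := fun i : Fin n => if (i : ℕ) < k + 1 then Finset.range N else {N}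
      with ht
    set D : Finset (Fin n) := Finset.univ.filter fun i : Fin n => (i : ℕ) < k + 1 with hD
    simp only [labelCochain, coboundary]
    rw [Finset.sum_comm]
    have key : ∀ i ∈ D, ∑ v ∈ Fintype.piFinset t, (a k v * labelCochain a k v (D.erase i) +
        a k (v + Pi.single i 1) * labelCochain a k (v + Pi.single i 1) (D.erase i)) =
        if i = ⟨k, hk⟩ then 1 else 0 := by
      intro i hi
      have hik : (i : ℕ) < k + 1 := by simpa [hD] using hi
      rw [sum_box_telescope t i N (if_pos hik)
        (fun v => a k v * labelCochain a k v (D.erase i))]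
      split_ifs with hi'
      · subst hi'
        rw [Finset.sum_eq_zero, zero_add, ← ih (by omega)]
        · have e1 : Function.update t ⟨k, hk⟩ {N} =
              fun i : Fin n => if (i : ℕ) < k then Finset.range N else {N} := by
            ext1 j
            rcases eq_or_ne j ⟨k, hk⟩ with rfl | hj
            · simp
            · have : (j : ℕ) ≠ k := fun h => hj (Fin.ext h)
              have : (j : ℕ) < k + 1 ↔ (j : ℕ) < k := by omega
              simp only [Function.update_of_ne hj, ht, this]
          have e2 : D.erase ⟨k, hk⟩ = Finset.univ.filter fun i : Fin n => (i : ℕ) < k := by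
            ext j
            simp only [hD, Finset.mem_erase, Finset.mem_filter, Finset.mem_univ, true_and,
              ne_eq, Fin.ext_iff]
            omega
          rw [e1, e2]
          refine Finset.sum_congr rfl fun v hv => ?_
          rw [Fintype.mem_piFinset] at hv
          have := hv ⟨k, hk⟩
          simp only [lt_irrefl, if_false, Finset.mem_singleton] at this
          rw [h1 ⟨k, hk⟩ v this, one_mul]
        · intro v hv
          rw [Fintype.mem_piFinset] at hv
          have := hv ⟨k, hk⟩
          simp only [Function.update_self, Finset.mem_singleton] at this
          rw [h0 ⟨k, hk⟩ v this, zero_mul]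
      · have hik' : (i : ℕ) < k := by
          have : (i : ℕ) ≠ k := fun h => hi' (Fin.ext h)
          omega
        have vert : ∀ v u, IsVertex v (D.erase i) u → u i = v i := fun v u h =>
          (h i).resolve_right fun h => by simp at h
        rw [Finset.sum_eq_zero, Finset.sum_eq_zero, zero_add]
        · intro v hv
          rw [Fintype.mem_piFinset] at hv
          have := hv i
          simp only [Function.update_self, Finset.mem_singleton] at this
          rw [labelCochain_eq_zero a hik' v _ 1 fun u hu => h1 i u (by rw [vert v u hu, this]),
            mul_zero]
        · intro v hv
          rw [Fintype.mem_piFinset] at hv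
          have := hv i
          simp only [Function.update_self, Finset.mem_singleton] at this
          rw [labelCochain_eq_zero a hik' v _ 0 fun u hu => h0 i u (by rw [vert v u hu, this]),
            mul_zero]
    rw [Finset.sum_congr rfl key, Finset.sum_ite_eq']
    simp [hD]

/-- Combinatorial form of the Poincaré–Miranda theorem: 0–1 labels `a_j` of the vertices of the
grid `{0, …, N}ⁿ` with `a_j = 0` on the face `v_j = 0` and `a_j = 1` on the face `v_j = N` are
simultaneously nonconstant on some elementary cube. -/
lemma exists_cube_nonconstant (a : Fin n → (Fin n → ℕ) → ZMod 2) (N : ℕ)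
    (h0 : ∀ j v, v j = 0 → a j v = 0) (h1 : ∀ j v, v j = N → a j v = 1) :
    ∃ v : Fin n → ℕ, (∀ i, v i < N) ∧ ∀ j, ∃ u w, IsVertex v Finset.univ u ∧
      IsVertex v Finset.univ w ∧ a j u = 0 ∧ a j w = 1 := by
  let a' : ℕ → (Fin n → ℕ) → ZMod 2 := fun k v => if h : k < n then a ⟨k, h⟩ v else 0
  have ha' : ∀ j : Fin n, a' j = a j := fun j => by ext v; simp [a']
  have hs := sum_labelCochain a' N (by simpa [ha'] using h0) (by simpa [ha'] using h1) n le_rfl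
  obtain ⟨v, hv, hne⟩ := Finset.exists_ne_zero_of_sum_ne_zero (hs.trans_ne one_ne_zero)
  rw [Fintype.mem_piFinset] at hv
  have hD : (Finset.univ.filter fun i : Fin n => (i : ℕ) < n) = Finset.univ := by simp
  rw [hD] at hne
  refine ⟨v, fun i => by simpa using hv i, fun j => ?_⟩
  have hz : ∀ c : ZMod 2, ∃ u, IsVertex v Finset.univ u ∧ a j u ≠ c := by
    intro c
    by_contra! hc
    exact hne (labelCochain_eq_zero a' j.2 v _ c (by simpa [ha'] using hc))
  obtain ⟨u, hu, hu'⟩ := hz 1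
  obtain ⟨w, hw, hw'⟩ := hz 0
  have two : ∀ x : ZMod 2, (x ≠ 1 → x = 0) ∧ (x ≠ 0 → x = 1) := by decide
  exact ⟨u, w, hu, hw, (two _).1 hu', (two _).2 hw'⟩

end Miranda

/-- A family of functions on a cube `I^J`, one for each coordinate `s`, that satisfies the sign
condition of the Poincaré–Miranda theorem on the two faces `x s = 0` and `x s = 1`. -/
def Admissible {J : Type*} (ψ : J → C(J → unitInterval, ℝ)) : Prop :=
  ∀ s x, (x s = 0 → 0 ≤ ψ s x) ∧ (x s = 1 → ψ s x ≤ 0)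

lemma miranda_fin {n : ℕ} (ψ : Fin n → C(Fin n → unitInterval, ℝ)) (hψ : Admissible ψ) :
    ∃ x, ∀ s, ψ s x = 0 := by
  let p : ℕ → (Fin n → ℕ) → (Fin n → unitInterval) := fun m v i =>
    projIcc (0 : ℝ) 1 zero_le_one ((v i : ℝ) / (m + 1))
  have hp0 : ∀ m v i, v i = 0 → p m v i = 0 := by
    intro m v i h
    simp [p, h]
  have hp1 : ∀ m v i, v i = m + 1 → p m v i = 1 := by
    intro m v i h
    have : ((m : ℝ) + 1) / (m + 1) = 1 := div_self (by positivity)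
    simp [p, h, this]
  have hdist : ∀ m v u, IsVertex v Finset.univ u → dist (p m u) (p m v) ≤ 1 / ((m : ℝ) + 1) := by
    intro m v u h
    rw [dist_pi_le_iff (by positivity)]
    intro i
    rw [Subtype.dist_eq, Real.dist_eq]
    refine (abs_projIcc_sub_projIcc _).trans ?_
    rw [← sub_div, abs_div, abs_of_pos (by positivity : (0 : ℝ) < (m : ℝ) + 1)]
    gcongr
    rcases h i with h | ⟨-, h⟩ <;> simp [h]
  classical
  have main : ∀ m : ℕ, ∃ v : Fin n → ℕ, ∀ j, ∃ u w, IsVertex v Finset.univ u ∧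
      IsVertex v Finset.univ w ∧ 0 ≤ ψ j (p m u) ∧ ψ j (p m w) ≤ 0 := by
    intro m
    let a : Fin n → (Fin n → ℕ) → ZMod 2 := fun j v =>
      if v j = 0 then 0 else if v j = m + 1 then 1 else if ψ j (p m v) < 0 then 1 else 0
    obtain ⟨v, -, hv⟩ := exists_cube_nonconstant a (m + 1) (fun j v h => by simp [a, h])
      (fun j v h => by simp [a, h])
    refine ⟨v, fun j => ?_⟩
    obtain ⟨u, w, hu, hw, hau, haw⟩ := hv j
    refine ⟨u, w, hu, hw, ?_, ?_⟩
    · by_cases h0 : u j = 0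
      · exact (hψ j _).1 (hp0 m u j h0)
      by_cases h1 : u j = m + 1
      · simp [a, h1] at hau
      by_contra! h2
      simp [a, h0, h1, h2] at hau
    · by_cases h0 : w j = 0
      · simp [a, h0] at haw
      by_cases h1 : w j = m + 1
      · exact (hψ j _).2 (hp1 m w j h1)
      by_contra! h2
      simp [a, h0, h1, h2.not_gt] at haw
  choose v u w hu hw hu0 hw0 using main
  obtain ⟨x, φ, hφ, hx⟩ := CompactSpace.tendsto_subseq fun m => p m (v m)
  have hlim : Tendsto (fun m : ℕ => 1 / ((m : ℝ) + 1)) atTop (𝓝 0) :=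
    tendsto_one_div_add_atTop_nhds_zero_nat
  have conv : ∀ q : ℕ → Fin n → ℕ, (∀ m, IsVertex (v m) Finset.univ (q m)) →
      Tendsto (fun m => p (φ m) (q (φ m))) atTop (𝓝 x) := by
    intro q hq
    refine hx.congr_dist ?_
    refine squeeze_zero (fun _ => dist_nonneg) (fun m => ?_) (hlim.comp hφ.tendsto_atTop)
    rw [dist_comm]
    exact hdist _ _ _ (hq _)
  refine ⟨x, fun s => le_antisymm ?_ ?_⟩
  · exact le_of_tendsto' (((ψ s).continuous.tendsto x).comp (conv (fun m => w m s) fun m => hw m s))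
      fun m => hw0 _ s
  · exact ge_of_tendsto' (((ψ s).continuous.tendsto x).comp (conv (fun m => u m s) fun m => hu m s))
      fun m => hu0 _ s

/-- The Poincaré–Miranda theorem for a cube of arbitrary dimension: compactness reduces it to
finitely many functions, which are then restricted to a face of finite dimension. -/
theorem miranda {J : Type*} (ψ : J → C(J → unitInterval, ℝ)) (hψ : Admissible ψ) :
    ∃ x, ∀ s, ψ s x = 0 := by
  classical
  have h : (⋂ s, {x | ψ s x = 0}).Nonempty := by
    refine CompactSpace.iInter_nonempty
      (fun s => isClosed_eq (ψ s).continuous continuous_const) fun F => ?_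
    let e := F.equivFin
    let ext : (Fin F.card → unitInterval) → J → unitInterval := fun y s =>
      if h : s ∈ F then y (e ⟨s, h⟩) else 0
    have hext : Continuous ext := by
      refine continuous_pi fun s => ?_
      by_cases h : s ∈ F
      · simpa [ext, h] using continuous_apply _
      · simpa [ext, h] using continuous_const
    have hval : ∀ y i, ext y (e.symm i) = y i := by
      intro y i
      simp [ext]
    obtain ⟨y, hy⟩ := miranda_fin (fun i => (ψ (e.symm i)).comp ⟨ext, hext⟩) fun i y =>
      ⟨fun h => (hψ _ _).1 ((hval y i).trans h), fun h => (hψ _ _).2 ((hval y i).trans h)⟩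
    refine ⟨ext y, ?_⟩
    simp only [mem_iInter, mem_ofPred_eq]
    intro s hs
    simpa using hy (e ⟨s, hs⟩)
  obtain ⟨x, hx⟩ := h
  exact ⟨x, fun s => by simpa using mem_iInter.1 hx s⟩

/-! ### Large sets -/

section Large
variable {J : Type*}

/-- `P` is large with respect to the set `S` of coordinates: every admissible family has a
zero in `P` common to all its members with index in `S`. -/
def Large (P : Set (J → unitInterval)) (S : Set J) : Prop :=
  ∀ ψ : J → C(J → unitInterval, ℝ), Admissible ψ → ∃ x ∈ P, ∀ s ∈ S, ψ s x = 0

lemma Large.mono {P P' : Set (J → unitInterval)} {S S' : Set J} (h : Large P S) (hP : P ⊆ P')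
    (hS : S' ⊆ S) : Large P' S' := fun ψ hψ =>
  let ⟨x, hx, h⟩ := h ψ hψ
  ⟨x, hP hx, fun s hs => h s (hS hs)⟩

lemma Large.nonempty {P : Set (J → unitInterval)} {S : Set J} (h : Large P S) : P.Nonempty :=
  let ⟨x, hx, _⟩ := h (fun _ => 0) fun _ _ => ⟨fun _ => le_rfl, fun _ => le_rfl⟩
  ⟨x, hx⟩

lemma not_large_iff {P : Set (J → unitInterval)} {S : Set J} :
    ¬ Large P S ↔ ∃ ψ : J → C(J → unitInterval, ℝ), Admissible ψ ∧
      ∀ x ∈ P, ∃ s ∈ S, ψ s x ≠ 0 := by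
  simp only [Large]
  push Not
  rfl

lemma Large.combine {P : Set (J → unitInterval)} {S₀ S₁ : Set J} (h : Large P (S₀ ∪ S₁))
    (hd : Disjoint S₀ S₁) {ψ₀ ψ₁ : J → C(J → unitInterval, ℝ)} (h₀ : Admissible ψ₀)
    (h₁ : Admissible ψ₁) :
    ∃ x ∈ P, (∀ s ∈ S₀, ψ₀ s x = 0) ∧ ∀ s ∈ S₁, ψ₁ s x = 0 := by
  classical
  obtain ⟨x, hx, hz⟩ := h (fun s => if s ∈ S₀ then ψ₀ s else ψ₁ s) fun s x => by
    by_cases hs : s ∈ S₀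
    · simpa only [hs, if_true] using h₀ s x
    · simpa only [hs, if_false] using h₁ s x
  refine ⟨x, hx, fun s hs => ?_, fun s hs => ?_⟩
  · simpa only [hs, if_true] using hz s (Or.inl hs)
  · have := hz s (Or.inr hs)
    rwa [if_neg (disjoint_right.1 hd hs)] at this

/-- A large set stays large if some of the coordinates are given prescribed values. -/
lemma Large.fix {P : Set (J → unitInterval)} {S T : Set J} (h : Large P (T ∪ S))
    (hd : Disjoint T S) (y : J → unitInterval) : Large (P ∩ {x | ∀ s ∈ T, x s = y s}) S := by
  intro ψ hψ
  obtain ⟨x, hx, hT, hS⟩ := h.combine hd (ψ₀ := fun s =>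
    ⟨fun x => (y s : ℝ) - x s, by fun_prop⟩) (fun s x => ⟨fun h => by simp [h, (y s).2.1],
      fun h => by simp [h, (y s).2.2]⟩) hψ
  refine ⟨x, ⟨hx, fun s hs => ?_⟩, hS⟩
  have := hT s hs
  simp only [ContinuousMap.coe_mk] at this
  exact Subtype.ext (by linarith)

/-- Two admissible families witnessing the failure of both alternatives could be combined, on
`S₀` and on `S₁`, into one that has no common zero in `P`. -/
lemma Large.bisect {P : Set (J → unitInterval)} {S₀ S₁ : Set J} (h : Large P (S₀ ∪ S₁))
    (hd : Disjoint S₀ S₁) (i : J) (p : unitInterval) :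
    Large (P ∩ {x | x i ≤ p}) S₀ ∨ Large (P ∩ {x | p ≤ x i}) S₁ := by
  by_contra! hc
  obtain ⟨ψ₀, h₀, k₀⟩ := not_large_iff.1 hc.1
  obtain ⟨ψ₁, h₁, k₁⟩ := not_large_iff.1 hc.2
  obtain ⟨x, hx, z₀, z₁⟩ := h.combine hd h₀ h₁
  rcases le_total (x i) p with hle | hle
  · obtain ⟨s, hs, hne⟩ := k₀ x ⟨hx, hle⟩
    exact hne (z₀ s hs)
  · obtain ⟨s, hs, hne⟩ := k₁ x ⟨hx, hle⟩
    exact hne (z₁ s hs)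

/-- The points whose `i`-th coordinate has distance at least `1 / (N + 1)` from the range
of `t`. -/
def farFrom {V : Type*} (t : V → unitInterval) (i : J) (N : ℕ) : Set (J → unitInterval) :=
  {x | ∀ v, 1 / ((N : ℝ) + 1) ≤ dist (x i) (t v)}

lemma isClosed_farFrom {V : Type*} (t : V → unitInterval) (i : J) (N : ℕ) :
    IsClosed (farFrom t i N) := by
  rw [farFrom, ofPred_forall]
  exact isClosed_iInter fun v => isClosed_le continuous_const (by fun_prop)

/-- Some admissible family has no zero in `P`, common to its members with index in `S`, whose
`i`-th coordinate lies in the image of `W` under `t`. -/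
def Killed {V : Type*} (P : Set (J → unitInterval)) (S : Set J) (i : J) (t : V → unitInterval)
    (W : Set V) : Prop :=
  ∃ ψ : J → C(J → unitInterval, ℝ), Admissible ψ ∧
    ∀ x ∈ P, ∀ v ∈ W, x i = t v → ∃ s ∈ S, ψ s x ≠ 0

lemma Killed.mono {V : Type*} {P : Set (J → unitInterval)} {S : Set J} {i : J}
    {t : V → unitInterval} {W W' : Set V} (h : Killed P S i t W) (hW : W' ⊆ W) :
    Killed P S i t W' :=
  let ⟨ψ, hψ, k⟩ := h
  ⟨ψ, hψ, fun x hx v hv => k x hx v (hW hv)⟩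

/-- Admissible families can be glued by a Urysohn function of the `i`-th coordinate, because
admissibility is a convex condition. -/
lemma Killed.union {V : Type*} [TopologicalSpace V] [CompactSpace V]
    {P : Set (J → unitInterval)} {S : Set J} {i : J}
    {t : V → unitInterval} (ht : Continuous t) (hinj : Function.Injective t) {W₀ W₁ : Set V}
    (c₀ : IsClopen W₀) (c₁ : IsClopen W₁) (h₀ : Killed P S i t W₀) (h₁ : Killed P S i t W₁) :
    Killed P S i t (W₀ ∪ W₁) := by
  obtain ⟨ψ₀, a₀, k₀⟩ := h₀
  obtain ⟨ψ₁, a₁, k₁⟩ := h₁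
  have d : Disjoint (t '' W₀) (t '' (W₁ \ W₀)) :=
    (disjoint_image_iff hinj).2 disjoint_sdiff_right
  obtain ⟨f, f0, f1, f01⟩ := exists_continuous_zero_one_of_isClosed
    (c₀.isClosed.isCompact.image ht).isClosed
    ((c₁.diff c₀).isClosed.isCompact.image ht).isClosed d
  refine ⟨fun s => ⟨fun x => (1 - f (x i)) * ψ₀ s x + f (x i) * ψ₁ s x, by fun_prop⟩,
    fun s x => ?_, fun x hx v hv hxv => ?_⟩
  · have hf := f01 (x i)
    have hf' : 0 ≤ 1 - f (x i) := by linarith [hf.2]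
    refine ⟨fun h => ?_, fun h => ?_⟩
    · exact add_nonneg (mul_nonneg hf' ((a₀ s x).1 h)) (mul_nonneg hf.1 ((a₁ s x).1 h))
    · exact add_nonpos (mul_nonpos_of_nonneg_of_nonpos hf' ((a₀ s x).2 h))
        (mul_nonpos_of_nonneg_of_nonpos hf.1 ((a₁ s x).2 h))
  · by_cases hv0 : v ∈ W₀
    · obtain ⟨s, hs, hne⟩ := k₀ x hx v hv0 hxv
      have : f (t v) = 0 := f0 (mem_image_of_mem t hv0)
      exact ⟨s, hs, by simpa [hxv, this] using hne⟩
    · have hv1 : v ∈ W₁ := hv.resolve_left hv0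
      obtain ⟨s, hs, hne⟩ := k₁ x hx v hv1 hxv
      have : f (t v) = 1 := f1 (mem_image_of_mem t ⟨hv1, hv0⟩)
      exact ⟨s, hs, by simpa [hxv, this] using hne⟩

/-- Failure of largeness at each point of a Cantor set is witnessed by a single admissible family:
a witness at one point works nearby, and finitely many witnesses can be glued. -/
lemma killed_univ {V : Type*} [TopologicalSpace V] [CompactSpace V] [T2Space V]
    [TotallyDisconnectedSpace V] {P : Set (J → unitInterval)} (hP : IsClosed P) {S : Set J} {i : J}
    {t : V → unitInterval} (ht : Continuous t) (hinj : Function.Injective t)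
    (h : ∀ v, ¬ Large (P ∩ {x | x i = t v}) S) : Killed P S i t univ := by
  have key : ∃ W : Set V, IsClopen W ∧ univ ⊆ W ∧ Killed P S i t W := by
    refine isCompact_univ.induction_on (p := fun s => ∃ W : Set V, IsClopen W ∧ s ⊆ W ∧
      Killed P S i t W) ?_ ?_ ?_ ?_
    · exact ⟨∅, isClopen_empty, Subset.rfl, fun _ => 0,
        fun _ _ => ⟨fun _ => le_rfl, fun _ => le_rfl⟩,
        by simp⟩
    · rintro s s' hs ⟨W, c, hW, k⟩
      exact ⟨W, c, hs.trans hW, k⟩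
    · rintro s s' ⟨W, c, hW, k⟩ ⟨W', c', hW', k'⟩
      exact ⟨W ∪ W', c.union c', union_subset_union hW hW', k.union ht hinj c c' k'⟩
    · intro v _
      obtain ⟨ψ, hψ, k⟩ := not_large_iff.1 (h v)
      have hQ : IsClosed (P ∩ {x | ∀ s ∈ S, ψ s x = 0}) := by
        refine hP.inter ?_
        simp only [ofPred_forall]
        exact isClosed_biInter fun s _ => isClosed_eq (ψ s).continuous continuous_const
      have hQ' := (hQ.isCompact.image (continuous_apply i)).isClosed
      have hv : v ∈ t ⁻¹' ((fun x : J → unitInterval => x i) ''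
          (P ∩ {x | ∀ s ∈ S, ψ s x = 0}))ᶜ := by
        rintro ⟨x, ⟨hx, hz⟩, hxv⟩
        obtain ⟨s, hs, hne⟩ := k x ⟨hx, hxv⟩
        exact hne (hz s hs)
      obtain ⟨W, hWc, hvW, hW⟩ := compact_exists_isClopen_in_isOpen
        (hQ'.isOpen_compl.preimage ht) hv
      refine ⟨W, mem_nhdsWithin_of_mem_nhds (hWc.isOpen.mem_nhds hvW), W, hWc, Subset.rfl,
        ψ, hψ, fun x hx w hw hxw => ?_⟩
      by_contra! hc
      exact hW hw ⟨x, ⟨hx, hc⟩, hxw⟩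
  obtain ⟨W, -, hW, k⟩ := key
  exact k.mono hW

/-- A large closed set remains large, after giving up part of the coordinates, when the `i`-th
coordinate is either fixed at a point of the Cantor set `range t` or bounded away from that set. -/
lemma Large.meet_or_far {V : Type*} [TopologicalSpace V] [CompactSpace V] [T2Space V]
    [TotallyDisconnectedSpace V] {P : Set (J → unitInterval)} (hP : IsClosed P) {S₀ S₁ : Set J}
    (h : Large P (S₀ ∪ S₁)) (hd : Disjoint S₀ S₁) (i : J)
    {t : V → unitInterval} (ht : Continuous t) (hinj : Function.Injective t) :
    (∃ v, Large (P ∩ {x | x i = t v}) S₀) ∨ ∃ N, Large (P ∩ farFrom t i N) S₁ := by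
  by_contra! hc
  obtain ⟨ψ, hψ, k⟩ := killed_univ hP ht hinj hc.1
  have hQ : IsClosed (P ∩ {x | ∀ s ∈ S₀, ψ s x = 0}) := by
    refine hP.inter ?_
    simp only [ofPred_forall]
    exact isClosed_biInter fun s _ => isClosed_eq (ψ s).continuous continuous_const
  obtain ⟨r, hr, hdist⟩ := Metric.exists_pos_forall_lt_edist
    (hQ.isCompact.image (continuous_apply i)) (isCompact_range ht).isClosed (by
      rw [Set.disjoint_left]
      rintro _ ⟨x, ⟨hx, hz⟩, rfl⟩ ⟨v, hv⟩
      obtain ⟨s, hs, hne⟩ := k x hx v trivial hv.symm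
      exact hne (hz s hs))
  obtain ⟨N, hN⟩ := exists_nat_one_div_lt (show (0 : ℝ) < r from hr)
  obtain ⟨ψ₁, h₁, k₁⟩ := not_large_iff.1 (hc.2 N)
  obtain ⟨x, hx, z₀, z₁⟩ := h.combine hd hψ h₁
  obtain ⟨s, hs, hne⟩ := k₁ x ⟨hx, fun v => by
    have := hdist _ ⟨x, ⟨hx, z₀⟩, rfl⟩ _ ⟨v, rfl⟩
    rw [edist_nndist, ENNReal.coe_lt_coe, ← NNReal.coe_lt_coe, coe_nndist] at this
    exact hN.le.trans this.le⟩
  exact hne (z₁ s hs)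

end Large

/-! ### Topological preliminaries -/

/-- Alexandrov: a completely metrizable subspace of a metrizable space is a `Gδ`. -/
lemma isGδ_range_of_isEmbedding {X W : Type*} [TopologicalSpace X] [PolishSpace X]
    [TopologicalSpace W] [TopologicalSpace.MetrizableSpace W] {f : X → W} (hf : IsEmbedding f) :
    IsGδ (range f) := by
  let := TopologicalSpace.upgradeIsCompletelyMetrizable X
  let := TopologicalSpace.metrizableSpaceMetric W
  let U : ℕ → Set W := fun n => ⋃₀ {O | IsOpen O ∧
    ∀ a ∈ f ⁻¹' O, ∀ b ∈ f ⁻¹' O, dist a b < 1 / ((n : ℝ) + 1)}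
  have hU : ∀ n, IsOpen (U n) := fun n => isOpen_sUnion fun O hO => hO.1
  have key : range f = closure (range f) ∩ ⋂ n, U n := by
    apply Subset.antisymm
    · rintro _ ⟨x, rfl⟩
      refine ⟨subset_closure ⟨x, rfl⟩, mem_iInter.2 fun n => ?_⟩
      have hpos : (0 : ℝ) < 1 / ((n : ℝ) + 1) / 2 := by positivity
      obtain ⟨O, hO, hOx⟩ := hf.isInducing.isOpen_iff.1
        (Metric.isOpen_ball (x := x) (ε := 1 / ((n : ℝ) + 1) / 2))
      refine ⟨O, ⟨hO, fun a ha b hb => ?_⟩, ?_⟩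
      · rw [hOx, Metric.mem_ball] at ha hb
        have := dist_triangle_right a b x
        linarith
      · change x ∈ f ⁻¹' O
        rw [hOx]
        exact Metric.mem_ball_self hpos
    · rintro y ⟨hy, hyU⟩
      have hne : (comap f (𝓝 y)).NeBot := by
        rwa [comap_neBot_iff_frequently, ← mem_closure_iff_frequently] at *
      have hc : Cauchy (comap f (𝓝 y)) := by
        refine Metric.cauchy_iff.2 ⟨hne, fun ε hε => ?_⟩
        obtain ⟨n, hn⟩ := exists_nat_one_div_lt hε
        obtain ⟨O, ⟨hO, hd⟩, hyO⟩ := mem_iInter.1 hyU n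
        exact ⟨f ⁻¹' O, preimage_mem_comap (hO.mem_nhds hyO),
          fun a ha b hb => (hd a ha b hb).trans hn⟩
      obtain ⟨x, hx⟩ := CompleteSpace.complete hc
      refine ⟨x, tendsto_nhds_unique (f := f) (l := comap f (𝓝 y)) ?_ tendsto_comap⟩
      exact (hf.continuous.tendsto x).mono_left hx
  rw [key]
  exact isClosed_closure.isGδ.inter (.iInter_of_isOpen hU)

/-- Let `τ'` be a Polish topology finer than a metrizable topology `τ` on `C`. If the `τ'`-location
of `c` can be read off from `x` continuously for all `(c, x)` in a set that is closed for `τ'`,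
this set is a `Gδ` for `τ`. -/
lemma isGδ_of_coded {C E F : Type*} (τ τ' : TopologicalSpace C)
    (hτ : @TopologicalSpace.MetrizableSpace C τ)
    (hτ' : @PolishSpace C τ') (hle : τ' ≤ τ) [TopologicalSpace E] [PolishSpace E]
    [TopologicalSpace F] [T2Space F] {emb : C → F} (hemb : @IsEmbedding C F τ' _ emb) {o : E → F}
    (ho : Continuous o) {P : Set (C × E)}
    (hP : IsClosed[@instTopologicalSpaceProd C E τ' _] P) :
    @IsGδ (C × E) (@instTopologicalSpaceProd C E τ _) {w | w ∈ P ∧ o w.2 = emb w.1} := by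
  set Q : Set (C × E) := {w | w ∈ P ∧ o w.2 = emb w.1} with hQ
  have hQcl : IsClosed[@instTopologicalSpaceProd C E τ' _] Q := by
    let := τ'
    exact hP.inter (isClosed_eq (by fun_prop) (hemb.continuous.comp continuous_fst))
  have hpol : @PolishSpace Q
      (@instTopologicalSpaceSubtype _ _ (@instTopologicalSpaceProd C E τ' _)) := by
    let := τ'
    exact hQcl.polishSpace
  have hval : @IsEmbedding Q (C × E)
      (@instTopologicalSpaceSubtype _ _ (@instTopologicalSpaceProd C E τ' _))
      (@instTopologicalSpaceProd C E τ _) Subtype.val := by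
    let tQ' : TopologicalSpace Q :=
      @instTopologicalSpaceSubtype _ _ (@instTopologicalSpaceProd C E τ' _)
    refine @IsEmbedding.mk _ _ _ (@instTopologicalSpaceProd C E τ _) _
      (@IsInducing.mk _ _ _ (@instTopologicalSpaceProd C E τ _) _ (le_antisymm ?_ ?_))
      Subtype.val_injective
    · refine continuous_iff_le_induced.1 ?_
      have h1 : @Continuous Q C tQ' τ' (fun w => w.1.1) := by
        let := τ'; exact continuous_fst.comp continuous_subtype_val
      have h2 : @Continuous Q E tQ' _ (fun w => w.1.2) := by
        let := τ'; exact continuous_snd.comp continuous_subtype_val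
      exact @Continuous.prodMk _ _ _ τ _ _ _ _ (continuous_le_rng hle h1) h2
    · let tQ : TopologicalSpace Q :=
        @instTopologicalSpaceSubtype _ _ (@instTopologicalSpaceProd C E τ _)
      change tQ ≤ tQ'
      refine continuous_id_iff_le.1 ?_
      have h2 : @Continuous Q E tQ _ (fun w => w.1.2) := by
        let := τ; exact continuous_snd.comp continuous_subtype_val
      have h1 : @Continuous Q C tQ τ' (fun w => w.1.1) := by
        let := τ'
        refine hemb.isInducing.continuous_iff.2 ?_
        exact (ho.comp h2).congr fun w => w.2.2
      refine continuous_induced_rng.2 ?_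
      exact @Continuous.prodMk _ _ _ τ' _ _ _ _ h1 h2
  have := @isGδ_range_of_isEmbedding Q (C × E) _ hpol (@instTopologicalSpaceProd C E τ _)
    (by let := τ; infer_instance) _ hval
  rwa [Subtype.range_coe] at this

/-- Largeness of the fibres of a closed set is a closed condition, because an admissible family
without common zeros in a fibre has none in the nearby fibres either, by compactness. -/
lemma isClosed_setOf_large {J D : Type*} [TopologicalSpace D] {Q : Set (D × (J → unitInterval))}
    (hQ : IsClosed Q) {σ : D → Set J} (hσ : ∀ d, ∀ᶠ d' in 𝓝 d, σ d' = σ d) :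
    IsClosed {d | Large {x | (d, x) ∈ Q} (σ d)} := by
  rw [← isOpen_compl_iff, isOpen_iff_mem_nhds]
  intro d hd
  obtain ⟨ψ, hψ, k⟩ := not_large_iff.1 hd
  have hcl : IsClosed (Q ∩ {w | ∀ s ∈ σ d, ψ s w.2 = 0}) := by
    refine hQ.inter ?_
    simp only [ofPred_forall]
    exact isClosed_biInter fun s _ => isClosed_eq (by fun_prop) continuous_const
  have hcl' := (isClosedMap_fst_of_compactSpace _ hcl).isOpen_compl
  have hd' : d ∈ (Prod.fst '' (Q ∩ {w | ∀ s ∈ σ d, ψ s w.2 = 0}))ᶜ := by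
    rintro ⟨⟨d', x⟩, ⟨hx, hz⟩, rfl⟩
    obtain ⟨s, hs, hne⟩ := k x hx
    exact hne (hz s hs)
  filter_upwards [hcl'.mem_nhds hd', hσ d] with e he hσe hl
  obtain ⟨x, hx, hz⟩ := hl ψ hψ
  rw [hσe] at hz
  exact he ⟨(e, x), ⟨hx, hz⟩, rfl⟩

/-! ### One step of the construction -/

/-- The coordinates of the cube: countably many coordinates `inl k` and, for each node `ρ` of the
binary tree, countably many coordinates `inr (ρ, j)`. -/
abbrev Idx : Type := ℕ ⊕ (List Bool × ℕ)

/-- The cube in which the construction takes place. -/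
abbrev Cube : Type := Idx → unitInterval

/-- The coordinates attached to the node `ρ`. -/
def nodeAt (ρ : List Bool) : Set Idx := {s | ∃ j, s = Sum.inr (ρ, j)}

/-- The coordinates attached to `ρ` and to the nodes above `ρ`. -/
def nodesFrom (ρ : List Bool) : Set Idx := {s | ∃ ρ' j, s = Sum.inr (ρ', j) ∧ ρ <+: ρ'}

/-- The coordinates attached to the nodes strictly above `ρ`. -/
def nodesAbove (ρ : List Bool) : Set Idx := {s | ∃ ρ' j, s = Sum.inr (ρ', j) ∧ ρ <+: ρ' ∧ ρ' ≠ ρ}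

lemma nodeAt_union_subset (ρ : List Bool) : nodeAt ρ ∪ nodesAbove ρ ⊆ nodesFrom ρ := by
  rintro s (⟨j, rfl⟩ | ⟨ρ', j, rfl, h, -⟩)
  · exact ⟨ρ, j, rfl, List.prefix_rfl⟩
  · exact ⟨ρ', j, rfl, h⟩

lemma disjoint_nodeAt (ρ : List Bool) : Disjoint (nodeAt ρ) (nodesAbove ρ) := by
  rw [Set.disjoint_left]
  rintro s ⟨j, rfl⟩ ⟨ρ', j', h, -, hne⟩
  simp only [Sum.inr.injEq, Prod.mk.injEq] at h
  exact hne h.1.symm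

lemma nodesFrom_union_subset (ρ : List Bool) :
    nodesFrom (ρ ++ [false]) ∪ nodesFrom (ρ ++ [true]) ⊆ nodesAbove ρ := by
  have key : ∀ b, nodesFrom (ρ ++ [b]) ⊆ nodesAbove ρ := by
    rintro b s ⟨ρ', j, rfl, h⟩
    refine ⟨ρ', j, rfl, (List.prefix_append _ _).trans h, ?_⟩
    rintro rfl
    have := h.length_le
    simp at this
  exact union_subset (key _) (key _)

lemma disjoint_nodesFrom (ρ : List Bool) :
    Disjoint (nodesFrom (ρ ++ [false])) (nodesFrom (ρ ++ [true])) := by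
  rw [Set.disjoint_left]
  rintro s ⟨ρ', j, rfl, h⟩ ⟨ρ'', j', h', h''⟩
  simp only [Sum.inr.injEq, Prod.mk.injEq] at h'
  obtain ⟨rfl, -⟩ := h'
  have := List.prefix_of_prefix_length_le h h'' (by simp)
  have := this.eq_of_length (by simp)
  simp at this

/-- A requirement met at one step of the construction. Any closed large set can be made smaller,
with half of the coordinates given up, such that it lies in a section of `G` or in one of the
sets `M N`; in the first case the parameter `θ` of the section is recorded by
prescribing the coordinates at the new node according to `H θ`. -/
structure Task where
  /-- The parametrized alternative. -/
  G : Set (unitInterval × Cube)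
  isClosed_G : IsClosed G
  /-- The countable alternative. -/
  M : ℕ → Set Cube
  isClosed_M : ∀ N, IsClosed (M N)
  /-- What is recorded about the parameter. -/
  H : unitInterval → ℕ → unitInterval
  measurable_H : Measurable H
  dichotomy : ∀ (P : Set Cube) (S₀ S₁ : Set Idx), IsClosed P → Disjoint S₀ S₁ →
    Large P (S₀ ∪ S₁) → (∃ θ, Large (P ∩ {x | (θ, x) ∈ G}) S₀) ∨ ∃ N, Large (P ∩ M N) S₁

/-- The choice between the alternatives of a task can be made in a Borel way. -/
lemma exists_measurable_choice {C : Type*} [TopologicalSpace C] [MeasurableSpace C] [BorelSpace C]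
    (T : Task) {P : Set (C × Cube)} (hP : IsClosed P) {ρ : C → List Bool}
    (hρ : ∀ l, IsOpen {c | ρ c = l}) :
    ∃ (b : C → Bool) (θ : C → unitInterval) (N : C → ℕ), Measurable b ∧ Measurable θ ∧
      Measurable N ∧ ∀ c, Large {x | (c, x) ∈ P} (nodesAbove (ρ c)) →
        (b c = false →
          Large ({x | (c, x) ∈ P} ∩ {x | (θ c, x) ∈ T.G}) (nodesFrom (ρ c ++ [false]))) ∧
        (b c = true → Large ({x | (c, x) ∈ P} ∩ T.M (N c)) (nodesFrom (ρ c ++ [true]))) := by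
  classical
  have hρ' : ∀ c, ∀ᶠ c' in 𝓝 c, ρ c' = ρ c := fun c => (hρ (ρ c)).mem_nhds rfl
  let A : Set (C × unitInterval) :=
    {d | Large ({x | (d.1, x) ∈ P} ∩ {x | (d.2, x) ∈ T.G}) (nodesFrom (ρ d.1 ++ [false]))}
  have hA : IsClosed A := by
    have hQ : IsClosed {w : (C × unitInterval) × Cube | (w.1.1, w.2) ∈ P ∧ (w.1.2, w.2) ∈ T.G} :=
      (hP.preimage
        (by fun_prop : Continuous fun w : (C × unitInterval) × Cube => (w.1.1, w.2))).inter
        (T.isClosed_G.preimage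
          (by fun_prop : Continuous fun w : (C × unitInterval) × Cube => (w.1.2, w.2)))
    refine isClosed_setOf_large hQ (σ := fun d => nodesFrom (ρ d.1 ++ [false])) fun d => ?_
    filter_upwards [continuous_fst.continuousAt.eventually (hρ' d.1)] with d' hd'
    rw [hd']
  let E : ℕ → Set C := fun N => {c | Large ({x | (c, x) ∈ P} ∩ T.M N) (nodesFrom (ρ c ++ [true]))}
  have hE : ∀ N, IsClosed (E N) := by
    intro N
    have hQ : IsClosed {w : C × Cube | w ∈ P ∧ w.2 ∈ T.M N} :=
      hP.inter ((T.isClosed_M N).preimage continuous_snd)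
    refine isClosed_setOf_large hQ (σ := fun d => nodesFrom (ρ d ++ [true])) fun d => ?_
    filter_upwards [hρ' d] with d' hd'
    rw [hd']
  have hleast : ∀ c, ∃ θ : unitInterval, (∃ θ', (c, θ') ∈ A) →
      (c, θ) ∈ A ∧ ∀ θ', (c, θ') ∈ A → θ ≤ θ' := by
    intro c
    by_cases h : ∃ θ', (c, θ') ∈ A
    · have hcl : IsClosed {θ' | (c, θ') ∈ A} :=
        hA.preimage (by fun_prop : Continuous fun θ' : unitInterval => (c, θ'))
      obtain ⟨θ, hθ, hmin⟩ := hcl.isCompact.exists_isLeast h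
      exact ⟨θ, fun _ => ⟨hθ, fun θ' h' => hmin h'⟩⟩
    · exact ⟨0, fun h' => absurd h' h⟩
  choose θ₀ hθ₀ using hleast
  let O : Set C := Prod.fst '' A
  have hO : IsClosed O := isClosedMap_fst_of_compactSpace _ hA
  have hOiff : ∀ c, c ∈ O ↔ ∃ θ', (c, θ') ∈ A := fun c =>
    ⟨fun ⟨d, hd, h⟩ => ⟨d.2, by rw [← h]; exact hd⟩, fun ⟨θ', h⟩ => ⟨_, h, rfl⟩⟩
  refine ⟨fun c => decide (c ∉ O), fun c => if c ∈ O then θ₀ c else 1,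
    fun c => Nat.find (p := fun N => c ∈ E N ∨ ∀ N, c ∉ E N) ?_, ?_, ?_, ?_, ?_⟩
  · by_cases h : ∃ N, c ∈ E N
    · exact h.imp fun N hN => Or.inl hN
    · exact ⟨0, Or.inr (not_exists.1 h)⟩
  · exact measurable_to_bool (by
      convert! hO.measurableSet.compl using 1
      ext c
      simp)
  · refine measurable_of_Iic fun r => ?_
    rcases eq_or_ne r 1 with rfl | hr
    · convert! MeasurableSet.univ using 1
      ext c
      simpa using unitInterval.le_one'
    · have : IsClosed (Prod.fst '' (A ∩ {d : C × unitInterval | d.2 ≤ r})) :=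
        isClosedMap_fst_of_compactSpace _ (hA.inter (isClosed_le continuous_snd continuous_const))
      convert! this.measurableSet using 1
      ext c
      simp only [mem_preimage, mem_Iic]
      constructor
      · intro h
        by_cases hc : c ∈ O
        · rw [if_pos hc] at h
          exact ⟨(c, θ₀ c), ⟨(hθ₀ c ((hOiff c).1 hc)).1, h⟩, rfl⟩
        · rw [if_neg hc] at h
          exact absurd (le_antisymm unitInterval.le_one' h) hr
      · rintro ⟨⟨c', θ'⟩, ⟨h, h'⟩, rfl⟩
        have hc : c' ∈ O := ⟨_, h, rfl⟩
        rw [if_pos hc]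
        exact ((hθ₀ c' ((hOiff c').1 hc)).2 θ' h).trans h'
  · refine measurable_find _ fun k => ?_
    have : MeasurableSet {c | ∀ N, c ∉ E N} := by
      rw [ofPred_forall]
      exact MeasurableSet.iInter fun N => (hE N).measurableSet.compl
    exact (hE k).measurableSet.union this
  · intro c hc
    refine ⟨fun hb => ?_, fun hb => ?_⟩
    · have hcO : c ∈ O := by simpa using hb
      simp only [if_pos hcO]
      exact (hθ₀ c ((hOiff c).1 hcO)).1
    · have hcO : c ∉ O := by simpa using hb
      have hcl : IsClosed {x | (c, x) ∈ P} :=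
        hP.preimage (by fun_prop : Continuous fun x : Cube => (c, x))
      have hex : ∃ N, c ∈ E N := by
        rcases T.dichotomy _ _ _ hcl (disjoint_nodesFrom (ρ c))
          (hc.mono Subset.rfl (nodesFrom_union_subset _)) with h | h
        · exact absurd ((hOiff c).2 h) hcO
        · exact h
      have := Nat.find_spec (p := fun N => c ∈ E N ∨ ∀ N, c ∉ E N)
        (hex.imp fun N hN => Or.inl hN)
      exact this.resolve_right (not_forall.2 (hex.imp fun N hN => not_not.2 hN))

/-- The Borel choices of `exists_measurable_choice` become continuous for a finer Polish topology;
`emb` embeds that topology into the Hilbert cube, for use in `isGδ_of_coded`. -/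
lemma exists_continuous_choice {C : Type*} [τ : TopologicalSpace C] [PolishSpace C]
    (T : Task) {P : Set (C × Cube)} (hP : IsClosed P) {ρ : C → List Bool}
    (hρ : ∀ l, IsOpen {c | ρ c = l}) :
    ∃ τ' : TopologicalSpace C, τ' ≤ τ ∧ @PolishSpace C τ' ∧
      ∃ (b : C → Bool) (θ : C → unitInterval) (N : C → ℕ) (emb : C → ℕ → unitInterval),
      Continuous[τ', _] b ∧ Continuous[τ', _] θ ∧ Continuous[τ', _] N ∧
      Continuous[τ', _] (fun c => T.H (θ c)) ∧ @IsEmbedding _ _ τ' _ emb ∧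
      ∀ c, Large {x | (c, x) ∈ P} (nodesAbove (ρ c)) →
        (b c = false →
          Large ({x | (c, x) ∈ P} ∩ {x | (θ c, x) ∈ T.G}) (nodesFrom (ρ c ++ [false]))) ∧
        (b c = true → Large ({x | (c, x) ∈ P} ∩ T.M (N c)) (nodesFrom (ρ c ++ [true]))) := by
  borelize C
  obtain ⟨b, θ, N, hb, hθ, hN, h⟩ := exists_measurable_choice T hP hρ
  have hm : Measurable fun c => (b c, θ c, N c, T.H (θ c)) :=
    hb.prodMk (hθ.prodMk (hN.prodMk (T.measurable_H.comp hθ)))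
  obtain ⟨τ', hle, hcont, hpol⟩ := hm.exists_continuous
  let := τ'
  let := TopologicalSpace.upgradeIsCompletelyMetrizable C
  obtain ⟨emb, hemb⟩ := Metric.PiNatEmbed.exists_embedding_to_hilbert_cube (X := C)
  exact ⟨τ', hle, hpol, b, θ, N, emb, continuous_fst.comp hcont,
    continuous_fst.comp (continuous_snd.comp hcont),
    continuous_fst.comp (continuous_snd.comp (continuous_snd.comp hcont)),
    continuous_snd.comp (continuous_snd.comp (continuous_snd.comp hcont)), hemb, h⟩

/-- The set passed on to the next stage: the chosen alternative holds, and at the new node the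
even coordinates record `H θ`, while the odd ones record the location of `c` through `emb`. -/
def refined {C : Type*} (T : Task) (P : Set (C × Cube)) (ρ : C → List Bool) (b : C → Bool)
    (θ : C → unitInterval) (N : C → ℕ) (emb : C → ℕ → unitInterval) : Set (C × Cube) :=
  {w | w ∈ P ∧ (b w.1 = false → (θ w.1, w.2) ∈ T.G) ∧ (b w.1 = true → w.2 ∈ T.M (N w.1)) ∧
    (∀ j, w.2 (Sum.inr (ρ w.1 ++ [b w.1], 2 * j)) = T.H (θ w.1) j) ∧
    ∀ j, w.2 (Sum.inr (ρ w.1 ++ [b w.1], 2 * j + 1)) = emb w.1 j}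

lemma isOpen_append {C : Type*} [TopologicalSpace C] {ρ : C → List Bool}
    (hρ : ∀ l, IsOpen {c | ρ c = l}) {b : C → Bool} (hb : Continuous b) (l : List Bool) :
    IsOpen {c | ρ c ++ [b c] = l} := by
  rw [isOpen_iff_mem_nhds]
  rintro c rfl
  filter_upwards [(hρ (ρ c)).mem_nhds rfl,
    ((isOpen_discrete {b c}).preimage hb).mem_nhds rfl] with c' h h'
  have h' : b c' = b c := h'
  have h : ρ c' = ρ c := h
  simp [h, h']

lemma isClosed_refined {C : Type*} [TopologicalSpace C] (T : Task) {P : Set (C × Cube)}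
    (hP : IsClosed P) {ρ : C → List Bool} (hρ : ∀ l, IsOpen {c | ρ c = l}) {b : C → Bool}
    (hb : Continuous b) {θ : C → unitInterval} (hθ : Continuous θ) {N : C → ℕ} (hN : Continuous N)
    (hH : Continuous fun c => T.H (θ c)) {emb : C → ℕ → unitInterval} (hemb : Continuous emb) :
    IsClosed (refined T P ρ b θ N emb) := by
  have hcoord : ∀ k, Continuous fun w : C × Cube => w.2 (Sum.inr (ρ w.1 ++ [b w.1], k)) := by
    intro k
    rw [continuous_iff_continuousAt]
    intro w
    have h1 : ContinuousAt (fun w' : C × Cube => w'.2 (Sum.inr (ρ w.1 ++ [b w.1], k))) w := by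
      fun_prop
    refine h1.congr ?_
    filter_upwards [continuous_fst.continuousAt.eventually
      ((isOpen_append hρ hb (ρ w.1 ++ [b w.1])).mem_nhds rfl)] with w' hw'
    have hw' : ρ w'.1 ++ [b w'.1] = ρ w.1 ++ [b w.1] := hw'
    rw [hw']
  have hbit : ∀ v, IsClosed {w : C × Cube | b w.1 ≠ v} := fun v =>
    (isClosed_discrete {v}ᶜ).preimage (hb.comp continuous_fst)
  have hG : IsClosed {w : C × Cube | (θ w.1, w.2) ∈ T.G} :=
    T.isClosed_G.preimage (by fun_prop)
  have hM : IsClosed {w : C × Cube | w.2 ∈ T.M (N w.1)} := by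
    rw [← isOpen_compl_iff]
    have : {w : C × Cube | w.2 ∈ T.M (N w.1)}ᶜ =
        ⋃ n, {w : C × Cube | N w.1 = n} ∩ {w | w.2 ∉ T.M n} := by
      ext w
      simp
    rw [this]
    refine isOpen_iUnion fun n => IsOpen.inter ?_ ?_
    · exact (isOpen_discrete {n}).preimage (hN.comp continuous_fst)
    · exact (T.isClosed_M n).isOpen_compl.preimage continuous_snd
  have e : refined T P ρ b θ N emb = P ∩ (({w : C × Cube | b w.1 ≠ false} ∪
      {w : C × Cube | (θ w.1, w.2) ∈ T.G}) ∩ (({w : C × Cube | b w.1 ≠ true} ∪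
      {w : C × Cube | w.2 ∈ T.M (N w.1)}) ∩
      ((⋂ j, {w : C × Cube | w.2 (Sum.inr (ρ w.1 ++ [b w.1], 2 * j)) = T.H (θ w.1) j}) ∩
      ⋂ j, {w : C × Cube | w.2 (Sum.inr (ρ w.1 ++ [b w.1], 2 * j + 1)) = emb w.1 j}))) := by
    ext w
    simp only [refined, mem_inter_iff, mem_union, mem_ofPred_eq, mem_iInter, ne_eq, imp_iff_not_or]
  rw [e]
  refine hP.inter (((hbit _).union hG).inter (((hbit _).union hM).inter (IsClosed.inter ?_ ?_)))
  · exact isClosed_iInter fun j => isClosed_eq (hcoord _)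
      ((continuous_apply j).comp (hH.comp continuous_fst))
  · exact isClosed_iInter fun j => isClosed_eq (hcoord _)
      ((continuous_apply j).comp (hemb.comp continuous_fst))

lemma large_refined {C : Type*} {T : Task} {P : Set (C × Cube)} {ρ : C → List Bool} {b : C → Bool}
    {θ : C → unitInterval} {N : C → ℕ} {emb : C → ℕ → unitInterval} {c : C}
    (h0 : b c = false →
      Large ({x | (c, x) ∈ P} ∩ {x | (θ c, x) ∈ T.G}) (nodesFrom (ρ c ++ [false])))
    (h1 : b c = true → Large ({x | (c, x) ∈ P} ∩ T.M (N c)) (nodesFrom (ρ c ++ [true]))) :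
    Large {x | (c, x) ∈ refined T P ρ b θ N emb} (nodesAbove (ρ c ++ [b c])) := by
  have h : Large ({x | (c, x) ∈ P} ∩ {x | (b c = false → (θ c, x) ∈ T.G) ∧
      (b c = true → x ∈ T.M (N c))}) (nodesFrom (ρ c ++ [b c])) := by
    cases hb : b c with
    | false => exact (h0 hb).mono (fun x hx => ⟨hx.1, fun _ => hx.2, by simp⟩) Subset.rfl
    | true => exact (h1 hb).mono (fun x hx => ⟨hx.1, by simp, fun _ => hx.2⟩) Subset.rfl
  let y : Cube := Sum.elim (fun _ => 0) fun p =>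
    if p.2 % 2 = 0 then T.H (θ c) (p.2 / 2) else emb c (p.2 / 2)
  refine ((h.mono Subset.rfl (nodeAt_union_subset _)).fix (disjoint_nodeAt _) y).mono ?_ Subset.rfl
  rintro x ⟨⟨hx, hG, hM⟩, hy⟩
  refine ⟨hx, hG, hM, fun j => ?_, fun j => ?_⟩
  · have := hy (Sum.inr (ρ c ++ [b c], 2 * j)) ⟨_, rfl⟩
    simpa [y] using this
  · have := hy (Sum.inr (ρ c ++ [b c], 2 * j + 1)) ⟨_, rfl⟩
    have e : (2 * j + 1) / 2 = j := by omega
    simpa [y, Nat.add_mod, e] using this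

/-! ### The recursive construction -/

/-- A stage of the construction: a finer Polish topology on `C`, a set `P` closed for it and a map
`ρ` into a level of the binary tree, locally constant for it, such that over `C₀` the sections of
`P` are large with respect to the nodes strictly above `ρ c`. -/
structure Stage {C : Type*} (τ₀ : TopologicalSpace C) (C₀ : Set C) where
  τ : TopologicalSpace C
  le : τ ≤ τ₀
  polish : @PolishSpace C τ
  P : Set (C × Cube)
  isClosed_P : IsClosed[@instTopologicalSpaceProd C Cube τ _] P
  ρ : C → List Bool
  len : ℕ
  length_ρ : ∀ c, (ρ c).length = len
  isOpen_ρ : ∀ l, IsOpen[τ] {c | ρ c = l}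
  large : ∀ c ∈ C₀, Large {x | (c, x) ∈ P} (nodesAbove (ρ c))

/-- The task `T` has been carried out on `P`. -/
def Decided {C : Type*} (T : Task) (P : Set (C × Cube)) : Prop :=
  ∃ (b : C → Bool) (θ : C → unitInterval) (N : C → ℕ) (ρ : C → List Bool), ∀ w ∈ P,
    (b w.1 = false → (θ w.1, w.2) ∈ T.G ∧ ∀ j, w.2 (Sum.inr (ρ w.1, 2 * j)) = T.H (θ w.1) j) ∧
    (b w.1 = true → w.2 ∈ T.M (N w.1))

/-- One step of the construction. -/
lemma Stage.next {C : Type*} {τ₀ : TopologicalSpace C}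
    (hτ₀ : @TopologicalSpace.MetrizableSpace C τ₀) {C₀ : Set C} (s : Stage τ₀ C₀) (T : Task) :
    ∃ s' : Stage τ₀ C₀, s'.P ⊆ s.P ∧ IsGδ s'.P ∧ Decided T s'.P := by
  obtain ⟨τ', hle, hpol, b, θ, N, emb, hb, hθ, hN, hH, hemb, hl⟩ :=
    @exists_continuous_choice C s.τ s.polish T s.P s.isClosed_P s.ρ s.isOpen_ρ
  have hP' : IsClosed[@instTopologicalSpaceProd C Cube τ' _] s.P := by
    have : Continuous[@instTopologicalSpaceProd C Cube τ' _, @instTopologicalSpaceProd C Cube s.τ _]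
        (id : C × Cube → C × Cube) := by
      refine @Continuous.prodMk _ _ _ s.τ _ (@instTopologicalSpaceProd C Cube τ' _) _ _ ?_ ?_
      · exact continuous_le_rng hle (@continuous_fst _ _ τ' _)
      · exact @continuous_snd _ _ τ' _
    exact (@continuous_iff_isClosed _ _ (_) (_) _).1 this _ s.isClosed_P
  have hρ' : ∀ l, IsOpen[τ'] {c | s.ρ c = l} := fun l => hle _ (s.isOpen_ρ l)
  have hcl := @isClosed_refined C τ' T s.P hP' s.ρ hρ' b hb θ hθ N hN hH emb hemb.continuous
  let s' : Stage τ₀ C₀ :=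
    { τ := τ'
      le := hle.trans s.le
      polish := hpol
      P := refined T s.P s.ρ b θ N emb
      isClosed_P := hcl
      ρ := fun c => s.ρ c ++ [b c]
      len := s.len + 1
      length_ρ := fun c => by simp [s.length_ρ c]
      isOpen_ρ := @isOpen_append C τ' s.ρ hρ' b hb
      large := fun c hc => large_refined (hl c (s.large c hc)).1 (hl c (s.large c hc)).2 }
  refine ⟨s', fun w hw => hw.1, ?_, b, θ, N, fun c => s.ρ c ++ [b c], fun w hw =>
    ⟨fun h => ⟨hw.2.1 h, hw.2.2.2.1⟩, hw.2.2.1⟩⟩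
  -- `s'.P` is the finite union, over the nodes `l` of one level, of its parts on which `emb c` can
  -- be read off from the odd coordinates at `l`
  have hu : s'.P = ⋃ l ∈ {l : List Bool | l.length = s.len + 1},
      {w | w ∈ s'.P ∧ (fun j => w.2 (Sum.inr (l, 2 * j + 1))) = emb w.1} := by
    ext w
    simp only [mem_iUnion, mem_ofPred_eq, exists_prop]
    constructor
    · intro hw
      exact ⟨s'.ρ w.1, s'.length_ρ w.1, hw, funext hw.2.2.2.2⟩
    · rintro ⟨l, -, h, -⟩
      exact h
  rw [hu]
  refine @IsGδ.biUnion _ _ (_) _ (List.finite_length_eq Bool (s.len + 1)) _ fun l _ => ?_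
  exact isGδ_of_coded τ₀ τ' hτ₀ hpol (hle.trans s.le) hemb
    (o := fun x : Cube => fun j => x (Sum.inr (l, 2 * j + 1))) (by fun_prop) hcl

/-- Carrying out countably many tasks produces a `Gδ` set that still meets every fibre over the
closed set `C₀` of points with large fibre. -/
theorem exists_isGδ_decided {C : Type*} [τ₀ : TopologicalSpace C] [PolishSpace C] {C₀ : Set C}
    (hC₀ : IsClosed C₀) {P₀ : Set (C × Cube)} (hP₀ : IsClosed P₀)
    (hl : ∀ c ∈ C₀, Large {x | (c, x) ∈ P₀} (nodesAbove [])) (T : ℕ → Task) :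
    ∃ X ⊆ P₀, IsGδ X ∧ (∀ n, Decided (T n) X) ∧ ∀ c ∈ C₀, ∃ x, (c, x) ∈ X := by
  choose f hf using fun (s : Stage τ₀ C₀) T => s.next inferInstance T
  let s₀ : Stage τ₀ C₀ :=
    { τ := τ₀
      le := le_rfl
      polish := inferInstance
      P := P₀
      isClosed_P := hP₀
      ρ := fun _ => []
      len := 0
      length_ρ := fun _ => rfl
      isOpen_ρ := fun l => isOpen_const
      large := hl }
  let s : ℕ → Stage τ₀ C₀ := fun n => Nat.rec s₀ (fun n s => f s (T n)) n
  have hs : ∀ n, (s (n + 1)).P ⊆ (s n).P ∧ IsGδ (s (n + 1)).P ∧ Decided (T n) (s (n + 1)).P :=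
    fun n => hf (s n) (T n)
  refine ⟨(⋂ n, (s (n + 1)).P) ∩ Prod.fst ⁻¹' C₀, fun w hw => (hs 0).1 (mem_iInter.1 hw.1 0),
    (IsGδ.iInter fun n => (hs n).2.1).inter (hC₀.preimage continuous_fst).isGδ, fun n => ?_,
    fun c hc => ?_⟩
  · obtain ⟨b, θ, N, ρ, h⟩ := (hs n).2.2
    exact ⟨b, θ, N, ρ, fun w hw => h w (mem_iInter.1 hw.1 n)⟩
  · have hsec : ∀ n, IsClosed {x | (c, x) ∈ (s n).P} := fun n => by
      exact @IsClosed.preimage _ _ (_) (@instTopologicalSpaceProd C Cube (s n).τ _) _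
        (@Continuous.prodMk_right _ _ (s n).τ _ c) _ (s n).isClosed_P
    obtain ⟨x, hx⟩ := IsCompact.nonempty_iInter_of_sequence_nonempty_isCompact_isClosed
      (fun n => {x | (c, x) ∈ (s (n + 1)).P}) (fun n x hx => (hs (n + 1)).1 hx)
      (fun n => ((s (n + 1)).large c hc).nonempty) (hsec 1).isCompact fun n => hsec (n + 1)
    exact ⟨x, mem_iInter.2 fun n => mem_iInter.1 hx n, hc⟩

/-! ### Zero-dimensional and small sets -/

/-- A set is zero-dimensional if its topology is induced from the Cantor space. -/
def ZeroDim {Y : Type*} [TopologicalSpace Y] (D : Set Y) : Prop :=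
  ∃ f : D → ℕ → Bool, IsInducing f

/-- A set is small if it is covered by countably many zero-dimensional sets. -/
def Small {Y : Type*} [TopologicalSpace Y] (X : Set Y) : Prop :=
  ∃ D : ℕ → Set Y, X ⊆ ⋃ n, D n ∧ ∀ n, ZeroDim (D n)

section ZeroDim
variable {Y Y' : Type*} [TopologicalSpace Y] [TopologicalSpace Y']

lemma ZeroDim.of_isInducing {D : Set Y'} (hD : ZeroDim D) {B : Set Y} {f : B → Y'}
    (hf : IsInducing f) (hB : ∀ b, f b ∈ D) : ZeroDim B := by
  obtain ⟨g, hg⟩ := hD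
  refine ⟨fun b => g ⟨f b, hB b⟩, hg.comp (g := g) (f := fun b => (⟨f b, hB b⟩ : D)) ?_⟩
  exact IsInducing.of_comp (by fun_prop) continuous_subtype_val (by exact hf)

lemma ZeroDim.mono {D B : Set Y} (hD : ZeroDim D) (h : B ⊆ D) : ZeroDim B :=
  hD.of_isInducing IsInducing.subtypeVal fun b => h b.2

lemma Small.mono {X X' : Set Y} (h : Small X) (hX : X' ⊆ X) : Small X' :=
  let ⟨D, hD, hz⟩ := h
  ⟨D, hX.trans hD, hz⟩

lemma ZeroDim.small {D : Set Y} (hD : ZeroDim D) : Small D :=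
  ⟨fun _ => D, subset_iUnion_of_subset 0 Subset.rfl, fun _ => hD⟩

lemma small_iUnion {ι : Type*} [Countable ι] {X : ι → Set Y} (h : ∀ i, Small (X i)) :
    Small (⋃ i, X i) := by
  cases isEmpty_or_nonempty ι
  · exact ⟨fun _ => ∅, by simp, fun _ => ⟨fun _ _ => true, ⟨Subsingleton.elim _ _⟩⟩⟩
  choose D hD hz using h
  obtain ⟨e, he⟩ := exists_surjective_nat (ι × ℕ)
  refine ⟨fun n => D (e n).1 (e n).2, iUnion_subset fun i x hx => ?_, fun n => hz _ _⟩
  obtain ⟨m, hm⟩ := mem_iUnion.1 (hD i hx)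
  obtain ⟨n, hn⟩ := he (i, m)
  exact mem_iUnion.2 ⟨n, by rwa [hn]⟩

lemma Small.of_isInducing {D : Set Y'} (hD : Small D) {B : Set Y} {f : B → Y'}
    (hf : IsInducing f) (hB : ∀ b, f b ∈ D) : Small B := by
  obtain ⟨E, hE, hz⟩ := hD
  refine ⟨fun n => Subtype.val '' (f ⁻¹' E n), fun b hb => ?_, fun n => ?_⟩
  · obtain ⟨n, hn⟩ := mem_iUnion.1 (hE (hB ⟨b, hb⟩))
    exact mem_iUnion.2 ⟨n, ⟨b, hb⟩, hn, rfl⟩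
  · have hsub : ∀ x : (Subtype.val '' (f ⁻¹' E n) : Set Y), ∃ h : x.1 ∈ B, f ⟨x, h⟩ ∈ E n := by
      rintro ⟨_, ⟨⟨x, hx⟩, h, rfl⟩⟩
      exact ⟨hx, h⟩
    refine (hz n).of_isInducing (f := fun x => f ⟨x, (hsub x).1⟩) ?_ fun x => (hsub x).2
    refine hf.comp (g := f) (f := fun x : (Subtype.val '' (f ⁻¹' E n) : Set Y) =>
      (⟨x, (hsub x).1⟩ : B)) ?_
    exact IsInducing.of_comp (by fun_prop) continuous_subtype_val (by exact IsInducing.subtypeVal)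

lemma zeroDim_of_countable {κ : Type*} [Countable κ] {D : Set Y} {f : D → κ → Bool}
    (hf : IsInducing f) : ZeroDim D := by
  cases nonempty_encodable κ
  let F : (κ → Bool) → ℕ → Bool := fun y n => (Encodable.decode (α := κ) n).elim false y
  have hF : Continuous F := by
    refine continuous_pi fun n => ?_
    cases h : Encodable.decode (α := κ) n with
    | none => simpa [F, h] using continuous_const
    | some k => simpa [F, h] using continuous_apply k
  have hleft : Function.LeftInverse (fun (y : ℕ → Bool) k => y (Encodable.encode k)) F := by
    intro y
    ext k
    simp [F]
  exact ⟨F ∘ f, (hleft.isEmbedding (by fun_prop) hF).isInducing.comp hf⟩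

/-- A zero-dimensional set `D` can be partitioned into relatively clopen sets that separate
`{u ≤ 1/3}` from `{u ≥ 2/3}` in `D`. -/
lemma ZeroDim.exists_clopen {D : Set Y} (hD : ZeroDim D) {u : Y → unitInterval}
    (hu : Continuous u) :
    ∃ E : Set D, IsClopen E ∧ (∀ d ∈ E, (u d : ℝ) < 2 / 3) ∧ ∀ d ∉ E, (1 / 3 : ℝ) < u d := by
  classical
  obtain ⟨f, hf⟩ := hD
  let A : Bool → Set D := fun b => if b then {d | (2 / 3 : ℝ) ≤ u d} else {d | (u d : ℝ) ≤ 1 / 3}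
  let R : D → ℕ → Bool → Prop := fun x n b => f ⁻¹' PiNat.cylinder (f x) n ⊆ (A b)ᶜ
  have hu' : Continuous fun d : D => (u d : ℝ) := by fun_prop
  have hA : ∀ b, IsClosed (A b) := by
    rintro (_ | _)
    · exact isClosed_le hu' continuous_const
    · exact isClosed_le continuous_const hu'
  have hex : ∀ x, ∃ n, R x n false ∨ R x n true := by
    intro x
    obtain ⟨b, hb⟩ : ∃ b, x ∉ A b := by
      by_contra! h
      have h1 : (2 / 3 : ℝ) ≤ u x := h true
      have h2 : (u x : ℝ) ≤ 1 / 3 := h false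
      linarith
    obtain ⟨O, hO, hOA⟩ := hf.isOpen_iff.1 (hA b).isOpen_compl
    have hxO : f x ∈ O := by
      change x ∈ f ⁻¹' O
      rw [hOA]
      exact hb
    obtain ⟨_, ⟨y, n, rfl⟩, hxy, hsub⟩ :=
      (PiNat.isTopologicalBasis_cylinders (fun _ => Bool)).exists_subset_of_mem_open hxO hO
    rw [PiNat.mem_cylinder_iff_eq] at hxy
    have : R x n b := by
      change f ⁻¹' PiNat.cylinder (f x) n ⊆ (A b)ᶜ
      rw [hxy, ← hOA]
      exact preimage_mono hsub
    cases b
    · exact ⟨n, Or.inl this⟩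
    · exact ⟨n, Or.inr this⟩
  let ν : D → ℕ := fun x => Nat.find (hex x)
  have hcyl : ∀ x y, f y ∈ PiNat.cylinder (f x) (ν x) → ∀ k ≤ ν x, ∀ b, R y k b ↔ R x k b := by
    intro x y h k hk b
    have : PiNat.cylinder (f y) k = PiNat.cylinder (f x) k :=
      (PiNat.mem_cylinder_iff_eq).1 (PiNat.cylinder_anti _ hk h)
    simp only [R, this]
  have hν : ∀ x y, f y ∈ PiNat.cylinder (f x) (ν x) → ν y = ν x := by
    intro x y h
    refine (Nat.find_eq_iff (hex y)).2 ⟨?_, fun k hk => ?_⟩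
    · rw [hcyl x y h _ le_rfl, hcyl x y h _ le_rfl]
      exact Nat.find_spec (hex x)
    · rw [hcyl x y h _ hk.le, hcyl x y h _ hk.le]
      exact Nat.find_min (hex x) hk
  have hloc : ∀ x, ∀ᶠ y in 𝓝 x, (R y (ν y) true ↔ R x (ν x) true) := by
    intro x
    have : f ⁻¹' PiNat.cylinder (f x) (ν x) ∈ 𝓝 x :=
      ((PiNat.isOpen_cylinder _ _ _).preimage hf.continuous).mem_nhds
        (PiNat.self_mem_cylinder _ _)
    filter_upwards [this] with y hy
    rw [hν x y hy]
    exact hcyl x y hy _ le_rfl _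
  refine ⟨{x | R x (ν x) true}, ⟨?_, ?_⟩, fun d hd => ?_, fun d hd => ?_⟩
  · rw [← isOpen_compl_iff, isOpen_iff_mem_nhds]
    intro x hx
    filter_upwards [hloc x] with y hy
    exact fun h => hx (hy.1 h)
  · rw [isOpen_iff_mem_nhds]
    intro x hx
    filter_upwards [hloc x] with y hy
    exact hy.2 hx
  · by_contra! h
    exact hd (PiNat.self_mem_cylinder (f d) _) h
  · by_contra! h
    refine hd ((Nat.find_spec (hex d)).resolve_left fun h' => ?_)
    exact h' (PiNat.self_mem_cylinder (f d) _) h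

/-- A zero-dimensional set is avoided by the zero set of a function with the sign pattern of the
Poincaré–Miranda theorem. -/
lemma ZeroDim.exists_avoiding [TopologicalSpace.MetrizableSpace Y] {D : Set Y} (hD : ZeroDim D)
    {u : Y → unitInterval} (hu : Continuous u) (h0 : ∃ y, u y = 0) (h1 : ∃ y, u y = 1) :
    ∃ ψ : C(Y, ℝ), (∀ y, u y = 0 → 0 ≤ ψ y) ∧ (∀ y, u y = 1 → ψ y ≤ 0) ∧ ∀ y ∈ D, ψ y ≠ 0 := by
  let := TopologicalSpace.metrizableSpaceMetric Y
  obtain ⟨E, hE, hE0, hE1⟩ := hD.exists_clopen hu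
  let E₀ : Set Y := Subtype.val '' E ∪ {y | u y = 0}
  let E₁ : Set Y := Subtype.val '' Eᶜ ∪ {y | u y = 1}
  have sep : ∀ F : Set D, IsOpen F → ∀ d ∈ F, (d : Y) ∉ closure (Subtype.val '' Fᶜ) := by
    intro F hF d hd hcl
    obtain ⟨O, hO, rfl⟩ := isOpen_induced_iff.1 hF
    obtain ⟨_, hyO, ⟨y, hy, rfl⟩⟩ := mem_closure_iff.1 hcl O hO hd
    exact hy hyO
  have ne0 : E₀.Nonempty := h0.imp fun y hy => Or.inr hy
  have ne1 : E₁.Nonempty := h1.imp fun y hy => Or.inr hy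
  have p0 : ∀ d ∈ E, 0 < Metric.infDist (d : Y) E₁ := by
    intro d hd
    refine (Metric.infDist_pos_iff_notMem_closure (s := E₁) ne1).1 ?_
    rw [closure_union, (isClosed_eq hu continuous_const).closure_eq]
    rintro (h | h)
    · exact sep E hE.isOpen d hd h
    · have h : u d = 1 := h
      have := hE0 d hd
      rw [h] at this
      norm_num at this
  have p1 : ∀ d ∉ E, 0 < Metric.infDist (d : Y) E₀ := by
    intro d hd
    refine (Metric.infDist_pos_iff_notMem_closure (s := E₀) ne0).1 ?_
    rw [closure_union, (isClosed_eq hu continuous_const).closure_eq]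
    rintro (h | h)
    · exact sep Eᶜ hE.compl.isOpen d hd (by rwa [compl_compl])
    · have h : u d = 0 := h
      have := hE1 d hd
      rw [h] at this
      norm_num at this
  refine ⟨⟨fun y => Metric.infDist y E₁ - Metric.infDist y E₀, by fun_prop⟩, fun y hy => ?_,
    fun y hy => ?_, fun y hy => ?_⟩
  · have : Metric.infDist y E₀ = 0 := Metric.infDist_zero_of_mem (Or.inr hy)
    simpa [this] using Metric.infDist_nonneg
  · have : Metric.infDist y E₁ = 0 := Metric.infDist_zero_of_mem (Or.inr hy)
    simpa [this] using Metric.infDist_nonneg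
  · by_cases h : (⟨y, hy⟩ : D) ∈ E
    · have h' : Metric.infDist y E₀ = 0 := Metric.infDist_zero_of_mem (Or.inl ⟨_, h, rfl⟩)
      have := p0 _ h
      simpa [h'] using this.ne'
    · have h' : Metric.infDist y E₁ = 0 := Metric.infDist_zero_of_mem (Or.inl ⟨_, h, rfl⟩)
      have := p1 _ h
      simpa [h'] using this.ne'

end ZeroDim

/-! ### Cantor sets in the interval and the tasks they define -/

/-- The Cantor space. -/
abbrev Cantor : Type := ℕ → Bool

/-- Codes for continuous maps; the two components code a sequence of open sets and a value. -/
abbrev Codes : Type := Cantor × Cantor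

instance : PolishSpace Bool := inferInstance

lemma exists_codes_embedding : ∃ φ : Codes → unitInterval, Continuous φ ∧ Function.Injective φ := by
  let m : Codes → Cantor := fun v n => if n % 2 = 0 then v.1 (n / 2) else v.2 (n / 2)
  have hm : Continuous m := by
    refine continuous_pi fun n => ?_
    by_cases h : n % 2 = 0
    · simp only [m, h, if_true]
      fun_prop
    · simp only [m, h, if_false]
      fun_prop
  have hinj : Function.Injective m := by
    rintro ⟨a, b⟩ ⟨a', b'⟩ h
    refine Prod.ext (funext fun n => ?_) (funext fun n => ?_)
    · have := congrFun h (2 * n)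
      simpa [m] using this
    · have := congrFun h (2 * n + 1)
      have e : (2 * n + 1) / 2 = n := by omega
      simpa [m, Nat.add_mod, e] using this
  refine ⟨fun v => ⟨cantorSetHomeomorphNatToBool.symm (m v),
    cantorSet_subset_unitInterval (cantorSetHomeomorphNatToBool.symm (m v)).2⟩, ?_, ?_⟩
  · fun_prop
  · intro v w h
    simp only [Subtype.mk.injEq] at h
    exact hinj (cantorSetHomeomorphNatToBool.symm.injective (Subtype.ext h))

/-- A countable family of Cantor sets, parametrized by `Codes`, such that every nonempty open
subinterval of `[0,1]` contains one of them. -/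
lemma exists_codes_family : ∃ t : ℚ × ℚ → Codes → unitInterval, (∀ q, Continuous (t q)) ∧
    (∀ q, Function.Injective (t q)) ∧
    ∀ a b : unitInterval, a < b → ∃ q, ∀ v, a < t q v ∧ t q v < b := by
  obtain ⟨φ, hφ, hinj⟩ := exists_codes_embedding
  have key : ∀ q : ℚ × ℚ, ∃ t : Codes → unitInterval, Continuous t ∧ Function.Injective t ∧
      (0 ≤ q.1 → q.1 < q.2 → q.2 ≤ 1 → ∀ v, (q.1 : ℝ) ≤ t v ∧ (t v : ℝ) ≤ q.2) := by
    rintro ⟨p, q⟩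
    by_cases h : 0 ≤ p ∧ p < q ∧ q ≤ 1
    · have h0 : (0 : ℝ) ≤ p := by exact_mod_cast h.1
      have h1 : (0 : ℝ) < q - p := by
        have : (p : ℝ) < q := by exact_mod_cast h.2.1
        linarith
      have h2 : (q : ℝ) ≤ 1 := by exact_mod_cast h.2.2
      have hb : ∀ v, (p : ℝ) ≤ p + (q - p) * φ v ∧ (p : ℝ) + (q - p) * φ v ≤ q := fun v =>
        ⟨by nlinarith [(φ v).2.1], by nlinarith [(φ v).2.2]⟩
      refine ⟨fun v => ⟨p + (q - p) * φ v, h0.trans (hb v).1, (hb v).2.trans h2⟩, by fun_prop, ?_,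
        fun _ _ _ => hb⟩
      intro v w hvw
      have hvw := add_left_cancel (congrArg Subtype.val hvw)
      exact hinj (Subtype.ext (mul_left_cancel₀ h1.ne' hvw))
    · exact ⟨φ, hφ, hinj, fun h1 h2 h3 => absurd ⟨h1, h2, h3⟩ h⟩
  choose t ht hti hb using key
  refine ⟨t, ht, hti, fun a b hab => ?_⟩
  obtain ⟨p, hp, hp'⟩ := exists_rat_btwn (show (a : ℝ) < b from hab)
  obtain ⟨q, hq, hq'⟩ := exists_rat_btwn hp'
  refine ⟨(p, q), fun v => ?_⟩
  have := hb (p, q) (by exact_mod_cast a.2.1.trans hp.le) (by exact_mod_cast hq)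
    (by exact_mod_cast hq'.le.trans b.2.2) v
  exact ⟨Subtype.coe_lt_coe.1 (hp.trans_le this.1), Subtype.coe_lt_coe.1 (this.2.trans_lt hq')⟩

/-- If no coordinate of a point `w` of `B` equals any `t q (g w)`, then the sets
`{w | w.2 i < t q (g w)}` are relatively clopen and generate the topology of `B`. -/
lemma zeroDim_of_avoids {t : ℚ × ℚ → Codes → unitInterval} (ht : ∀ q, Continuous (t q))
    (hd : ∀ a b : unitInterval, a < b → ∃ q, ∀ v, a < t q v ∧ t q v < b)
    {B : Set (Cantor × Cube)} {g : B → Codes} (hg : Continuous g)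
    (h : ∀ (w : B) i q, w.1.2 i ≠ t q (g w)) : ZeroDim B := by
  classical
  let f : B → ℕ ⊕ (Idx × (ℚ × ℚ)) → Bool := fun w => Sum.elim (fun n => w.1.1 n)
    fun p => decide (w.1.2 p.1 < t p.2 (g w))
  have hf : Continuous f := by
    refine continuous_pi ?_
    rintro (n | ⟨i, q⟩)
    · change Continuous fun w : B => w.1.1 n
      fun_prop
    · change Continuous fun w : B => decide (w.1.2 i < t q (g w))
      have hc1 : Continuous fun w : B => w.1.2 i := by fun_prop
      have hc2 : Continuous fun w : B => t q (g w) := (ht q).comp hg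
      rw [continuous_bool_rng true]
      refine ⟨?_, ?_⟩
      · convert! isClosed_le hc1 hc2 using 1
        ext w
        simpa using ⟨le_of_lt, fun hle => lt_of_le_of_ne hle (h w i q)⟩
      · convert! isOpen_lt hc1 hc2 using 1
        ext w
        simp
  refine zeroDim_of_countable (f := f) ⟨le_antisymm (continuous_iff_le_induced.1 hf) ?_⟩
  let τ : TopologicalSpace B := TopologicalSpace.induced f inferInstance
  have hfτ : Continuous[τ, _] f := continuous_induced_dom
  have hbit : ∀ k, Continuous[τ, _] fun w => f w k := fun k => (continuous_apply k).comp hfτ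
  have hset : ∀ i q b, IsOpen[τ] {w : B | decide (w.1.2 i < t q (g w)) = b} := fun i q b =>
    (isOpen_discrete {b}).preimage (hbit (Sum.inr (i, q)))
  have hval : Continuous[τ, _] (Subtype.val : B → Cantor × Cube) := by
    refine Continuous.prodMk (continuous_pi fun n => hbit (Sum.inl n)) (continuous_pi fun i => ?_)
    refine continuous_iff_continuousAt.2 fun w => tendsto_order.2 ⟨fun a ha => ?_, fun a ha => ?_⟩
    · obtain ⟨q, hq⟩ := hd a _ ha
      filter_upwards [(hset i q false).mem_nhds (by simpa using (hq (g w)).2.le)] with w' hw'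
      have hw' : t q (g w') ≤ w'.1.2 i := by simpa using hw'
      exact (hq _).1.trans_le hw'
    · obtain ⟨q, hq⟩ := hd _ a ha
      filter_upwards [(hset i q true).mem_nhds (by simpa using (hq (g w)).1)] with w' hw'
      have hw' : w'.1.2 i < t q (g w') := by simpa using hw'
      exact hw'.trans (hq _).2
  exact continuous_iff_le_induced.1 hval

/-- The task of comparing the `i`-th coordinate with `p`. -/
def bisectTask (i : Idx) (p : unitInterval) : Task where
  G := {w | w.2 i ≤ p}
  isClosed_G := isClosed_le (by fun_prop) continuous_const
  M := fun _ => {x | p ≤ x i}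
  isClosed_M := fun _ => isClosed_le continuous_const (by fun_prop)
  H := fun _ _ => 0
  measurable_H := measurable_const
  dichotomy := fun P S₀ S₁ _ hd hl => (hl.bisect hd i p).imp (fun h => ⟨0, h⟩) fun h => ⟨0, h⟩

/-- The task of putting the `i`-th coordinate into the Cantor set `range t` or away from it; in
the former case, if it equals `t v`, the sequence `h v` is recorded. -/
noncomputable def meetTask (i : Idx) (t : Codes → unitInterval) (ht : Continuous t)
    (hinj : Function.Injective t) (h : Codes → ℕ → unitInterval) (hh : Measurable h) : Task where
  G := {w | w.2 i = w.1 ∧ w.1 ∈ range t}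
  isClosed_G := (isClosed_eq (by fun_prop) (by fun_prop)).inter
    ((isCompact_range ht).isClosed.preimage continuous_fst)
  M := farFrom t i
  isClosed_M := isClosed_farFrom t i
  H := Function.extend t h fun _ _ => 0
  measurable_H := (ht.measurableEmbedding hinj).measurable_extend hh measurable_const
  dichotomy := fun P S₀ S₁ hP hd hl => by
    refine (hl.meet_or_far hP hd i ht hinj).imp_left ?_
    rintro ⟨v, hv⟩
    exact ⟨t v, hv.mono (fun x hx => ⟨hx.1, hx.2, v, rfl⟩) Subset.rfl⟩

/-- The graph (of a partial function on the Cantor space) obtained from the tasks above. -/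
lemma exists_graph {t : ℚ × ℚ → Codes → unitInterval} (ht : ∀ q, Continuous (t q))
    (hti : ∀ q, Function.Injective (t q)) {h : Codes → ℕ → unitInterval} (hh : Measurable h)
    {C₀ : Set Cantor} (hC₀ : IsClosed C₀) {P₀ : Set (Cantor × Cube)} (hP₀ : IsClosed P₀)
    (hl : ∀ c ∈ C₀, Large {x | (c, x) ∈ P₀} (nodesAbove [])) :
    ∃ X ⊆ P₀, IsGδ X ∧ InjOn Prod.fst X ∧ (∀ c ∈ C₀, ∃ x, (c, x) ∈ X) ∧
      ∀ w ∈ X, ∀ i q v, w.2 i = t q v → ∃ ρ, ∀ j, w.2 (Sum.inr (ρ, 2 * j)) = h v j := by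
  obtain ⟨e, he⟩ := exists_surjective_nat ((Idx × ℚ) ⊕ (Idx × (ℚ × ℚ)))
  let r : (Idx × ℚ) ⊕ (Idx × (ℚ × ℚ)) → Task := Sum.elim
    (fun p => bisectTask p.1 (projIcc (0 : ℝ) 1 zero_le_one p.2))
    fun p => meetTask p.1 (t p.2) (ht p.2) (hti p.2) h hh
  obtain ⟨X, hX, hG, hdec, hex⟩ := exists_isGδ_decided hC₀ hP₀ hl fun n => r (e n)
  have hdec' : ∀ k, Decided (r k) X := fun k => by
    obtain ⟨n, rfl⟩ := he k
    exact hdec n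
  refine ⟨X, hX, hG, ?_, hex, ?_⟩
  · rintro ⟨c, x⟩ hw ⟨c', x'⟩ hw' (rfl : c = c')
    have key : ∀ y y' : Cube, (c, y) ∈ X → (c, y') ∈ X → ∀ i, y' i ≤ y i := by
      intro y y' hy hy' i
      by_contra! hlt
      obtain ⟨p, hp, hp'⟩ := exists_rat_btwn (show (y i : ℝ) < y' i from hlt)
      have hproj : ((projIcc (0 : ℝ) 1 zero_le_one (p : ℝ) : unitInterval) : ℝ) = p := by
        rw [projIcc_of_mem zero_le_one ⟨(y i).2.1.trans hp.le, hp'.le.trans (y' i).2.2⟩]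
      obtain ⟨b, θ, N, ρ, hb⟩ := hdec' (Sum.inl (i, p))
      cases hbc : b c with
      | false =>
        have := ((hb _ hy').1 hbc).1
        have : y' i ≤ projIcc (0 : ℝ) 1 zero_le_one (p : ℝ) := this
        rw [← Subtype.coe_le_coe, hproj] at this
        linarith
      | true =>
        have := (hb _ hy).2 hbc
        have : projIcc (0 : ℝ) 1 zero_le_one (p : ℝ) ≤ y i := this
        rw [← Subtype.coe_le_coe, hproj] at this
        linarith
    rw [Prod.mk.injEq]
    exact ⟨rfl, funext fun i => le_antisymm (key _ _ hw' hw i) (key _ _ hw hw' i)⟩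
  · rintro w hw i q v hv
    obtain ⟨b, θ, N, ρ, hb⟩ := hdec' (Sum.inr (i, q))
    cases hbc : b w.1 with
    | false =>
      obtain ⟨⟨h1, -⟩, h2⟩ := (hb w hw).1 hbc
      refine ⟨ρ w.1, fun j => (h2 j).trans ?_⟩
      have h1 : w.2 i = θ w.1 := h1
      change Function.extend (t q) h (fun _ _ => 0) (θ w.1) j = h v j
      rw [← h1, hv, (hti q).extend_apply]
    | true =>
      have h1 : w.2 ∈ farFrom (t q) i (N w.1) := (hb w hw).2 hbc
      have := h1 v
      rw [hv, dist_self] at this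
      exact absurd this (not_le.2 (by positivity))

/-! ### Graphs that avoid given graphs -/

/-- Every piece of `X` that embeds into `Y` is zero-dimensional. -/
def Avoids {Z : Type*} [TopologicalSpace Z] (Y X : Set Z) : Prop :=
  ∀ B ⊆ X, ∀ f : B → Z, IsEmbedding f → (∀ b, f b ∈ Y) → ZeroDim B

/-- Open sets are coded by points of the Cantor space, as unions of basic open sets. -/
lemma exists_open_codes (Z : Type*) [TopologicalSpace Z] [SecondCountableTopology Z] :
    ∃ Bs : ℕ → Set Z, (∀ b, IsOpen (Bs b)) ∧
      ∀ O, IsOpen O → ∃ c : Cantor, ∀ z, z ∈ O ↔ ∃ b, c b = true ∧ z ∈ Bs b := by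
  classical
  let ⟨S, hc, hne, hS⟩ := TopologicalSpace.exists_countable_basis Z
  obtain ⟨Bs, hBs⟩ := (hc.insert ∅).exists_eq_range (insert_nonempty _ _)
  have hopen : ∀ b, IsOpen (Bs b) := fun b => by
    have : Bs b ∈ insert ∅ S := hBs ▸ mem_range_self b
    rcases this with h | h
    · rw [h]
      exact isOpen_empty
    · exact hS.isOpen h
  refine ⟨Bs, hopen, fun O hO => ⟨fun b => decide (Bs b ⊆ O), fun z => ⟨fun hz => ?_, ?_⟩⟩⟩
  · obtain ⟨V, hV, hzV, hVO⟩ := hS.exists_subset_of_mem_open hz hO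
    obtain ⟨b, rfl⟩ : V ∈ range Bs := hBs ▸ Or.inr hV
    exact ⟨b, by simpa using hVO, hzV⟩
  · rintro ⟨b, hb, hz⟩
    exact (of_decide_eq_true hb) hz

/-- A set of zeros of functions separating the opposite faces in the directions `inl k` has
vertical sections that are large with respect to the other coordinates. -/
lemma large_section {ψ : ℕ → C(Cantor × Cube, ℝ)}
    (h0 : ∀ k y, y.2 (Sum.inl k) = 0 → 0 ≤ ψ k y) (h1 : ∀ k y, y.2 (Sum.inl k) = 1 → ψ k y ≤ 0)
    (c : Cantor) : Large {x | ∀ k, ψ k (c, x) = 0} (nodesAbove []) := by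
  intro φ hφ
  let Ψ : Idx → C(Cube, ℝ) := Sum.elim
    (fun k => ⟨fun x => ψ k (c, x), by fun_prop⟩) fun p => φ (Sum.inr p)
  obtain ⟨x, hx⟩ := miranda Ψ (by
    rintro (k | p) x
    · exact ⟨h0 k (c, x), h1 k (c, x)⟩
    · exact hφ (Sum.inr p) x)
  refine ⟨x, fun k => hx (Sum.inl k), ?_⟩
  rintro s ⟨ρ, j, rfl, -⟩
  exact hx (Sum.inr (ρ, j))

/-- The diagonalization. A code `v = (r, c)` stands for the point of `Y n` over `c` together with
a sequence of open sets `O r j`; the recorded sequence `h v` refutes the claim that the `j`-th even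
coordinate at the relevant node exceeds `1 / 2` exactly if that point is in `O r j`. -/
lemma exists_avoiding_graph {Y : ℕ → Set (Cantor × Cube)} (hY : ∀ n, IsGδ (Y n))
    (hYi : ∀ n, InjOn Prod.fst (Y n)) :
    ∃ X : Set (Cantor × Cube), IsGδ X ∧ InjOn Prod.fst X ∧ ¬ Small X ∧ ∀ n, Avoids (Y n) X := by
  classical
  obtain ⟨t, ht, hti, htd⟩ := exists_codes_family
  obtain ⟨Bs, hBo, hBs⟩ := exists_open_codes (Cantor × Cube)
  obtain ⟨e, he⟩ := exists_surjective_nat (List Bool × ℕ)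
  let O : Cantor → ℕ → Set (Cantor × Cube) := fun r j =>
    {z | ∃ b, r (Nat.pair j b) = true ∧ z ∈ Bs b}
  let E : ℕ → Set Codes := fun j => {v | ∃ z ∈ Y (e j).2, z.1 = v.2 ∧ z ∈ O v.1 j}
  let h : Codes → ℕ → unitInterval := fun v j => if v ∈ E j then 0 else 1
  have hE : ∀ j, MeasurableSet (E j) := by
    intro j
    have : E j = ⋃ b, (fun v : Codes => v.1 (Nat.pair j b)) ⁻¹' {true} ∩
        Prod.snd ⁻¹' (Prod.fst '' (Y (e j).2 ∩ Bs b)) := by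
      ext v
      simp only [E, O, mem_ofPred_eq, mem_iUnion, mem_inter_iff, mem_preimage, mem_singleton_iff,
        mem_image]
      constructor
      · rintro ⟨z, hz, hzv, b, hb, hzb⟩
        exact ⟨b, hb, z, ⟨hz, hzb⟩, hzv⟩
      · rintro ⟨b, hb, z, ⟨hz, hzb⟩, hzv⟩
        exact ⟨z, hz, hzv, b, hb, hzb⟩
    rw [this]
    refine MeasurableSet.iUnion fun b => MeasurableSet.inter ?_ ?_
    · have : Measurable fun v : Codes => v.1 (Nat.pair j b) := by fun_prop
      exact this (measurableSet_singleton _)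
    · refine measurable_snd ?_
      exact ((hY _).measurableSet.inter (hBo b).measurableSet).image_of_continuousOn_injOn
        continuous_fst.continuousOn ((hYi _).mono inter_subset_left)
  have hh : Measurable h := measurable_pi_lambda _ fun j =>
    Measurable.ite (hE j) measurable_const measurable_const
  -- The closed set below is universal along the diagonal: every closed set agrees with it on
  -- the fibre over its own code.
  let P₀ : Set (Cantor × Cube) := {w | ∀ b, w.1 b = true → w ∉ Bs b}
  have hP₀ : IsClosed P₀ := by
    have : P₀ = ⋂ b, ({w | w.1 b = true} ∩ Bs b)ᶜ := by
      ext w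
      simp [P₀]
    rw [this]
    refine isClosed_iInter fun b => (IsOpen.inter ?_ (hBo b)).isClosed_compl
    exact (isOpen_discrete {true}).preimage (f := fun w : Cantor × Cube => w.1 b) (by fun_prop)
  let C₀ : Set Cantor := {c | Large {x | (c, x) ∈ P₀} (nodesAbove [])}
  have hC₀ : IsClosed C₀ := isClosed_setOf_large hP₀ (σ := fun _ => nodesAbove [])
    fun d => Eventually.of_forall fun _ => rfl
  obtain ⟨X, hXP, hXG, hXi, hXC, hX⟩ := exists_graph ht hti hh hC₀ hP₀ fun c hc => hc
  refine ⟨X, hXG, hXi, ?_, ?_⟩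
  · rintro ⟨D, hD, hz⟩
    have := fun k => (hz k).exists_avoiding (u := fun y : Cantor × Cube => y.2 (Sum.inl k))
      (by fun_prop) ⟨(fun _ => true, fun _ => 0), rfl⟩ ⟨(fun _ => true, fun _ => 1), rfl⟩
    choose ψ h0 h1 hne using this
    let L : Set (Cantor × Cube) := {w | ∀ k, ψ k w = 0}
    have hL : IsClosed L := by
      have : L = ⋂ k, {w | ψ k w = 0} := by
        ext w
        simp [L]
      rw [this]
      exact isClosed_iInter fun k => isClosed_eq (ψ k).continuous continuous_const
    obtain ⟨c, hc⟩ := hBs _ hL.isOpen_compl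
    have hcP : ∀ x, (c, x) ∈ P₀ ↔ (c, x) ∈ L := by
      intro x
      rw [← not_iff_not, ← mem_compl_iff L, hc]
      simp [P₀]
    have hcC : c ∈ C₀ := (large_section h0 h1 c).mono (fun x hx => (hcP x).2 hx) Subset.rfl
    obtain ⟨x, hx⟩ := hXC c hcC
    obtain ⟨k, hk⟩ := mem_iUnion.1 (hD hx)
    exact hne k _ hk ((hcP x).1 (hXP hx) k)
  · intro n B hBX f hf hfY
    let half : unitInterval := ⟨1 / 2, by norm_num, by norm_num⟩
    have key : ∀ j, ∃ c : Cantor, ∀ w : B,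
        half < w.1.2 (Sum.inr ((e j).1, 2 * j)) ↔ ∃ b, c b = true ∧ f w ∈ Bs b := by
      intro j
      have hop : IsOpen {w : B | half < w.1.2 (Sum.inr ((e j).1, 2 * j))} :=
        isOpen_lt continuous_const (by fun_prop)
      obtain ⟨V, hV, hVe⟩ := hf.isInducing.isOpen_iff.1 hop
      obtain ⟨c, hc⟩ := hBs V hV
      refine ⟨c, fun w => ?_⟩
      rw [← hc]
      exact (Set.ext_iff.1 hVe w).symm
    choose c hc using key
    let r : Cantor := fun m => c m.unpair.1 m.unpair.2
    have hr : ∀ j (w : B), half < w.1.2 (Sum.inr ((e j).1, 2 * j)) ↔ f w ∈ O r j := by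
      intro j w
      simp [hc, O, r]
    refine zeroDim_of_avoids ht htd (g := fun w => (r, (f w).1))
      (by have := hf.continuous; fun_prop) ?_
    intro w i q hwi
    obtain ⟨ρ, hρ⟩ := hX w (hBX w.2) i q _ hwi
    obtain ⟨j, hj⟩ := he (ρ, n)
    have h2 := hρ j
    have h3 := hr j w
    rw [hj] at h3
    have h4 : (r, (f w).1) ∈ E j ↔ f w ∈ O r j := by
      constructor
      · rintro ⟨z, hz, hzw, hzO⟩
        rw [hj] at hz
        exact hYi n hz (hfY w) hzw ▸ hzO
      · exact fun hO => ⟨f w, by rw [hj]; exact hfY w, rfl, hO⟩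
    by_cases hO : f w ∈ O r j
    · have h5 := h3.2 hO
      rw [h2] at h5
      simp only [h, h4.2 hO, if_true] at h5
      exact absurd h5 (not_lt.2 bot_le)
    · have h5 := mt h3.1 hO
      rw [h2] at h5
      simp only [h, mt h4.1 hO, if_false] at h5
      refine h5 (Subtype.coe_lt_coe.1 ?_)
      norm_num [half]

/-- A sequence of `G_δ` sets, none of them small, such that the pieces of one that embed into
another one are zero-dimensional. -/
lemma exists_avoiding_sequence : ∃ X : ℕ → Set (Cantor × Cube),
    (∀ n, IsGδ (X n)) ∧ (∀ n, ¬ Small (X n)) ∧ ∀ m n, m ≠ n → Avoids (X m) (X n) := by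
  obtain ⟨X, hX, hr⟩ := exists_seq_of_forall_finset_exists
    (fun X : Set (Cantor × Cube) => IsGδ X ∧ InjOn Prod.fst X ∧ ¬ Small X) Avoids (by
      intro s hs
      obtain ⟨Y, hY⟩ := (s.countable_toSet.insert ∅).exists_eq_range (insert_nonempty _ _)
      have hY' : ∀ n, Y n = ∅ ∨ Y n ∈ s := fun n => by
        have : Y n ∈ insert ∅ (s : Set (Set (Cantor × Cube))) := hY ▸ mem_range_self n
        simpa using this
      obtain ⟨X, h1, h2, h3, h4⟩ := exists_avoiding_graph (Y := Y)
        (fun n => (hY' n).elim (fun h => h ▸ IsGδ.empty) fun h => (hs _ h).1)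
        (fun n => (hY' n).elim (fun h => h ▸ injOn_empty _) fun h => (hs _ h).2.1)
      refine ⟨X, ⟨h1, h2, h3⟩, fun x hx => ?_⟩
      obtain ⟨n, rfl⟩ : x ∈ range Y := hY ▸ Or.inr hx
      exact h4 n)
  refine ⟨X, fun n => (hX n).1, fun n => (hX n).2.2, fun m n hmn => ?_⟩
  rcases hmn.lt_or_gt with h | h
  · exact hr m n h
  -- Here the roles are exchanged: the image of the piece is a zero-dimensional piece of `X m`.
  · intro B hB f hf hfm
    let g := hf.toHomeomorph
    have hz : ZeroDim (range f) := by
      refine hr n m h (range f) (range_subset_iff.2 hfm) (fun y => (g.symm y : Cantor × Cube)) ?_ ?_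
      · exact IsEmbedding.subtypeVal.comp g.symm.isEmbedding
      · exact fun y => hB (g.symm y).2
    exact hz.of_isInducing hf.isInducing mem_range_self

/-! ### Compactification with a small remainder -/

lemma zeroDim_pi {Y : Type*} [TopologicalSpace Y] {D : ℕ → Set Y} (h : ∀ n, ZeroDim (D n)) :
    ZeroDim {x : ℕ → Y | ∀ n, x n ∈ D n} := by
  choose f hf using h
  have hind : IsInducing fun (x : {x : ℕ → Y | ∀ n, x n ∈ D n}) (n : ℕ) =>
      (⟨x.1 n, x.2 n⟩ : D n) :=
    IsInducing.of_comp (g := fun y n => (y n : Y))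
      (continuous_pi fun n => Continuous.subtype_mk
        ((continuous_apply n).comp continuous_subtype_val) _) (by fun_prop)
      (by exact IsInducing.subtypeVal)
  have h2 : IsInducing fun (x : {x : ℕ → Y | ∀ n, x n ∈ D n}) (n : ℕ) => f n ⟨x.1 n, x.2 n⟩ :=
    (IsInducing.piMap hf).comp hind
  have h3 : IsInducing fun (y : ℕ → ℕ → Bool) (p : ℕ × ℕ) => y p.1 p.2 :=
    IsInducing.of_comp (g := fun z m n => z (m, n)) (by fun_prop) (by fun_prop) (by exact .id)
  exact zeroDim_of_countable (h3.comp h2)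

lemma zeroDim_irrational : ZeroDim {x : unitInterval | Irrational x} := by
  classical
  let f : {x : unitInterval | Irrational x} → ℚ → Bool := fun x q => decide ((x.1 : ℝ) < q)
  have hc : Continuous fun x : {x : unitInterval | Irrational x} => (x.1 : ℝ) := by fun_prop
  have hf : Continuous f := by
    refine continuous_pi fun q => ?_
    rw [continuous_bool_rng true]
    refine ⟨?_, ?_⟩
    · convert! isClosed_le hc (continuous_const (y := (q : ℝ))) using 1
      ext x
      simpa [f] using ⟨le_of_lt, fun hle => lt_of_le_of_ne hle (x.2.ne_rat q)⟩
    · convert! isOpen_lt hc (continuous_const (y := (q : ℝ))) using 1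
      ext x
      simp [f]
  refine zeroDim_of_countable (f := f) ⟨le_antisymm (continuous_iff_le_induced.1 hf) ?_⟩
  let τ : TopologicalSpace {x : unitInterval | Irrational x} :=
    TopologicalSpace.induced f inferInstance
  have hfτ : Continuous[τ, _] f := continuous_induced_dom
  have hset : ∀ q b, IsOpen[τ] {x | f x q = b} := fun q b =>
    (isOpen_discrete {b}).preimage ((continuous_apply q).comp hfτ)
  have hval : Continuous[τ, _]
      (Subtype.val : {x : unitInterval | Irrational x} → unitInterval) := by
    refine continuous_induced_rng.2 (continuous_iff_continuousAt.2 fun x =>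
      tendsto_order.2 ⟨fun a ha => ?_, fun a ha => ?_⟩)
    · obtain ⟨q, hq, hq'⟩ := exists_rat_btwn ha
      filter_upwards [(hset q false).mem_nhds (by simpa [f] using hq'.le)] with y hy
      have hy : (q : ℝ) ≤ y.1 := by simpa [f] using hy
      exact hq.trans_le hy
    · obtain ⟨q, hq, hq'⟩ := exists_rat_btwn ha
      filter_upwards [(hset q true).mem_nhds (by simpa [f] using hq)] with y hy
      have hy : (y.1 : ℝ) < q := by simpa [f] using hy
      exact hy.trans hq'
  exact continuous_iff_le_induced.1 hval

/-- The sequences in the Hilbert cube that vanish eventually. -/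
def finSupp : Set (ℕ → unitInterval) := {x | ∃ N, ∀ n, N ≤ n → x n = 0}

lemma small_finSupp : Small finSupp := by
  let E : Option ℚ → Set unitInterval := fun o =>
    o.elim {x | Irrational x} fun q => {x | (x : ℝ) = q}
  have hE : ∀ o, ZeroDim (E o) := by
    rintro (_ | q)
    · exact zeroDim_irrational
    · have : Subsingleton (E (some q)) :=
        ⟨fun x y => Subtype.ext (Subtype.ext (Eq.trans x.2 (Eq.symm y.2)))⟩
      exact ⟨fun _ _ => true, ⟨Subsingleton.elim _ _⟩⟩
  have hcov : ∀ x, ∃ o, x ∈ E o := by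
    intro x
    by_cases h : Irrational x
    · exact ⟨none, h⟩
    · obtain ⟨q, hq⟩ := not_not.1 h
      exact ⟨some q, hq.symm⟩
  refine Small.mono (small_iUnion (ι := Σ N : ℕ, Fin N → Option ℚ) fun p =>
    (zeroDim_pi fun n => hE (if h : n < p.1 then p.2 ⟨n, h⟩ else some 0)).small) ?_
  rintro x ⟨N, hN⟩
  choose o ho using fun n => hcov (x n)
  refine mem_iUnion.2 ⟨⟨N, fun i => o i⟩, fun n => ?_⟩
  by_cases h : n < N
  · simpa [h] using ho n
  · simp [h, hN n (not_lt.1 h), E]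

lemma exists_eq_zero_iff {W : Type*} [TopologicalSpace W] [TopologicalSpace.MetrizableSpace W]
    {U : Set W} (hU : IsOpen U) : ∃ d : W → unitInterval, Continuous d ∧ ∀ w, d w = 0 ↔ w ∉ U := by
  let := TopologicalSpace.metrizableSpaceMetric W
  rcases Uᶜ.eq_empty_or_nonempty with h | h
  · refine ⟨fun _ => 1, continuous_const, fun w => ?_⟩
    rw [compl_empty_iff] at h
    simp [h]
  · refine ⟨fun w => projIcc 0 1 zero_le_one (Metric.infDist w Uᶜ),
      continuous_projIcc.comp (Metric.continuous_infDist_pt _), fun w => ?_⟩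
    rw [← mem_compl_iff, hU.isClosed_compl.mem_iff_infDist_zero h]
    change projIcc 0 1 zero_le_one (Metric.infDist w Uᶜ) = ⟨0, _⟩ ↔ _
    rw [projIcc_eq_left zero_lt_one]
    exact ⟨fun h => le_antisymm h Metric.infDist_nonneg, le_of_eq⟩

/-- A `G_δ` subset `⋂ j, U j` is embedded in the Hilbert cube by a map of the whole space that
sends the points outside to eventually vanishing sequences: scale the coordinates of an embedding
by products of functions whose zero sets are the complements of the `U j`. -/
lemma exists_collapse {W : Type*} [TopologicalSpace W] [TopologicalSpace.MetrizableSpace W]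
    [TopologicalSpace.SeparableSpace W] {Y : Set W} (hY : IsGδ Y) :
    ∃ κ : W → ℕ → unitInterval, Continuous κ ∧ IsEmbedding (fun y : Y => κ y) ∧
      ∀ w, w ∉ Y → κ w ∈ finSupp := by
  obtain ⟨u, hu⟩ : ∃ u : W → ℕ → unitInterval, IsEmbedding u := by
    let := TopologicalSpace.metrizableSpaceMetric W
    exact Metric.PiNatEmbed.exists_embedding_to_hilbert_cube
  obtain ⟨U, hU, rfl⟩ := isGδ_iff_eq_iInter_nat.1 hY
  choose d hd hd0 using fun j => exists_eq_zero_iff (hU j)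
  let δ : ℕ → W → unitInterval := fun n w => ∏ j ∈ Finset.range (n + 1), d j w
  have hδ : ∀ n, Continuous (δ n) := fun n => continuous_finsetProd _ fun j _ => hd j
  have hδ0 : ∀ n w, δ n w = 0 ↔ ∃ j ≤ n, w ∉ U j := by
    intro n w
    simp [δ, Finset.prod_eq_zero_iff, hd0]
  let κ : W → ℕ → unitInterval := fun w m =>
    if m % 2 = 0 then δ (m / 2) w else δ (m / 2) w * u w (m / 2)
  have hu' := hu.continuous
  have hκ : Continuous κ := by
    refine continuous_pi fun m => ?_
    by_cases h : m % 2 = 0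
    · simpa only [κ, h, if_true] using hδ _
    · simp only [κ, h, if_false]
      exact (hδ _).mul (by fun_prop)
  have hκ0 : ∀ w n, κ w (2 * n) = δ n w := fun w n => by simp [κ]
  have hκ1 : ∀ w n, κ w (2 * n + 1) = δ n w * u w n := fun w n => by
    have e : (2 * n + 1) / 2 = n := by omega
    simp [κ, Nat.add_mod, e]
  refine ⟨κ, hκ, ?_, ?_⟩
  · let T : Set (ℕ → unitInterval) := {x | ∀ n, x (2 * n) ≠ 0}
    have hT : ∀ y : (⋂ n, U n : Set W), κ y ∈ T := by
      intro y n
      rw [hκ0, Ne, hδ0]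
      rintro ⟨j, -, hj⟩
      exact hj (mem_iInter.1 y.2 j)
    let g : T → ℕ → ℝ := fun x n => (x.1 (2 * n + 1) : ℝ) / x.1 (2 * n)
    have hg : Continuous g := by
      refine continuous_pi fun n => Continuous.div ?_ ?_ fun x hx => ?_
      · exact continuous_subtype_val.comp ((continuous_apply _).comp continuous_subtype_val)
      · exact continuous_subtype_val.comp ((continuous_apply _).comp continuous_subtype_val)
      exact x.2 n (Subtype.ext hx)
    have hgu : IsInducing (g ∘ fun y : (⋂ n, U n : Set W) => (⟨κ y, hT y⟩ : T)) := by
      have : (g ∘ fun y : (⋂ n, U n : Set W) => (⟨κ y, hT y⟩ : T)) =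
          (Pi.map fun _ => Subtype.val) ∘ u ∘ Subtype.val := by
        ext y n
        have hne : ((δ n y : unitInterval) : ℝ) ≠ 0 := fun h =>
          hT y n ((hκ0 y n).trans (Subtype.ext h))
        simp only [g, Function.comp_apply, Pi.map_apply, hκ0, hκ1]
        rw [Set.Icc.coe_mul]
        field_simp
      rw [this]
      exact (IsInducing.piMap fun _ => IsInducing.subtypeVal).comp
        (hu.isInducing.comp IsInducing.subtypeVal)
    have := IsInducing.of_comp (by fun_prop) hg hgu
    exact (IsInducing.subtypeVal.comp this).isEmbedding
  · intro w hw
    obtain ⟨j, hj⟩ : ∃ j, w ∉ U j := by simpa using hw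
    refine ⟨2 * j, fun n hn => ?_⟩
    have h0 : δ (n / 2) w = 0 := (hδ0 _ _).2 ⟨j, by omega, hj⟩
    by_cases h : n % 2 = 0 <;> simp [κ, h, h0]

/-- The disjoint union of the `G_δ` sets `X n`, `n ∈ S`, has a compactification in the Hilbert
cube with a small remainder. -/
lemma exists_compactification {Z : Type*} [TopologicalSpace Z] [CompactSpace Z]
    [TopologicalSpace.MetrizableSpace Z] [TopologicalSpace.SeparableSpace Z] {X : ℕ → Set Z}
    (hX : ∀ n, IsGδ (X n)) (S : Set ℕ) :
    ∃ (K : Set (ℕ → unitInterval)) (f : ∀ n, X n → ℕ → unitInterval), IsCompact K ∧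
      (∀ n ∈ S, IsEmbedding (f n) ∧ ∀ z, f n z ∈ K) ∧
      ∀ x ∈ K, x ∈ finSupp ∨ ∃ n ∈ S, x ∈ range (f n) := by
  classical
  choose U hU hXU using fun n => isGδ_iff_eq_iInter_nat.1 (hX n)
  -- The union is realised over the points `a n` of the Cantor space converging to `0`; these and
  -- `0` are the points having at most one coordinate `true`.
  let a : ℕ → Cantor := fun n m => decide (m = n)
  let Y : Set (Cantor × Z) := {w | ∀ m n, w.1 m = true → w.1 n = true → m = n} ∩
    ⋂ j, {w | ∃ n ∈ S, w.1 n = true ∧ w.2 ∈ U n j}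
  have hbit : ∀ n, Continuous fun w : Cantor × Z => w.1 n := fun n => by fun_prop
  have hbo : ∀ n, IsOpen {w : Cantor × Z | w.1 n = true} := fun n =>
    (isOpen_discrete {true}).preimage (hbit n)
  have hY : IsGδ Y := by
    refine IsGδ.inter (IsClosed.isGδ ?_) (IsGδ.iInter_of_isOpen fun j => ?_)
    · have : {w : Cantor × Z | ∀ m n, w.1 m = true → w.1 n = true → m = n} =
          ⋂ m, ⋂ n, {w | m ≠ n → w ∉ {w : Cantor × Z | w.1 m = true} ∩ {w | w.1 n = true}} := by
        ext w
        simp only [mem_ofPred_eq, mem_iInter, mem_inter_iff]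
        grind
      rw [this]
      refine isClosed_iInter fun m => isClosed_iInter fun n => ?_
      by_cases h : m = n
      · simp [h]
      · convert! ((hbo m).inter (hbo n)).isClosed_compl using 1
        ext w
        simp [h]
    · have : {w : Cantor × Z | ∃ n ∈ S, w.1 n = true ∧ w.2 ∈ U n j} =
          ⋃ n ∈ S, {w : Cantor × Z | w.1 n = true} ∩ Prod.snd ⁻¹' U n j := by
        ext w
        simp [and_left_comm]
      rw [this]
      exact isOpen_biUnion fun n _ => (hbo n).inter ((hU n j).preimage continuous_snd)
  have hYa : ∀ n ∈ S, ∀ z ∈ X n, (a n, z) ∈ Y := by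
    intro n hn z hz
    refine ⟨fun m m' h h' => ?_, mem_iInter.2 fun j => ⟨n, hn, by simp [a], ?_⟩⟩
    · simp only [a, decide_eq_true_eq] at h h'
      rw [h, h']
    · rw [hXU] at hz
      exact mem_iInter.1 hz j
  have hYa' : ∀ w ∈ Y, ∃ n ∈ S, ∃ z ∈ X n, w = (a n, z) := by
    rintro w ⟨h1, h2⟩
    rw [mem_iInter] at h2
    obtain ⟨n, hn, hwn, -⟩ := h2 0
    refine ⟨n, hn, w.2, ?_, Prod.ext (funext fun m => ?_) rfl⟩
    · rw [hXU]
      refine mem_iInter.2 fun j => ?_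
      obtain ⟨n', -, hwn', hj⟩ := h2 j
      rwa [h1 _ _ hwn hwn']
    · by_cases hm : m = n
      · simpa [a, hm] using hwn
      · simpa [a, hm] using fun h => hm (h1 _ _ h hwn)
  obtain ⟨κ, hκ, hemb, hfin⟩ := exists_collapse hY
  refine ⟨range κ, fun n z => κ (a n, z), isCompact_range hκ, fun n hn => ⟨?_, fun z => ⟨_, rfl⟩⟩,
    ?_⟩
  · refine hemb.comp (f := fun z : X n => (⟨(a n, z), hYa n hn z z.2⟩ : Y)) ?_
    refine IsEmbedding.of_comp (g := fun y : Y => y.1.2) (by fun_prop) (by fun_prop) ?_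
    exact IsEmbedding.subtypeVal
  · rintro _ ⟨w, rfl⟩
    by_cases hw : w ∈ Y
    · obtain ⟨n, hn, z, hz, rfl⟩ := hYa' w hw
      exact Or.inr ⟨n, hn, ⟨z, hz⟩, rfl⟩
    · exact Or.inl (hfin w hw)

/-! ### The antichain -/

/-- A piece of `X₀` that embeds into the compactification of a disjoint union of sets avoided by
`X₀` is small. -/
lemma small_of_isEmbedding {Z : Type*} [TopologicalSpace Z] {X : ℕ → Set Z} {S : Set ℕ}
    {f : ∀ m, X m → ℕ → unitInterval} (hf : ∀ m ∈ S, IsEmbedding (f m)) {X₀ : Set Z}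
    (hav : ∀ m ∈ S, Avoids (X m) X₀) {B : Set Z} (hB : B ⊆ X₀) {q : B → ℕ → unitInterval}
    (hq : IsEmbedding q) (hcov : ∀ b, q b ∈ finSupp ∨ ∃ m ∈ S, q b ∈ range (f m)) : Small B := by
  let P : Option S → Set (ℕ → unitInterval) := fun o => o.elim finSupp fun m => range (f m)
  let B' : Option S → Set Z := fun o => {z | ∃ h : z ∈ B, q ⟨z, h⟩ ∈ P o}
  have hincl : ∀ o, IsEmbedding fun z : B' o => q ⟨z, z.2.1⟩ := fun o =>
    hq.comp (f := fun z : B' o => (⟨z, z.2.1⟩ : B))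
      (IsEmbedding.of_comp (by fun_prop) continuous_subtype_val (by exact IsEmbedding.subtypeVal))
  have hsmall : ∀ o, Small (B' o) := by
    rintro (_ | m)
    · exact small_finSupp.of_isInducing (hincl none).isInducing fun z => z.2.2
    · let e := (hf m m.2).toHomeomorph
      have h1 : IsEmbedding fun z : B' (some m) => (⟨q ⟨z, z.2.1⟩, z.2.2⟩ : range (f m)) :=
        (hincl (some m)).codRestrict _ _
      refine (hav m m.2 (B' (some m)) (fun z hz => hB hz.1) _
        (IsEmbedding.subtypeVal.comp (e.symm.isEmbedding.comp h1)) fun z => ?_).small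
      exact Subtype.prop _
  refine (small_iUnion hsmall).mono fun z hz => mem_iUnion.2 ?_
  rcases hcov ⟨z, hz⟩ with h | ⟨m, hm, h⟩
  · exact ⟨none, hz, h⟩
  · exact ⟨some ⟨m, hm⟩, hz, h⟩

theorem exists_antichain :
    ∃ (I : Type) (K : I → Set (ℕ → unitInterval)),
      Cardinal.mk I = Cardinal.continuum ∧
      (∀ α, IsCompact (K α)) ∧
      (∀ α β, α ≠ β → ¬ SigmaEmbeddable ↥(K α) ↥(K β)) := by
  obtain ⟨X, hG, hns, hav⟩ := exists_avoiding_sequence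
  -- The sets `S α` form an antichain under inclusion.
  let S : (ℕ → Bool) → Set ℕ := fun α => {m | ∃ n, m = 2 * n + (α n).toNat}
  choose K f hK hf hcov using fun α => exists_compactification hG (S α)
  refine ⟨ℕ → Bool, K, by simp, hK, ?_⟩
  rintro α β hαβ ⟨A, hA, hAB⟩
  obtain ⟨n₀, hn₀⟩ := Function.ne_iff.1 hαβ
  obtain ⟨n, hn, hn'⟩ : ∃ n, n ∈ S α ∧ n ∉ S β := by
    refine ⟨2 * n₀ + (α n₀).toNat, ⟨n₀, rfl⟩, ?_⟩
    rintro ⟨n, h⟩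
    have h1 := (α n₀).toNat_le
    have h2 := (β n).toNat_le
    obtain rfl : n₀ = n := by omega
    have h3 : (α n₀).toNat = (β n₀).toNat := by omega
    cases h4 : α n₀ <;> cases h5 : β n₀ <;> simp_all
  choose C hC using hAB
  have e := fun k => (hC k).some
  let B : ℕ → Set (Cantor × Cube) := fun k =>
    {z | ∃ h : z ∈ X n, (⟨f α n ⟨z, h⟩, (hf α n hn).2 _⟩ : K α) ∈ A k}
  have hB : ∀ k, Small (B k) := by
    intro k
    let i₁ : B k → X n := fun z => ⟨z, z.2.1⟩
    have h₁ : IsEmbedding i₁ :=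
      IsEmbedding.of_comp (by fun_prop) continuous_subtype_val (by exact IsEmbedding.subtypeVal)
    have h₂ : IsEmbedding fun z : B k => (⟨⟨f α n (i₁ z), (hf α n hn).2 _⟩, z.2.2⟩ : A k) :=
      (((hf α n hn).1.comp h₁).codRestrict (K α) _).codRestrict (A k) _
    have h₃ := IsEmbedding.subtypeVal.comp
      (IsEmbedding.subtypeVal.comp ((e k).isEmbedding.comp h₂))
    refine small_of_isEmbedding (fun m hm => (hf β m hm).1)
      (fun m hm => hav m n fun h => hn' (h ▸ hm)) (fun z hz => hz.1) h₃ fun z => ?_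
    exact hcov β _ (Subtype.prop _)
  refine hns n ((small_iUnion hB).mono fun z hz => mem_iUnion.2 ?_)
  obtain ⟨k, hk⟩ := mem_iUnion.1 (hA ▸ mem_univ (⟨f α n ⟨z, hz⟩, (hf α n hn).2 _⟩ : K α))
  exact ⟨k, hz, hk⟩

end SigmaAntichain

/-- There is an antichain of size continuum in the σ-embeddability ordering of
compact subsets of the Hilbert cube. -/
theorem stmt4 :
    ∃ (I : Type) (K : I → Set (ℕ → unitInterval)),
      Cardinal.mk I = Cardinal.continuum ∧
      (∀ α, IsCompact (K α)) ∧
      (∀ α β, α ≠ β → ¬ SigmaEmbeddable ↥(K α) ↥(K β)) :=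
  SigmaAntichain.exists_antichain
end

section
/- Let n ∈ ℕ and let X be a second-countable T1 topological space. Then ℝ_<^{n+1} is not σ-embeddable into the product space X × ℝ_<^{n}. -/
/-!
A topological embedding preserves and reflects the specialization preorder. In `ℝ_<^k` this is the
(reversed) product order, and in a T1 space it is equality. Hence if `A ⊆ ℝ_<^{n+1}` embeds into
`X × ℝ_<^n` by `x ↦ (g x, h x)`, then `x ≤ y` in `A` iff `g x = g y` and `h x ≤ h y`.

By the Baire category theorem for the Euclidean topology, one piece `A` of a countable cover is
dense in a Euclidean ball. Inside that ball `A` contains points `a i`, `b i` (`i : Fin (n + 1)`)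
with `a i ≤ b j ↔ i ≠ j`, the standard example of a poset of order dimension `n + 1`, together with
a common upper bound `c`. The upper bound makes `g` take the same value at all of these points, so
`h` would realize the standard example in `ℝ^n`, which the pigeonhole principle excludes.
-/

open Set

/-- The lower topology on `ℝ`, generated by the open rays `(p, ∞)`. -/
def lowerTopology : TopologicalSpace ℝ :=
  .generateFrom { s : Set ℝ | ∃ p : ℝ, s = Set.Ioi p }

/-- The real line equipped with the lower topology. -/
def RLower : Type := ℝ

instance : TopologicalSpace RLower := lowerTopology

/-- Specialization in `ℝ_<` is the reversed order of the reals. -/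
lemma rlower_specializes (x y : RLower) : x ⤳ y ↔ (show ℝ from y) ≤ (show ℝ from x) := by
  rw [specializes_iff_forall_open]
  constructor
  · intro h
    by_contra hlt
    rw [not_le] at hlt
    have hy := h (show Set ℝ from Set.Ioi (show ℝ from x))
      (TopologicalSpace.isOpen_generateFrom_of_mem ⟨_, rfl⟩) hlt
    exact lt_irrefl (α := ℝ) x hy
  · intro hyx s hs
    -- Every open set is an upper set, by induction on how it is generated by the rays.
    induction hs with
    | basic s hs =>
      obtain ⟨p, rfl⟩ := hs
      intro hy
      exact lt_of_lt_of_le (show p < (show ℝ from y) from hy) hyx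
    | univ => intro _; trivial
    | inter s t _ _ ihs iht => exact fun h => ⟨ihs h.1, iht h.2⟩
    | sUnion S _ ih =>
      rintro ⟨s, hs, hy⟩
      exact ⟨s, hs, ih s hs hy⟩

/-- Specialization in `ℝ_<^k` is the reversed product order. -/
lemma pi_rlower_specializes {k : ℕ} (x y : Fin k → RLower) :
    x ⤳ y ↔ ∀ i, (show ℝ from y i) ≤ (show ℝ from x i) := by
  rw [specializes_pi]
  exact forall_congr' fun i => rlower_specializes _ _

/-- The standard example `S_{n+1}` does not embed in the product order of `ℝ^n`. -/
lemma no_standard_example (n : ℕ) (u v : Fin (n + 1) → Fin n → ℝ)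
    (hle : ∀ i j, i ≠ j → ∀ k, u i k ≤ v j k) (hnot : ∀ i, ¬ ∀ k, u i k ≤ v i k) : False := by
  simp only [not_forall, not_le] at hnot
  choose κ hκ using hnot
  obtain ⟨i, j, hij, hk⟩ := Fintype.exists_ne_map_eq_of_card_lt κ (by simp)
  have h1 := hκ i
  have h2 := hκ j
  have h3 := hle i j hij (κ i)
  have h4 := hle j i hij.symm (κ i)
  rw [← hk] at h2
  linarith

/-- `ℝ_<^{n+1}` is not σ-embeddable into `X × ℝ_<^n` for a second-countable T1 space `X`. -/
theorem stmt6 (n : ℕ) (X : Type*) [TopologicalSpace X]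
    [SecondCountableTopology X] [T1Space X] :
    ¬ SigmaEmbeddable (Fin (n + 1) → RLower) (X × (Fin n → RLower)) := by
  rintro ⟨A, hA, hemb⟩
  -- The same sets, regarded as subsets of Euclidean space.
  let A' : ℕ → Set (Fin (n + 1) → ℝ) := A
  have hA' : (⋃ m, A' m) = univ := hA
  obtain ⟨m, x, hx⟩ := nonempty_interior_of_iUnion_of_closed
    (f := fun m => closure (A' m)) (fun m => isClosed_closure)
    (Set.eq_univ_of_subset (iUnion_mono fun m => subset_closure) hA')
  obtain ⟨ε, hε, hball⟩ := Metric.isOpen_iff.1 isOpen_interior x hx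
  obtain ⟨B, ⟨e⟩⟩ := hemb m
  have approx : ∀ t : Fin (n + 1) → ℝ, (∀ k, 0 ≤ t k ∧ t k ≤ 4) →
      ∃ a ∈ A' m, ∀ k, |a k - (x k + t k * (ε / 8))| < ε / 16 := by
    intro t ht
    have hp : (fun k => x k + t k * (ε / 8)) ∈ Metric.ball x ε := by
      rw [Metric.mem_ball, dist_pi_lt_iff hε]
      intro k
      obtain ⟨h0, h4⟩ := ht k
      rw [Real.dist_eq, abs_lt]
      constructor <;> nlinarith
    obtain ⟨a, ha, hd⟩ := Metric.mem_closure_iff.1 (interior_subset (hball hp)) (ε / 16)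
      (by positivity)
    refine ⟨a, ha, fun k => ?_⟩
    rw [dist_comm, dist_pi_lt_iff (by positivity)] at hd
    exact hd k
  -- Levels 0, ..., 4 (in units of `ε / 8`): `a i` is 2 at `i` and 0 elsewhere, `b i` is 1 at `i`
  -- and 3 elsewhere, and the upper bound `c` is constantly 4.
  choose a haA ha using fun i : Fin (n + 1) =>
    approx (fun k => if k = i then 2 else 0) (fun k => by split_ifs <;> norm_num)
  choose b hbA hb using fun i : Fin (n + 1) =>
    approx (fun k => if k = i then 1 else 3) (fun k => by split_ifs <;> norm_num)
  obtain ⟨c, hcA, hc⟩ := approx (fun _ => 4) (fun k => by norm_num)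
  have hac : ∀ i k, a i k ≤ c k := by
    intro i k
    have h1 := abs_lt.1 (ha i k)
    have h2 := abs_lt.1 (hc k)
    split_ifs at h1 <;> linarith [h1.2, h2.1]
  have hbc : ∀ i k, b i k ≤ c k := by
    intro i k
    have h1 := abs_lt.1 (hb i k)
    have h2 := abs_lt.1 (hc k)
    split_ifs at h1 <;> linarith [h1.2, h2.1]
  have hab : ∀ i j, i ≠ j → ∀ k, a i k ≤ b j k := by
    intro i j hij k
    have h1 := abs_lt.1 (ha i k)
    have h2 := abs_lt.1 (hb j k)
    split_ifs at h1 h2 with p q q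
    · exact absurd (p.symm.trans q) hij
    all_goals linarith [h1.2, h2.1]
  have hnab : ∀ i, ¬ ∀ k, a i k ≤ b i k := by
    intro i h
    have h1 := abs_lt.1 (ha i i)
    have h2 := abs_lt.1 (hb i i)
    simp only [if_true] at h1 h2
    linarith [h1.1, h2.2, h i]
  -- The embedding translates the order of `A m` into equality in `X` and the order of `ℝ^n`.
  let f : ↥(A m) → X × (Fin n → RLower) := fun p => (e p : X × (Fin n → RLower))
  have hf : Topology.IsInducing f :=
    Topology.IsInducing.subtypeVal.comp e.isInducing
  have key : ∀ p q : ↥(A m), (∀ k, (show ℝ from p.1 k) ≤ (show ℝ from q.1 k)) ↔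
      ((f q).1 = (f p).1 ∧ ∀ k, (show ℝ from (f p).2 k) ≤ (show ℝ from (f q).2 k)) := by
    intro p q
    rw [← pi_rlower_specializes, ← pi_rlower_specializes, ← specializes_iff_eq,
      ← specializes_prod, hf.specializes_iff,
      Topology.IsInducing.subtypeVal.specializes_iff]
  let a' : Fin (n + 1) → ↥(A m) := fun i => ⟨a i, haA i⟩
  let b' : Fin (n + 1) → ↥(A m) := fun i => ⟨b i, hbA i⟩
  let c' : ↥(A m) := ⟨c, hcA⟩
  refine no_standard_example n (fun i => (f (a' i)).2) (fun i => (f (b' i)).2) ?_ ?_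
  · exact fun i j hij => ((key (a' i) (b' j)).1 (hab i j hij)).2
  · intro i h
    exact hnab i ((key (a' i) (b' i)).2
      ⟨((key (b' i) c').1 (hbc i)).1.symm.trans ((key (a' i) c').1 (hac i)).1, h⟩)
end

section
/- Let n ∈ ℕ and let X be an uncountable second-countable T1 topological space. Then X × ℝ_<^{n} (product topology) is not σ-embeddable into ℝ_<^{n+1}. Combined with the previous direction, for such X the spaces ℝ_<^{n+1} and X × ℝ_<^{n} are σ-incomparable. -/
/-!
Only the specialization order matters. A homeomorphism preserves and reflects specialization; on
`ℝ_<^k` it is the reversed coordinatewise order of `ℝ^k`, and on a T1 space it is equality. So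
`X` acts as an antichain, and the theorem is a statement about order embeddings.

*Crowns.* If `ℝ^m` is covered by countably many sets, then by the Baire category theorem one of them
is dense in some ball, and so contains a copy of the standard example of an `m`-dimensional poset:
points `a i`, `b j` with `a i ≤ b j` exactly when `i ≠ j`, together with a common lower bound `p` and
an upper bound `q` of the `a i` (`exists_crown`). For a crown in `ℝ^l`, choosing for each `i` a coordinate
witnessing `¬ a i ≤ b i` gives an injection `c : Fin m → Fin l` with `p < q` strictly in every
coordinate `c i` (`crown_injection`).

*`ℝ_<^{n+1}` into `X × ℝ_<^n`.* The image of a crown lies above the image of `p`, hence in a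
single fibre `{x} × ℝ^n`, which would give an injection `Fin (n + 1) → Fin n`.

*`X × ℝ_<^n` into `ℝ_<^{n+1}`.* Each fibre `{x} × ℝ^n` contains a crown in one of the pieces, so the
images `P x ≤ Q x` of its bounds are strictly separated by rationals in `n` of the `n + 1`
coordinates. As `X` is uncountable, two distinct points `x`, `y` share the piece, the coordinates and
the rationals. Then `P x ≤ Q y` or `P y ≤ Q x`, since only one coordinate is left to compare
(`cross_comparable`); but points in different fibres are incomparable.
-/

open Set

/-- A family in `ℝ^l` forming the standard example of an `m`-dimensional poset (`a i ≤ b j` exactly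
when `i ≠ j`), with a common lower bound `p` and a common upper bound `q` of `p` and the
`a i`. The size `m` of the crown and the number `l` of coordinates are independent. -/
structure IsCrown {m l : ℕ} (p q : Fin l → ℝ) (a b : Fin m → Fin l → ℝ) : Prop where
  p_le_q : p ≤ q
  p_le_a : ∀ i, p ≤ a i
  p_le_b : ∀ i, p ≤ b i
  a_le_q : ∀ i, a i ≤ q
  a_le_b : ∀ i j, i ≠ j → a i ≤ b j
  not_a_le_b : ∀ i, ¬ a i ≤ b i

theorem exists_crown {m : ℕ} (A : ℕ → Set (Fin m → ℝ)) (hA : ⋃ k, A k = univ) :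
    ∃ k, ∃ p ∈ A k, ∃ q ∈ A k, ∃ a b : Fin m → Fin m → ℝ,
      (∀ i, a i ∈ A k) ∧ (∀ i, b i ∈ A k) ∧ IsCrown p q a b := by
  obtain ⟨k, z, hz⟩ := nonempty_interior_of_iUnion_of_closed
    (f := fun k => closure (A k)) (fun _ => isClosed_closure)
    (eq_univ_of_subset (iUnion_mono fun k => subset_closure) hA)
  obtain ⟨ε, hε, hball⟩ := Metric.isOpen_iff.1 isOpen_interior z hz
  -- Every point of the grid `z + (ε / 8) v` with `|v| ≤ 4` is approximated from within `A k`
  -- closely enough to keep the strict inequalities between integer grid coordinates.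
  have key : ∀ v : Fin m → ℝ, (∀ i, |v i| ≤ 4) →
      ∃ y ∈ A k, ∀ i, |y i - (z i + ε / 8 * v i)| < ε / 24 := by
    intro v hv
    have hmem : (fun i => z i + ε / 8 * v i) ∈ closure (A k) := by
      apply interior_subset
      apply hball
      rw [Metric.mem_ball, dist_pi_lt_iff hε]
      intro i
      rw [Real.dist_eq, abs_lt]
      have := abs_le.1 (hv i)
      constructor <;> nlinarith
    obtain ⟨y, hy, hd⟩ := Metric.mem_closure_iff.1 hmem (ε / 24) (by positivity)
    refine ⟨y, hy, fun i => ?_⟩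
    rw [dist_comm, dist_pi_lt_iff (by positivity)] at hd
    simpa [Real.dist_eq] using hd i
  obtain ⟨p, hp, hp'⟩ := key (fun _ => -1) (by intro i; norm_num)
  obtain ⟨q, hq, hq'⟩ := key (fun _ => 4) (by intro i; norm_num)
  choose a ha ha' using fun i : Fin m => key (fun j => if j = i then 2 else 0)
    (by intro j; split_ifs <;> norm_num)
  choose b hb hb' using fun i : Fin m => key (fun j => if j = i then 1 else 3)
    (by intro j; split_ifs <;> norm_num)
  simp only [abs_lt] at hp' hq' ha' hb'
  refine ⟨k, p, hp, q, hq, a, b, ha, hb, ?_, ?_, ?_, ?_, ?_, ?_⟩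
  · intro j
    linarith [(hp' j).2, (hq' j).1]
  · intro i j
    have h1 := ha' i j
    have h2 := hp' j
    split_ifs at h1 <;> linarith [h1.1, h2.2]
  · intro i j
    have h1 := hb' i j
    have h2 := hp' j
    split_ifs at h1 <;> linarith [h1.1, h2.2]
  · intro i j
    have h1 := ha' i j
    have h2 := hq' j
    split_ifs at h1 <;> linarith [h1.2, h2.1]
  · intro i i' hne j
    have h1 := ha' i j
    have h2 := hb' i' j
    split_ifs at h1 h2 with e1 e2
    · exact absurd (e1.symm.trans e2) hne
    all_goals linarith [h1.2, h2.1]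
  · intro i hle
    have h1 := ha' i i
    have h2 := hb' i i
    rw [if_pos rfl] at h1 h2
    linarith [h1.1, h2.2, hle i]

theorem crown_injection {m l : ℕ} {p q : Fin l → ℝ} {a b : Fin m → Fin l → ℝ}
    (h : IsCrown p q a b) :
    ∃ c : Fin m → Fin l, Function.Injective c ∧ ∀ i, p (c i) < q (c i) := by
  have h1 : ∀ i, ∃ c, b i c < a i c := fun i => by
    simpa [Pi.le_def] using h.not_a_le_b i
  choose c hc using h1
  refine ⟨c, fun i j hij => ?_, fun i => ?_⟩
  · by_contra hne
    have h2 := h.a_le_b i j hne (c j)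
    have h3 := h.a_le_b j i (Ne.symm hne) (c j)
    have h4 := hc i
    rw [hij] at h4
    linarith [hc j]
  · linarith [h.p_le_b i (c i), hc i, h.a_le_q i (c i)]

/-- Two pairs `P ≤ Q`, `R ≤ S` in `ℝ^{n+1}` separated by the same reals in the same `n`
coordinates are cross-comparable: the one remaining coordinate can obstruct at most one of the
two comparisons. -/
theorem cross_comparable {n : ℕ} {P Q R S : Fin (n + 1) → ℝ} (hPQ : P ≤ Q) (hRS : R ≤ S)
    (c : Fin n → Fin (n + 1)) (hc : Function.Injective c) (r : Fin n → ℝ)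
    (hP : ∀ i, P (c i) < r i) (hQ : ∀ i, r i < Q (c i))
    (hR : ∀ i, R (c i) < r i) (hS : ∀ i, r i < S (c i)) :
    P ≤ S ∨ R ≤ Q := by
  -- Two indices outside the range of `c` coincide, by counting.
  have huniq : ∀ d e, d ∉ range c → e ∉ range c → d = e := by
    intro d e hd he
    by_contra hne
    have hinj : Function.Injective (fun o : Option (Option (Fin n)) =>
        o.elim d (fun o => o.elim e c)) := by
      rintro (_ | _ | i) (_ | _ | j) hij
      all_goals simp only [Option.elim] at hij
      all_goals first
        | rfl
        | exact absurd hij hne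
        | exact absurd hij.symm hne
        | exact (hd (Exists.intro _ hij)).elim
        | exact (hd (Exists.intro _ hij.symm)).elim
        | exact (he (Exists.intro _ hij)).elim
        | exact (he (Exists.intro _ hij.symm)).elim
        | rw [hc hij]
    have := Fintype.card_le_of_injective _ hinj
    simp at this
  by_contra! hcon
  obtain ⟨h1, h2⟩ := hcon
  simp only [Pi.le_def, not_forall, not_le] at h1 h2
  obtain ⟨d, hd⟩ := h1
  obtain ⟨e, he⟩ := h2
  have hd' : d ∉ range c := by
    rintro ⟨i, rfl⟩
    linarith [hP i, hS i]
  have he' : e ∉ range c := by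
    rintro ⟨i, rfl⟩
    linarith [hR i, hQ i]
  obtain rfl := huniq d e hd' he'
  linarith [hPQ d, hRS d]

/-- The identity, viewing points of `ℝ_<^k` as points of `ℝ^k` with its coordinatewise order. -/
def toReal {k : ℕ} (u : Fin k → RLower) : Fin k → ℝ := u

/-- The inverse of `toReal`. -/
def ofReal {k : ℕ} (u : Fin k → ℝ) : Fin k → RLower := u

theorem specializes_rlower (x y : RLower) : x ⤳ y ↔ @LE.le ℝ _ y x := by
  constructor
  · intro h
    by_contra hlt
    have ho : IsOpen (X := RLower) (Set.Ioi (α := ℝ) x) :=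
      TopologicalSpace.isOpen_generateFrom_of_mem ⟨x, rfl⟩
    exact lt_irrefl (α := ℝ) x (h.mem_open ho (not_le.1 hlt))
  · intro h
    rw [specializes_iff_forall_open]
    intro s hs
    -- Open sets of the lower topology are upper sets.
    have : ∀ s : Set ℝ, TopologicalSpace.GenerateOpen { s : Set ℝ | ∃ p : ℝ, s = Set.Ioi p } s →
        IsUpperSet s := by
      intro s hs
      induction hs with
      | basic s hs =>
        obtain ⟨p, rfl⟩ := hs
        exact isUpperSet_Ioi p
      | univ => exact isUpperSet_univ
      | inter s t _ _ hs ht => exact hs.inter ht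
      | sUnion S _ ih => exact isUpperSet_sUnion ih
    exact fun hy => this s hs h hy

theorem specializes_pi_rlower {k : ℕ} (u v : Fin k → RLower) : u ⤳ v ↔ toReal v ≤ toReal u := by
  rw [specializes_pi]
  exact forall_congr' fun i => specializes_rlower _ _

/-- A σ-embedding provides maps preserving and reflecting specialization on each piece. -/
theorem SigmaEmbeddable.exists_maps {X Y : Type*} [TopologicalSpace X] [TopologicalSpace Y]
    [Nonempty Y] (h : SigmaEmbeddable X Y) :
    ∃ (A : ℕ → Set X) (g : ℕ → X → Y), ⋃ k, A k = univ ∧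
      ∀ k, ∀ u ∈ A k, ∀ v ∈ A k, (g k u ⤳ g k v ↔ u ⤳ v) := by
  classical
  obtain ⟨A, hA, hB⟩ := h
  choose B hB using hB
  refine ⟨A, fun k x => if hx : x ∈ A k then ((hB k).some ⟨x, hx⟩ : Y) else Classical.arbitrary Y,
    hA, fun k u hu v hv => ?_⟩
  simp only [dif_pos hu, dif_pos hv]
  rw [← subtype_specializes_iff, (hB k).some.isInducing.specializes_iff, subtype_specializes_iff]

/-- For an uncountable second-countable T1 space `X`, the space `X × ℝ_<^n` is not
σ-embeddable into `ℝ_<^{n+1}`; combined with the other direction, `ℝ_<^{n+1}` and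
`X × ℝ_<^n` are σ-incomparable. -/
theorem stmt7 (n : ℕ) (X : Type*) [TopologicalSpace X]
    [SecondCountableTopology X] [T1Space X] [Uncountable X] :
    ¬ SigmaEmbeddable (X × (Fin n → RLower)) (Fin (n + 1) → RLower) ∧
    ¬ SigmaEmbeddable (Fin (n + 1) → RLower) (X × (Fin n → RLower)) := by
  have : Nonempty RLower := ⟨(0 : ℝ)⟩
  constructor
  · intro h
    obtain ⟨A, g, hA, hg⟩ := h.exists_maps
    have hle : ∀ k x u y v, (x, ofReal u) ∈ A k → (y, ofReal v) ∈ A k →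
        (toReal (g k (x, ofReal u)) ≤ toReal (g k (y, ofReal v)) ↔ y = x ∧ u ≤ v) := by
      intro k x u y v hu hv
      rw [← specializes_pi_rlower, hg k _ hv _ hu, specializes_prod, specializes_iff_eq,
        specializes_pi_rlower]
      rfl
    have hx : ∀ x : X, ∃ (k : ℕ) (c : Fin n → Fin (n + 1)) (r : Fin n → ℚ) (p q : Fin n → ℝ),
        (x, ofReal p) ∈ A k ∧ (x, ofReal q) ∈ A k ∧ p ≤ q ∧ Function.Injective c ∧
        (∀ i, toReal (g k (x, ofReal p)) (c i) < r i) ∧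
        (∀ i, r i < toReal (g k (x, ofReal q)) (c i)) := by
      intro x
      obtain ⟨k, p, hp, q, hq, a, b, ha, hb, hcr⟩ :=
        exists_crown (fun k => {u : Fin n → ℝ | (x, ofReal u) ∈ A k}) (by
          ext u
          have : (x, ofReal u) ∈ ⋃ k, A k := hA ▸ mem_univ _
          simpa using this)
      have hcr' : IsCrown (toReal (g k (x, ofReal p))) (toReal (g k (x, ofReal q)))
          (fun i => toReal (g k (x, ofReal (a i)))) (fun i => toReal (g k (x, ofReal (b i)))) :=
        { p_le_q := (hle _ _ _ _ _ hp hq).2 ⟨rfl, hcr.p_le_q⟩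
          p_le_a := fun i => (hle _ _ _ _ _ hp (ha i)).2 ⟨rfl, hcr.p_le_a i⟩
          p_le_b := fun i => (hle _ _ _ _ _ hp (hb i)).2 ⟨rfl, hcr.p_le_b i⟩
          a_le_q := fun i => (hle _ _ _ _ _ (ha i) hq).2 ⟨rfl, hcr.a_le_q i⟩
          a_le_b := fun i j hij => (hle _ _ _ _ _ (ha i) (hb j)).2 ⟨rfl, hcr.a_le_b i j hij⟩
          not_a_le_b := fun i hi => hcr.not_a_le_b i ((hle _ _ _ _ _ (ha i) (hb i)).1 hi).2 }
      obtain ⟨c, hc, hlt⟩ := crown_injection hcr'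
      choose r hr hr' using fun i => exists_rat_btwn (hlt i)
      exact ⟨k, c, r, p, q, hp, hq, hcr.p_le_q, hc, hr, hr'⟩
    choose k c r p q hp hq hpq hc hr hr' using hx
    have hninj : ¬ Function.Injective (fun x => (k x, c x, r x)) := fun hinj =>
      not_countable (α := X) hinj.countable
    simp only [Function.Injective, not_forall] at hninj
    obtain ⟨x, y, hxy, hne⟩ := hninj
    simp only [Prod.mk.injEq] at hxy
    obtain ⟨hk, hcc, hrr⟩ := hxy
    have hpy := hp y
    have hqy := hq y
    have hry := hr y
    have hry' := hr' y
    rw [← hk] at hpy hqy hry hry'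
    rw [← hcc, ← hrr] at hry hry'
    rcases cross_comparable ((hle _ _ _ _ _ (hp x) (hq x)).2 ⟨rfl, hpq x⟩)
      ((hle _ _ _ _ _ hpy hqy).2 ⟨rfl, hpq y⟩) (c x) (hc x) (fun i => (r x i : ℝ))
      (hr x) (hr' x) hry hry' with h1 | h1
    · exact hne ((hle _ _ _ _ _ (hp x) hqy).1 h1).1.symm
    · exact hne ((hle _ _ _ _ _ hpy (hq x)).1 h1).1
  · intro h
    have : Nonempty X := inferInstance
    obtain ⟨A, g, hA, hg⟩ := h.exists_maps
    have hle : ∀ k u v, ofReal u ∈ A k → ofReal v ∈ A k →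
        (u ≤ v ↔ (g k (ofReal v)).1 = (g k (ofReal u)).1 ∧
          toReal (g k (ofReal u)).2 ≤ toReal (g k (ofReal v)).2) := by
      intro k u v hu hv
      rw [← specializes_pi_rlower, ← specializes_iff_eq, ← specializes_prod, hg k _ hv _ hu,
        specializes_pi_rlower]
      rfl
    obtain ⟨k, p, hp, q, hq, a, b, ha, hb, hcr⟩ := exists_crown (m := n + 1) A hA
    have hcr' : IsCrown (toReal (g k (ofReal p)).2) (toReal (g k (ofReal q)).2)
        (fun i => toReal (g k (ofReal (a i))).2) (fun i => toReal (g k (ofReal (b i))).2) :=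
      { p_le_q := ((hle _ _ _ hp hq).1 hcr.p_le_q).2
        p_le_a := fun i => ((hle _ _ _ hp (ha i)).1 (hcr.p_le_a i)).2
        p_le_b := fun i => ((hle _ _ _ hp (hb i)).1 (hcr.p_le_b i)).2
        a_le_q := fun i => ((hle _ _ _ (ha i) hq).1 (hcr.a_le_q i)).2
        a_le_b := fun i j hij => ((hle _ _ _ (ha i) (hb j)).1 (hcr.a_le_b i j hij)).2
        -- `a i` and `b i` lie in the fibre of `p`, so only the second component can fail.
        not_a_le_b := fun i hi => hcr.not_a_le_b i ((hle _ _ _ (ha i) (hb i)).2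
          ⟨((hle _ _ _ hp (hb i)).1 (hcr.p_le_b i)).1.trans
            ((hle _ _ _ hp (ha i)).1 (hcr.p_le_a i)).1.symm, hi⟩) }
    obtain ⟨c, hc, -⟩ := crown_injection hcr'
    have := Fintype.card_le_of_injective c hc
    simp at this
end

section
/- Let n ≥ 1 and let (P_i)_{i ∈ ℕ} be a countable family of pairwise disjoint sets with ⋃_i P_i = [0,1]^n. Then there exist an index i and an injective map e : {0,1}^n → [0,1]^n whose range is contained in P_i such that for all s, t ∈ {0,1}^n: s ≤ t in the coordinatewise (product) order on {0,1}^n if and only if e(s) ≤ e(t) in the coordinatewise (product) order on [0,1]^n. That is, some piece P_i contains a subset order-isomorphic to the Boolean cube Λ^n = ({0,1}^n, ≤). -/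
open Set Function

/-!
By the Baire category theorem some piece `P i` is dense in a nonempty open set, hence in a
product of open intervals. The cube `Λⁿ` embeds into such a box robustly, so that small
perturbations of the points do not matter: assign to `s` the integer vector
`cubeLevel s k = (n + 1) * s k + |s|`. If `s < t`, every coordinate strictly increases since `|s|`
does; if `s k = 1` and `t k = 0`, then the `k`-th coordinate of `s` exceeds that of `t` because
`|t| ≤ n`. Replacing each integer by one of a succession of consecutive open intervals yields open
boxes indexed by `s` such that any choice of points in the boxes is an order embedding; by density,
the points can be chosen in `P i`.
-/

/-- The `k`-th coordinate of the integer model of the Boolean cube: `(n + 1) * s k + |s|`, where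
`|s|` is the number of coordinates equal to `true`. -/
def cubeLevel {n : ℕ} (s : Fin n → Bool) (k : Fin n) : ℕ :=
  (n + 1) * (s k).toNat + ∑ j, (s j).toNat

lemma cubeLevel_lt_of_lt {n : ℕ} {s t : Fin n → Bool} (h : s < t) (k : Fin n) :
    cubeLevel s k < cubeLevel t k := by
  obtain ⟨hle, j, hj⟩ := Pi.lt_def.1 h
  have hmono : ∀ i, (s i).toNat ≤ (t i).toNat := fun i => Bool.toNat_le_toNat (hle i)
  refine add_lt_add_of_le_of_lt (Nat.mul_le_mul_left _ (hmono k))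
    (Finset.sum_lt_sum (fun i _ => hmono i) ⟨j, Finset.mem_univ j, ?_⟩)
  revert hj
  cases s j <;> cases t j <;> simp

lemma cubeLevel_lt_of_coord {n : ℕ} {s t : Fin n → Bool} {k : Fin n}
    (hs : s k = true) (ht : t k = false) : cubeLevel t k < cubeLevel s k := by
  have hcard : ∑ j, (t j).toNat ≤ n := by
    simpa using Finset.sum_le_card_nsmul Finset.univ (fun j => (t j).toNat) 1
      (fun j _ => Bool.toNat_le (t j))
  simp only [cubeLevel, hs, ht, Bool.toNat_true, Bool.toNat_false]
  omega

/-- A nonempty open `V ⊆ [0,1]` contains all the open intervals between consecutive terms of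
some strictly increasing sequence. -/
lemma exists_strictMono_Ioo_subset {V : Set unitInterval} (hV : IsOpen V) (hne : V.Nonempty) :
    ∃ g : ℕ → unitInterval, StrictMono g ∧ ∀ m, Ioo (g m) (g (m + 1)) ⊆ V := by
  obtain ⟨a, b, hab, hsub⟩ := hV.exists_Ioo_subset hne
  have : Nonempty (Ioo a b) := (nonempty_Ioo.2 hab).to_subtype
  obtain ⟨f, hf⟩ := Nat.exists_strictMono (Ioo a b)
  exact ⟨fun m => f m, fun i j hij => hf hij, fun m y hy =>
    hsub ⟨(f m).2.1.trans hy.1, hy.2.trans (f (m + 1)).2.2⟩⟩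

/-- Some piece of any countable partition of `[0,1]^n` contains an order-isomorphic copy
of the Boolean cube `Λⁿ = ({0,1}ⁿ, ≤)` (coordinatewise orders). -/
theorem stmt8 (n : ℕ) (hn : 1 ≤ n) (P : ℕ → Set (Fin n → unitInterval))
    (hdisj : Pairwise (Disjoint on P)) (hcov : (⋃ i, P i) = univ) :
    ∃ (i : ℕ) (e : (Fin n → Bool) → (Fin n → unitInterval)),
      Injective e ∧ range e ⊆ P i ∧ ∀ s t : Fin n → Bool, s ≤ t ↔ e s ≤ e t := by
  obtain ⟨i, x, hx⟩ := nonempty_interior_of_iUnion_of_closed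
    (f := fun i => closure (P i)) (fun _ => isClosed_closure)
    (univ_subset_iff.1 (hcov ▸ iUnion_mono fun i => subset_closure))
  obtain ⟨V, hV, hVsub⟩ := isOpen_pi_iff'.1 isOpen_interior x hx
  choose g hg hgV using fun k => exists_strictMono_Ioo_subset (hV k).1 ⟨x k, (hV k).2⟩
  have hpick : ∀ s : Fin n → Bool, ∃ y ∈ P i, ∀ k,
      y k ∈ Ioo (g k (cubeLevel s k)) (g k (cubeLevel s k + 1)) := by
    intro s
    choose z hz using fun k => exists_between (hg k (Nat.lt_succ_self (cubeLevel s k)))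
    have hzcl : z ∈ closure (P i) :=
      interior_subset (hVsub fun k _ => hgV k _ (hz k))
    obtain ⟨y, hy, hyP⟩ := mem_closure_iff.1 hzcl
      (univ.pi fun k => Ioo (g k (cubeLevel s k)) (g k (cubeLevel s k + 1)))
      (isOpen_set_pi finite_univ fun k _ => isOpen_Ioo) (fun k _ => hz k)
    exact ⟨y, hyP, fun k => hy k (mem_univ k)⟩
  choose e heP he using hpick
  have hlt : ∀ s t k, cubeLevel s k < cubeLevel t k → e s k < e t k := fun s t k h =>
    (he s k).2.trans_le (((hg k).monotone (Nat.succ_le_of_lt h)).trans (he t k).1.le)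
  have hiff : ∀ s t : Fin n → Bool, s ≤ t ↔ e s ≤ e t := by
    intro s t
    constructor
    · intro h
      rcases h.eq_or_lt with rfl | h
      · exact le_rfl
      · exact fun k => (hlt s t k (cubeLevel_lt_of_lt h k)).le
    · intro h k
      by_contra hk
      obtain ⟨hs, ht⟩ : s k = true ∧ t k = false := by
        revert hk
        cases s k <;> cases t k <;> simp
      exact (h k).not_gt (hlt t s k (cubeLevel_lt_of_coord hs ht))
  exact ⟨i, e, fun s t h => le_antisymm ((hiff s t).2 h.le) ((hiff t s).2 h.ge),
    range_subset_iff.2 heP, hiff⟩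
end

section
/- For k ≥ 1, define recursively a predicate NM_k on subsets of [0,1]^k as follows: NM_1(P) holds iff P is nonmeager in [0,1]; and NM_{k+1}(P) holds iff the set {x ∈ [0,1] : NM_k({y ∈ [0,1]^k : (x, y) ∈ P})} is nonmeager in [0,1]. Then for every n ≥ 1 and every countable family (P_i)_{i ∈ ℕ} of pairwise disjoint sets with ⋃_i P_i = [0,1]^n, there exists an index i such that NM_n(P_i) holds. -/
/-!
A countable cover of `[0,1]` has a nonmeager piece, because `[0,1]` is a Baire space and meager
sets form a σ-ideal (`exists_not_isMeagre_of_iUnion_eq_univ`). The iterated version follows by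
induction on the dimension: for each `x` the sections over `x` cover the lower-dimensional cube,
so one of them satisfies the iterated quantifier; hence the sets `{x | NM k (section of P i)}`
cover `[0,1]`, and one of these is nonmeager.
-/

open Set

/-- The iterated Vaught "nonmeager" quantifier `NM_k` on subsets of `[0,1]^k`:
`NM 1 P` holds iff `P` is nonmeager in `[0,1]`, and `NM (k+1) P` holds iff the set of
`x ∈ [0,1]` such that `NM k` holds of the section `{y | (x, y) ∈ P}` is nonmeager in `[0,1]`. -/
def NM : (k : ℕ) → Set (Fin k → unitInterval) → Prop
  | 0, _ => True
  | 1, P => ¬ IsMeagre {x : unitInterval | (fun _ => x) ∈ P}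
  | (k + 2), P =>
      ¬ IsMeagre {x : unitInterval | NM (k + 1) {y : Fin (k + 1) → unitInterval | Fin.cons x y ∈ P}}

theorem exists_not_isMeagre_of_iUnion_eq_univ (A : ℕ → Set unitInterval)
    (hA : (⋃ i, A i) = univ) : ∃ i, ¬ IsMeagre (A i) := by
  by_contra! h
  have hU : IsMeagre (univ : Set unitInterval) := hA ▸ isMeagre_iUnion h
  exact not_isMeagre_of_isOpen isOpen_univ univ_nonempty hU

theorem exists_NM_of_iUnion_eq_univ (k : ℕ) (P : ℕ → Set (Fin (k + 1) → unitInterval))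
    (hcov : (⋃ i, P i) = univ) : ∃ i, NM (k + 1) (P i) := by
  induction k with
  | zero =>
    exact exists_not_isMeagre_of_iUnion_eq_univ (fun i => {x | (fun _ => x) ∈ P i})
      (eq_univ_of_forall fun x => mem_iUnion.2 (iUnion_eq_univ_iff.1 hcov _))
  | succ k ih =>
    refine exists_not_isMeagre_of_iUnion_eq_univ
      (fun i => {x | NM (k + 1) {y | Fin.cons x y ∈ P i}})
      (eq_univ_of_forall fun x => mem_iUnion.2 ?_)
    exact ih (fun i => {y | Fin.cons x y ∈ P i})
      (eq_univ_of_forall fun y => mem_iUnion.2 (iUnion_eq_univ_iff.1 hcov _))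

/-- For every countable partition of `[0,1]^n` (`n ≥ 1`) into pairwise disjoint pieces,
some piece satisfies the iterated nonmeagerness quantifier `NM_n`. -/
theorem stmt9 (n : ℕ) (hn : 1 ≤ n) (P : ℕ → Set (Fin n → unitInterval))
    (hdisj : Pairwise (Function.onFun Disjoint P)) (hcov : (⋃ i, P i) = univ) :
    ∃ i, NM n (P i) := by
  obtain ⟨k, rfl⟩ := Nat.exists_eq_add_of_le' hn
  exact exists_NM_of_iUnion_eq_univ k P hcov
end

section
/- There exists a function Q assigning to every countable set S of ordinals below ω₁ (the least uncountable ordinal) a second-countable T0 topological space Q(S) such that: (i) Q(S) is not σ-embeddable into the Hilbert cube [0,1]^ℕ (in particular Q(S) is not separable metrizable); and (ii) for all countable sets S, T of ordinals below ω₁, if S ⊄ T then Q(S) is not σ-embeddable into Q(T). -/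
/-!
Let `Ray` be the real line with the topology of open upper rays: a second-countable T0 space in
which any two points are comparable for specialization. All the spaces `Q S` are subspaces of it.

* A T1 subspace of `Ray` has at most one point, so a subspace of `Ray` that is σ-embeddable into
  the Hilbert cube is countable. Hence (i) only requires `Q S` to be uncountable.
* Fix a countable basis `b` of `Ray`. A homeomorphism `h` between two subspaces is recorded by which
  basic sets are mapped into which basic sets by `h` and by its inverse, i.e. by a `Code`. By T0
  separation each code defines the graph `CodeRel` of a partial injection, and the graph of `h` is
  contained in it (`exists_code`), so there are only continuum many partial injections to handle.
* There are continuum many tasks `(label, sequence of codes)`. Well-order them in order type `𝔠`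
  and choose by recursion a point `p ξ` for each task `ξ`, so that for `η < ξ` the points `p ξ` and
  `p η` are distinct, are not matched by a code of `ξ`, and are not matched by a code of `η`
  (`exists_avoiding`, `exists_points`). Fewer than `𝔠` points are excluded at each stage.

Taking `Q S` to be the set of the points `p ξ` whose label is `none` or `some (g o)` with `o ∈ S`,
where `g` is an injection of `ω₁` into `ℝ`, gives (ii): if `o ∈ S \ T` and `c` is a sequence of codes
for a σ-embedding of `Q S` into `Q T`, then the point of the task `(some (g o), c)` lies in `Q S` and
is matched by no code of `c` with any point of `Q T`.
-/

open Set

/-- The least uncountable ordinal `ω₁`. -/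
noncomputable def omega1 : Ordinal := (Cardinal.aleph 1).ord

open Cardinal hiding univ
open Topology TopologicalSpace

/-- The real line, to be equipped with the topology of open upper rays. -/
def Ray : Type := ℝ

/-- The topology generated by the rays `(q, ∞)` with `q` rational, as the topology induced from the
power of the Sierpiński space `Prop` by `x ↦ (q ↦ q < x)`. -/
instance : TopologicalSpace Ray :=
  TopologicalSpace.induced (fun (x : ℝ) (q : ℚ) => ((q : ℝ) < x)) inferInstance

theorem Ray.isInducing :
    IsInducing (X := Ray) (fun (x : ℝ) (q : ℚ) => ((q : ℝ) < x)) := ⟨rfl⟩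

instance : SecondCountableTopology Ray := Ray.isInducing.secondCountableTopology

theorem Ray.specializes_of_le {x y : ℝ} (h : x ≤ y) : (show Ray from y) ⤳ (show Ray from x) := by
  rw [← Ray.isInducing.specializes_iff, specializes_pi]
  intro q
  by_cases hq : (q : ℝ) < x
  · have hy : (q : ℝ) < y := hq.trans_le h
    simp only [hq, hy]
    exact specializes_rfl
  · -- The only neighbourhood of `False` in the Sierpiński space is the whole space.
    simp only [hq, Specializes, nhds_false]
    exact le_top

instance : T0Space Ray := by
  have hinj : Function.Injective (fun (x : ℝ) (q : ℚ) => ((q : ℝ) < x)) := by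
    intro x y hxy
    by_contra hne
    rcases lt_or_gt_of_ne hne with h | h
    · obtain ⟨q, h1, h2⟩ := exists_rat_btwn h
      have := congrFun hxy q
      simp only [eq_iff_iff] at this
      exact absurd (this.2 h2) (not_lt.2 h1.le)
    · obtain ⟨q, h1, h2⟩ := exists_rat_btwn h
      have := congrFun hxy q
      simp only [eq_iff_iff] at this
      exact absurd (this.1 h2) (not_lt.2 h1.le)
  exact (IsEmbedding.mk Ray.isInducing hinj).t0Space

theorem Ray.specializes_total (x y : Ray) : x ⤳ y ∨ y ⤳ x :=
  (le_total (α := ℝ) x y).symm.imp Ray.specializes_of_le Ray.specializes_of_le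

theorem Ray.mk : #Ray = 𝔠 := Cardinal.mk_real

theorem countable_of_sigmaEmbeddable_cube (P : Set Ray)
    (h : SigmaEmbeddable P (ℕ → unitInterval)) : P.Countable := by
  obtain ⟨A, hA, hB⟩ := h
  have hs : ∀ n, (A n).Subsingleton := by
    intro n
    obtain ⟨B, ⟨f⟩⟩ := hB n
    have : T1Space (A n) := f.symm.t1Space
    have key : ∀ a b : A n, ((a : P) : Ray) ⤳ ((b : P) : Ray) → a = b := by
      intro a b hab
      have h1 : (a : P) ⤳ (b : P) := IsInducing.subtypeVal.specializes_iff.1 hab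
      have h2 : a ⤳ b := IsInducing.subtypeVal.specializes_iff.1 h1
      exact h2.eq
    intro a ha b hb
    rcases Ray.specializes_total a b with h | h
    · exact congrArg Subtype.val (key ⟨a, ha⟩ ⟨b, hb⟩ h)
    · exact congrArg Subtype.val (key ⟨b, hb⟩ ⟨a, ha⟩ h).symm
  have : (univ : Set P).Countable := by
    rw [← hA]
    exact countable_iUnion fun n => (hs n).countable
  exact countable_coe_iff.1 (countable_univ_iff.1 this)

/-- A code for a partial injection of a space with a basis indexed by `ℕ`: the first component lists
pairs `(n, k)` such that the `k`-th basic set is mapped into the `n`-th one, the second component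
does so for the inverse map. -/
abbrev Code : Type := Set (ℕ × ℕ) × Set (ℕ × ℕ)

theorem mk_code_seq : #(ℕ → Code) = 𝔠 := by simp [Code]

/-- The graph of the partial injection coded by `c` relative to the basis `b`. -/
def CodeRel {Y : Type*} (b : ℕ → Set Y) (c : Code) (x y : Y) : Prop :=
  ∀ n, (y ∈ b n ↔ ∃ k, (n, k) ∈ c.1 ∧ x ∈ b k) ∧ (x ∈ b n ↔ ∃ k, (n, k) ∈ c.2 ∧ y ∈ b k)

section Codes

variable {Y : Type*} [TopologicalSpace Y] {b : ℕ → Set Y}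

theorem eq_of_forall_mem_basis [T0Space Y] (hb : IsTopologicalBasis (range b)) {x y : Y}
    (h : ∀ n, x ∈ b n ↔ y ∈ b n) : x = y := by
  refine hb.eq_iff.2 ?_
  rintro _ ⟨n, rfl⟩
  exact h n

theorem CodeRel.right_unique [T0Space Y] (hb : IsTopologicalBasis (range b)) {c : Code} {x y z : Y}
    (h1 : CodeRel b c x y) (h2 : CodeRel b c x z) : y = z :=
  eq_of_forall_mem_basis hb fun n => (h1 n).1.trans (h2 n).1.symm

theorem CodeRel.left_unique [T0Space Y] (hb : IsTopologicalBasis (range b)) {c : Code} {x y z : Y}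
    (h1 : CodeRel b c x z) (h2 : CodeRel b c y z) : x = y :=
  eq_of_forall_mem_basis hb fun n => (h1 n).2.trans (h2 n).2.symm

theorem exists_basis_index (hb : IsTopologicalBasis (range b)) {Z : Type*} [TopologicalSpace Z]
    {i j : Z → Y} (hi : IsInducing i) (hj : Continuous j) {n : ℕ} {z : Z} (hz : j z ∈ b n) :
    ∃ k, (∀ w, i w ∈ b k → j w ∈ b n) ∧ i z ∈ b k := by
  obtain ⟨U, hU, hUe⟩ := hi.isOpen_iff.1 ((hb.isOpen ⟨n, rfl⟩).preimage hj)
  have hzU : i z ∈ U := by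
    have : z ∈ i ⁻¹' U := hUe ▸ hz
    exact this
  obtain ⟨_, ⟨k, rfl⟩, hzk, hkU⟩ := hb.exists_subset_of_mem_open hzU hU
  refine ⟨k, fun w hw => ?_, hzk⟩
  have : w ∈ j ⁻¹' b n := hUe ▸ (show w ∈ i ⁻¹' U from hkU hw)
  exact this

/-- A homeomorphism between subspaces of `Y`, presented as two inducing maps from a common space,
is contained in a coded partial injection. -/
theorem exists_code (hb : IsTopologicalBasis (range b)) {Z : Type*} [TopologicalSpace Z]
    {i j : Z → Y} (hi : IsInducing i) (hj : IsInducing j) :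
    ∃ c : Code, ∀ z, CodeRel b c (i z) (j z) := by
  refine ⟨({p | ∀ w, i w ∈ b p.2 → j w ∈ b p.1}, {p | ∀ w, j w ∈ b p.2 → i w ∈ b p.1}), ?_⟩
  intro z n
  exact ⟨⟨fun h => exists_basis_index hb hi hj.continuous h, fun ⟨k, hk, hz⟩ => hk z hz⟩,
    ⟨fun h => exists_basis_index hb hj hi.continuous h, fun ⟨k, hk, hz⟩ => hk z hz⟩⟩

end Codes

/-- Transfinite choice of points: if every pair of stages excludes only countably many points, then
points can be chosen for continuum many stages, respecting all earlier exclusions. -/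
theorem exists_avoiding {K Y : Type} (hK : #K = 𝔠) (hY : #Y = 𝔠) (F : K → K → Y → Set Y)
    (hF : ∀ ξ η y, (F ξ η y).Countable) :
    ∃ (r : K → K → Prop) (_ : IsWellOrder K r) (p : K → Y), ∀ ξ η, r η ξ → p ξ ∉ F ξ η (p η) := by
  obtain ⟨r, hr, hrt⟩ := Cardinal.exists_ord_eq K
  have step : ∀ (ξ : K) (q : ∀ η, r η ξ → Y), ∃ y, ∀ η (h : r η ξ), y ∉ F ξ η (q η h) := by
    intro ξ q
    by_contra! hcon
    have hcov : (univ : Set Y) ⊆ ⋃ η : {η // r η ξ}, F ξ η (q η η.2) := by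
      intro y _
      obtain ⟨η, h, hy⟩ := hcon y
      exact mem_iUnion.2 ⟨⟨η, h⟩, hy⟩
    have hseg : #{η // r η ξ} < 𝔠 := by
      have := Cardinal.card_typein_lt (r := r) ξ hrt
      rwa [hK] at this
    have h1 : #(univ : Set Y) ≤ #{η // r η ξ} * ℵ₀ := by
      refine (mk_le_mk_of_subset hcov).trans ((mk_iUnion_le _).trans ?_)
      refine mul_le_mul_right (ciSup_le' fun η => ?_) _
      exact (hF ξ η _).le_aleph0
    rw [mk_univ, hY] at h1
    exact absurd h1 (not_le.2 (mul_lt_of_lt aleph0_le_continuum hseg aleph0_lt_continuum))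
  choose G hG using step
  let p : K → Y := hr.wf.fix fun ξ q => G ξ q
  have hp : ∀ ξ, p ξ = G ξ fun η _ => p η := fun ξ => hr.wf.fix_eq _ ξ
  refine ⟨r, hr, p, fun ξ η h => ?_⟩
  rw [hp ξ]
  exact hG ξ (fun η _ => p η) η h

/-- The diagonalization: distinct points `p ξ`, one for each task `ξ = (label, sequence of codes)`,
such that the codes of `ξ` match `p ξ` with no point of a different task. -/
theorem exists_points {b : ℕ → Set Ray} (hb : IsTopologicalBasis (range b)) :
    ∃ p : Option ℝ × (ℕ → Code) → Ray, Function.Injective p ∧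
      ∀ ξ η, ξ ≠ η → ∀ n, ¬ CodeRel b (ξ.2 n) (p ξ) (p η) := by
  have hK : #(Option ℝ × (ℕ → Code)) = 𝔠 := by
    have h1 : 𝔠 + 1 = 𝔠 := add_one_eq aleph0_le_continuum
    rw [mk_prod, mk_option, mk_real, mk_code_seq, h1]
    simp
  obtain ⟨r, hr, p, hp⟩ := exists_avoiding hK Ray.mk
    (fun ξ η y => {y} ∪ ((⋃ n, {x | CodeRel b (ξ.2 n) x y}) ∪ ⋃ n, {x | CodeRel b (η.2 n) y x}))
    (by
      intro ξ η y
      refine (countable_singleton y).union (Countable.union ?_ ?_)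
      · exact countable_iUnion fun n =>
          Set.Subsingleton.countable fun _ h1 _ h2 => CodeRel.left_unique hb h1 h2
      · exact countable_iUnion fun n =>
          Set.Subsingleton.countable fun _ h1 _ h2 => CodeRel.right_unique hb h1 h2)
  simp only [mem_union, mem_singleton_iff, mem_iUnion, mem_ofPred_eq, not_or, not_exists] at hp
  refine ⟨p, fun ξ η h => ?_, fun ξ η hne n => ?_⟩
  · rcases trichotomous_of r ξ η with h' | h' | h'
    · exact absurd h.symm (hp η ξ h').1
    · exact h'
    · exact absurd h (hp ξ η h').1
  · rcases trichotomous_of r ξ η with h' | h' | h'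
    · exact (hp η ξ h').2.2 n
    · exact absurd h' hne
    · exact (hp ξ η h').2.1 n

theorem exists_injOn_omega1 : ∃ g : Ordinal → ℝ, InjOn g (Iio omega1) := by
  have h : Cardinal.lift.{0} #(Iio omega1) ≤ Cardinal.lift #ℝ := by
    rw [mk_real, lift_continuum, Cardinal.mk_Iio_ordinal, omega1, card_ord]
    simpa using aleph_one_le_continuum
  obtain ⟨f⟩ := Cardinal.lift_mk_le'.1 h
  classical
  refine ⟨fun o => if ho : o ∈ Iio omega1 then f ⟨o, ho⟩ else 0, fun x hx y hy hxy => ?_⟩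
  simp only [hx, hy, dif_pos] at hxy
  exact congrArg Subtype.val (f.injective hxy)

/-- There is an assignment of second-countable T0 spaces `Q S` to countable sets `S` of
countable ordinals such that no `Q S` is σ-embeddable into the Hilbert cube, and
`S ⊄ T` implies `Q S` is not σ-embeddable into `Q T`. -/
theorem stmt11 :
    ∃ (Q : Set Ordinal → Type) (tQ : ∀ S, TopologicalSpace (Q S)),
      (∀ S : Set Ordinal, S.Countable → (∀ o ∈ S, o < omega1) →
        @SecondCountableTopology (Q S) (tQ S) ∧ @T0Space (Q S) (tQ S) ∧
        ¬ @SigmaEmbeddable (Q S) (ℕ → unitInterval) (tQ S) _) ∧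
      (∀ S T : Set Ordinal,
        S.Countable → (∀ o ∈ S, o < omega1) →
        T.Countable → (∀ o ∈ T, o < omega1) →
        ¬ S ⊆ T → ¬ @SigmaEmbeddable (Q S) (Q T) (tQ S) (tQ T)) := by
  obtain ⟨b, hb⟩ : ∃ b : ℕ → Set Ray, IsTopologicalBasis (range b) := by
    obtain ⟨B, hBc, -, hB⟩ := exists_countable_basis Ray
    have hne : B.Nonempty := by
      by_contra h
      rw [not_nonempty_iff_eq_empty] at h
      have := hB.sUnion_eq
      simp only [h, sUnion_empty] at this
      exact absurd (mem_univ (show Ray from (0 : ℝ))) (this ▸ notMem_empty _)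
    obtain ⟨b, rfl⟩ := hBc.exists_eq_range hne
    exact ⟨b, hB⟩
  obtain ⟨p, hpinj, hp⟩ := exists_points hb
  obtain ⟨g, hg⟩ := exists_injOn_omega1
  let X : Set Ordinal → Set Ray := fun S =>
    {x | ∃ ξ, p ξ = x ∧ (ξ.1 = none ∨ ∃ o ∈ S, ξ.1 = some (g o))}
  refine ⟨fun S => X S, fun S => inferInstance, ?_, ?_⟩
  · intro S _ _
    refine ⟨inferInstance, inferInstance, fun h => ?_⟩
    have hc := countable_of_sigmaEmbeddable_cube (X S) h
    -- The tasks with label `none` contribute uncountably many points to every `X S`.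
    have hc' : (range fun c : ℕ → Code => p (none, c)).Countable := by
      refine hc.mono ?_
      rintro _ ⟨c, rfl⟩
      exact ⟨(none, c), rfl, Or.inl rfl⟩
    have hinj : Function.Injective fun c : ℕ → Code => p (none, c) := fun c d h =>
      (Prod.ext_iff.1 (hpinj h)).2
    have hcount : Countable (ℕ → Code) := by
      have := countable_coe_iff.2 hc'
      exact (Equiv.ofInjective _ hinj).countable_iff.2 this
    exact absurd (Cardinal.mk_le_aleph0_iff.2 hcount)
      (not_le.2 (mk_code_seq ▸ Cardinal.aleph0_lt_continuum))
  · intro S T _ hS _ hT hST hemb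
    obtain ⟨o, hoS, hoT⟩ := not_subset.1 hST
    obtain ⟨A, hA, hB⟩ := hemb
    have hcode : ∀ n, ∃ c : Code, ∀ a ∈ A n, ∃ y ∈ X T, CodeRel b c (a : Ray) y := by
      intro n
      obtain ⟨B, ⟨f⟩⟩ := hB n
      obtain ⟨c, hc⟩ := exists_code hb
        (i := fun a : A n => ((a : X S) : Ray)) (j := fun a : A n => ((f a : X T) : Ray))
        (IsInducing.subtypeVal.comp IsInducing.subtypeVal)
        (IsInducing.subtypeVal.comp (IsInducing.subtypeVal.comp f.isInducing))
      exact ⟨c, fun a ha => ⟨_, (f ⟨a, ha⟩ : X T).2, hc ⟨a, ha⟩⟩⟩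
    choose c hc using hcode
    let x : X S := ⟨p (some (g o), c), _, rfl, Or.inr ⟨o, hoS, rfl⟩⟩
    obtain ⟨n, hn⟩ := mem_iUnion.1 (hA ▸ mem_univ x : x ∈ ⋃ n, A n)
    obtain ⟨_, ⟨η, rfl, hη⟩, hrel⟩ := hc n x hn
    refine hp (some (g o), c) η ?_ n hrel
    rintro rfl
    rcases hη with h | ⟨o', ho', h⟩
    · exact absurd h (by simp)
    · have : o = o' := hg (hS o hoS) (hT o' ho') (Option.some.inj h)
      exact hoT (this ▸ ho')
end

section
/- For every separable metrizable topological space X, the product X × ℝ_< is σ-embeddable into the powerset Set ℕ equipped with the Scott topology, but Set ℕ with the Scott topology is not σ-embeddable into X × ℝ_<. That is, X × ℝ_< lies strictly below the Scott domain O(ℕ) in the σ-embeddability ordering. -/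
/-!
A second countable T₀ space `Y` embeds into the Scott domain of subsets of `ℕ` by sending `y` to the
set of indices of the basic open sets containing `y`; this applies to `Y = X × ℝ_<`.

The failure of σ-embeddability in the other direction is seen on specialization orders alone. In
`X × ℝ_<` a point specializes to another only when the first coordinates agree, and `ℝ_<` is
totally ordered by specialization; so two points that both specialize to a third one are comparable
(`specializes_total_of_common`). In the powerset, specialization is reverse inclusion. The plane
`ℝ × ℝ` with the product order embeds into the powerset of `ℕ` through pairs of Dedekind cuts
(`cutPair`). If the powerset were a countable union of sets `A n` embeddable into `X × ℝ_<`, then by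
Baire's theorem the preimage in the plane of some `A n` would be dense in an open set. That preimage
then contains `a ≤ b`, `a ≤ c` with `b` and `c` incomparable, since these conditions are implied by
open ones: a contradiction.
-/

open Set

/-- The powerset of `ℕ` equipped with the Scott topology. -/
def ScottPowNat : Type := Set ℕ

instance : TopologicalSpace ScottPowNat := Topology.scott (Set ℕ) Set.univ

/-! ### The Scott topology on the powerset of `ℕ` -/

/-- Open sets of `ScottPowNat` in terms of inclusion. -/
lemma scottPowNat_isOpen_iff {U : Set ScottPowNat} :
    IsOpen U ↔ IsUpperSet (α := Set ℕ) U ∧ DirSupInaccOn (α := Set ℕ) univ U :=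
  @Topology.IsScott.isOpen_iff_isUpperSet_and_dirSupInaccOn (Set ℕ) univ _
    (Topology.scott (Set ℕ) univ) U (@Topology.IsScott.mk _ _ _ (Topology.scott (Set ℕ) univ) rfl)

lemma scottPowNat_isOpen_mem (n : ℕ) :
    IsOpen (Set.ofPred fun S : Set ℕ => n ∈ S : Set ScottPowNat) := by
  refine scottPowNat_isOpen_iff.2 ⟨fun S T h hS => h hS, ?_⟩
  intro d _ _ _ a ha (hn : n ∈ a)
  rw [isLUB_iff_sSup_eq] at ha
  subst ha
  obtain ⟨t, htd, ht⟩ := hn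
  exact ⟨t, htd, ht⟩

/-- Every Scott open neighbourhood of `S` contains a finite subset of `S`, because `S` is the
directed union of its finite subsets. -/
lemma exists_finset_mem_of_isOpen {U : Set ScottPowNat} (hU : IsOpen U) {S : Set ℕ}
    (hS : U S) : ∃ F : Finset ℕ, (F : Set ℕ) ⊆ S ∧ U (F : Set ℕ) := by
  obtain ⟨-, h⟩ := scottPowNat_isOpen_iff.1 hU
  obtain ⟨T, ⟨F, hF, rfl⟩, hT⟩ :=
    h (d := (fun F : Finset ℕ => (F : Set ℕ)) '' {F | (F : Set ℕ) ⊆ S}) (mem_univ _)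
      ⟨∅, ∅, by simp, by simp⟩ (by
        rintro _ ⟨F, hF, rfl⟩ _ ⟨G, hG, rfl⟩
        have hF' : (F : Set ℕ) ⊆ S := hF
        have hG' : (G : Set ℕ) ⊆ S := hG
        refine ⟨_, ⟨F ∪ G, ?_, rfl⟩, ?_, ?_⟩
        · change ((F ∪ G : Finset ℕ) : Set ℕ) ⊆ S
          rw [Finset.coe_union]
          exact union_subset hF' hG'
        · simp
        · simp) (a := S) (by
        constructor
        · rintro _ ⟨F, hF, rfl⟩
          exact hF
        · intro T hT n hn
          exact hT ⟨{n}, by simpa using hn, rfl⟩ (by simp)) hS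
  exact ⟨F, hF, hT⟩

lemma scottPowNat_specializes_iff {S T : Set ℕ} :
    Specializes (X := ScottPowNat) S T ↔ T ⊆ S := by
  refine (specializes_iff_forall_open (X := ScottPowNat)).trans ⟨?_, ?_⟩
  · intro h n hn
    exact h _ (scottPowNat_isOpen_mem n) hn
  · intro h U hU hT
    exact (scottPowNat_isOpen_iff.1 hU).1 h hT

open Topology in
/-- The embedding sends a point to the set of indices of the basic open sets containing it. -/
lemma exists_isEmbedding_scottPowNat (Y : Type*) [TopologicalSpace Y] [SecondCountableTopology Y]
    [T0Space Y] : ∃ e : Y → ScottPowNat, IsEmbedding e := by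
  obtain ⟨b, hbc, -, hb⟩ := TopologicalSpace.exists_countable_basis Y
  -- `univ` is added only to make the family nonempty, so that `ℕ` can enumerate it.
  obtain ⟨B, hB⟩ := (hbc.insert univ).exists_eq_range (insert_nonempty _ _)
  have hBo : ∀ n, IsOpen (B n) := by
    intro n
    have : B n ∈ insert univ b := hB ▸ mem_range_self n
    rcases this with h | h
    · rw [h]; exact isOpen_univ
    · exact hb.isOpen h
  let e : Y → ScottPowNat := fun y => ({n | y ∈ B n} : Set ℕ)
  have he : Continuous e := by
    rw [continuous_def]
    intro U hU
    rw [isOpen_iff_mem_nhds]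
    intro y hy
    obtain ⟨F, hF, hFU⟩ := exists_finset_mem_of_isOpen hU (S := {n | y ∈ B n}) hy
    have : (⋂ n ∈ F, B n) ∈ 𝓝 y :=
      (Filter.biInter_finset_mem F).2 fun n hn => (hBo n).mem_nhds (hF hn)
    refine Filter.mem_of_superset this fun z hz => ?_
    have hFz : (F : Set ℕ) ⊆ {n | z ∈ B n} := fun n hn => mem_iInter₂.1 hz n hn
    exact (scottPowNat_isOpen_iff.1 hU).1 hFz hFU
  refine ⟨e, IsInducing.isEmbedding (isInducing_iff_nhds.2 fun y => le_antisymm ?_ ?_)⟩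
  · exact he.continuousAt.le_comap
  · intro V hV
    obtain ⟨W, hW, hyW, hWV⟩ := hb.mem_nhds_iff.1 hV
    obtain ⟨n, rfl⟩ : W ∈ range B := hB ▸ mem_insert_of_mem _ hW
    exact ⟨_, (scottPowNat_isOpen_mem n).mem_nhds (show e y ∈ _ from hyW), fun z hz => hWV hz⟩

/-! ### The lower topology on `ℝ` -/

lemma rLower_isOpen_Ioi (p : ℝ) : IsOpen (X := RLower) (Set.Ioi p : Set ℝ) :=
  TopologicalSpace.isOpen_generateFrom_of_mem ⟨p, rfl⟩

lemma rLower_specializes_iff {s t : ℝ} : Specializes (X := RLower) s t ↔ t ≤ s := by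
  constructor
  · intro h
    by_contra! hlt
    have := specializes_iff_forall_open.1 h _ (rLower_isOpen_Ioi s) hlt
    exact lt_irrefl s this
  · intro h
    refine Filter.tendsto_id'.1 (TopologicalSpace.tendsto_nhds_generateFrom_iff.2 ?_)
    rintro _ ⟨p, rfl⟩ hp
    exact (rLower_isOpen_Ioi p).mem_nhds (lt_of_lt_of_le (show p < t from hp) h)

instance : T0Space RLower := by
  refine ⟨fun s t h => ?_⟩
  exact le_antisymm (α := ℝ) (rLower_specializes_iff.1 h.specializes')
    (rLower_specializes_iff.1 h.specializes)

/-- The rays with rational endpoint generate the lower topology. -/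
instance : SecondCountableTopology RLower := by
  refine ⟨⟨range fun q : ℚ => (Set.Ioi (q : ℝ) : Set ℝ), countable_range _, ?_⟩⟩
  apply le_antisymm
  · apply le_generateFrom
    rintro _ ⟨q, rfl⟩
    exact rLower_isOpen_Ioi q
  · apply le_generateFrom
    rintro _ ⟨p, rfl⟩
    have : Set.Ioi p = ⋃ q : {q : ℚ // p < q}, Set.Ioi ((q : ℚ) : ℝ) := by
      ext x
      simp only [mem_Ioi, mem_iUnion]
      constructor
      · intro h
        obtain ⟨q, h1, h2⟩ := exists_rat_btwn h
        exact ⟨⟨q, h1⟩, h2⟩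
      · rintro ⟨⟨q, h1⟩, h2⟩
        exact h1.trans h2
    rw [this]
    exact @isOpen_iUnion _ _ (_) _ fun q =>
      TopologicalSpace.isOpen_generateFrom_of_mem ⟨q, rfl⟩

/-! ### Obstruction to σ-embeddability -/

lemma specializes_total_of_common {X : Type*} [TopologicalSpace X] [T1Space X]
    {a b c : X × RLower} (hb : b ⤳ a) (hc : c ⤳ a) : b ⤳ c ∨ c ⤳ b := by
  obtain ⟨x, r⟩ := a
  obtain ⟨y, s⟩ := b
  obtain ⟨z, t⟩ := c
  obtain rfl : y = x := (specializes_prod.1 hb).1.eq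
  obtain rfl : z = y := (specializes_prod.1 hc).1.eq
  rcases le_total (α := ℝ) t s with h | h
  · exact Or.inl (specializes_rfl.prod (rLower_specializes_iff.2 h))
  · exact Or.inr (specializes_rfl.prod (rLower_specializes_iff.2 h))

/-- The pair of lower Dedekind cuts of the coordinates of a point of the plane, coded as a set of
natural numbers. -/
def cutPair (p : ℝ × ℝ) : Set ℕ :=
  {n | ∃ q : ℚ, (n = Encodable.encode (Sum.inl q : ℚ ⊕ ℚ) ∧ (q : ℝ) < p.1) ∨
    (n = Encodable.encode (Sum.inr q : ℚ ⊕ ℚ) ∧ (q : ℝ) < p.2)}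

lemma cutPair_subset_iff {p p' : ℝ × ℝ} : cutPair p ⊆ cutPair p' ↔ p ≤ p' := by
  constructor
  · intro h
    refine ⟨le_of_forall_rat_lt_imp_le fun q hq => ?_, le_of_forall_rat_lt_imp_le fun q hq => ?_⟩
    · obtain ⟨q', h' | h'⟩ := h ⟨q, Or.inl ⟨rfl, hq⟩⟩
      · have := Encodable.encode_injective h'.1
        cases this
        exact h'.2.le
      · have := Encodable.encode_injective h'.1
        cases this
    · obtain ⟨q', h' | h'⟩ := h ⟨q, Or.inr ⟨rfl, hq⟩⟩
      · have := Encodable.encode_injective h'.1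
        cases this
      · have := Encodable.encode_injective h'.1
        cases this
        exact h'.2.le
  · rintro h n ⟨q, ⟨rfl, hq⟩ | ⟨rfl, hq⟩⟩
    · exact ⟨q, Or.inl ⟨rfl, hq.trans_le h.1⟩⟩
    · exact ⟨q, Or.inr ⟨rfl, hq.trans_le h.2⟩⟩

/-- A countable cover of the plane has a member containing a point below two incomparable points. -/
lemma exists_fork_of_iUnion {C : ℕ → Set (ℝ × ℝ)} (hC : ⋃ n, C n = univ) :
    ∃ n, ∃ a ∈ C n, ∃ b ∈ C n, ∃ c ∈ C n, a ≤ b ∧ a ≤ c ∧ ¬ b ≤ c ∧ ¬ c ≤ b := by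
  obtain ⟨n, ⟨x, y⟩, hxy⟩ := nonempty_interior_of_iUnion_of_closed
    (f := fun n => closure (C n)) (fun n => isClosed_closure)
    (eq_univ_of_subset (iUnion_mono fun n => subset_closure) hC)
  obtain ⟨ε, hε, hball⟩ := Metric.isOpen_iff.1 isOpen_interior _ hxy
  -- Density in the ball: any small open box near `(x, y)` meets `C n`.
  have key : ∀ s t s' t' : ℝ, x - ε < s → s < s' → s' < x + ε → y - ε < t → t < t' → t' < y + ε →
      ∃ p ∈ C n, s < p.1 ∧ p.1 < s' ∧ t < p.2 ∧ p.2 < t' := by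
    intro s t s' t' h1 h2 h3 h4 h5 h6
    have hmem : ((s + s') / 2, (t + t') / 2) ∈ closure (C n) := by
      apply interior_subset
      apply hball
      rw [← ball_prod_same, Real.ball_eq_Ioo, Real.ball_eq_Ioo]
      refine ⟨⟨?_, ?_⟩, ?_, ?_⟩ <;> simp only <;> linarith
    obtain ⟨p, ⟨hp1, hp2⟩, hp⟩ := mem_closure_iff.1 hmem (Ioo s s' ×ˢ Ioo t t')
      (isOpen_Ioo.prod isOpen_Ioo) ⟨⟨by simp only; linarith, by simp only; linarith⟩,
        by simp only; linarith, by simp only; linarith⟩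
    exact ⟨p, hp, hp1.1, hp1.2, hp2.1, hp2.2⟩
  -- `a` lies to the lower left of `(x, y)`; `b` and `c` lie to its upper right, and `b` is to the
  -- upper left of `c`.
  obtain ⟨a, ha, a1, a2, a3, a4⟩ := key (x - ε / 2) (y - ε / 2) x y
    (by linarith) (by linarith) (by linarith) (by linarith) (by linarith) (by linarith)
  obtain ⟨b, hb, b1, b2, b3, b4⟩ := key x (y + ε / 4) (x + ε / 4) (y + ε / 2)
    (by linarith) (by linarith) (by linarith) (by linarith) (by linarith) (by linarith)
  obtain ⟨c, hc, c1, c2, c3, c4⟩ := key (x + ε / 4) y (x + ε / 2) (y + ε / 4)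
    (by linarith) (by linarith) (by linarith) (by linarith) (by linarith) (by linarith)
  refine ⟨n, a, ha, b, hb, c, hc, ⟨by linarith, by linarith⟩, ⟨by linarith, by linarith⟩,
    fun h => ?_, fun h => ?_⟩
  · linarith [h.2]
  · linarith [h.1]

/-- For every separable metrizable `X`, the space `X × ℝ_<` lies strictly below the
Scott domain `O(ℕ)` in the σ-embeddability ordering. -/
theorem stmt12 (X : Type*) [TopologicalSpace X] [TopologicalSpace.MetrizableSpace X]
    [TopologicalSpace.SeparableSpace X] :
    SigmaEmbeddable (X × RLower) ScottPowNat ∧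
    ¬ SigmaEmbeddable ScottPowNat (X × RLower) := by
  constructor
  · have : SecondCountableTopology X := by
      let := TopologicalSpace.metrizableSpaceMetric X
      exact UniformSpace.secondCountable_of_separable X
    obtain ⟨e, he⟩ := exists_isEmbedding_scottPowNat (X × RLower)
    refine ⟨fun _ => univ, iUnion_const _, fun _ => ⟨range e, ⟨?_⟩⟩⟩
    exact (Homeomorph.Set.univ _).trans he.toHomeomorph
  · rintro ⟨A, hA, hAB⟩
    obtain ⟨n, a, ha, b, hb, c, hc, hab, hac, hbc, hcb⟩ :=
      exists_fork_of_iUnion (C := fun n => {p | A n (cutPair p)}) (by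
        refine eq_univ_of_forall fun p => ?_
        have : (cutPair p : ScottPowNat) ∈ ⋃ n, A n := hA ▸ mem_univ _
        obtain ⟨n, hn⟩ := mem_iUnion.1 this
        exact mem_iUnion.2 ⟨n, hn⟩)
    obtain ⟨B, ⟨φ⟩⟩ := hAB n
    have hind : Topology.IsInducing fun z : A n => (φ z : X × RLower) :=
      Topology.IsInducing.subtypeVal.comp φ.isInducing
    -- Specialization of the images in `X × ℝ_<` is the reverse of the order of the plane.
    have hspec : ∀ (p q : ℝ × ℝ) (hp : A n (cutPair p)) (hq : A n (cutPair q)),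
        ((φ ⟨cutPair p, hp⟩ : X × RLower) ⤳ φ ⟨cutPair q, hq⟩) ↔ q ≤ p := by
      intro p q hp hq
      rw [hind.specializes_iff, subtype_specializes_iff]
      exact scottPowNat_specializes_iff.trans cutPair_subset_iff
    rcases specializes_total_of_common ((hspec b a hb ha).2 hab) ((hspec c a hc ha).2 hac)
      with h | h
    · exact hcb ((hspec b c hb hc).1 h)
    · exact hbc ((hspec c b hc hb).1 h)
end

section
/- The Euclidean real line ℝ is not σ-embeddable into ℝ_<, and ℝ_< is not σ-embeddable into ℝ; that is, ℝ and ℝ_< are σ-incomparable. -/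
/-!
Open sets of `RLower` are upper sets for the usual order, so any two points of `RLower` are
comparable for specialization, and a T₁ subspace of `RLower` has at most one point. A subset of `ℝ`
homeomorphic to a subspace of `RLower`, or vice versa, makes that subspace T₁, hence the subset has
at most one point. A σ-embedding in either direction would thus exhibit the real numbers as a
countable union of sets with at most one point, contradicting uncountability.
-/

open Set

/-- Every open set of `RLower` is an upper set, so larger points specialize to smaller ones. -/
lemma RLower.specializes_of_le {x y : ℝ} (h : x ≤ y) :
    Specializes (X := RLower) y x := by
  refine specializes_iff_forall_open.2 ?_
  intro s hs
  induction hs with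
  | basic s hs =>
    obtain ⟨p, rfl⟩ := hs
    exact fun hx => lt_of_lt_of_le (show p < x from hx) h
  | univ => exact fun _ => trivial
  | inter s t _ _ ihs iht => exact fun hx => ⟨ihs hx.1, iht hx.2⟩
  | sUnion S _ ih =>
    rintro ⟨t, ht, hx⟩
    exact ⟨t, ht, ih t ht hx⟩

lemma RLower.subsingleton_of_t1 (B : Set RLower) [T1Space B] : Subsingleton B := by
  refine ⟨fun a b => ?_⟩
  rcases le_total (α := ℝ) a.1 b.1 with h | h
  · exact ((subtype_specializes_iff b a).2 (RLower.specializes_of_le h)).eq.symm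
  · exact ((subtype_specializes_iff a b).2 (RLower.specializes_of_le h)).eq

lemma real_not_iUnion_subsingleton (A : ℕ → Set ℝ) (hA : ⋃ n, A n = univ)
    (h : ∀ n, Subsingleton (A n)) : False := by
  apply Cardinal.not_countable_real
  rw [← hA]
  exact countable_iUnion fun n => (Set.subsingleton_coe _ |>.1 (h n)).countable

/-- The Euclidean real line and the lower real line are σ-incomparable. -/
theorem stmt13 : ¬ SigmaEmbeddable ℝ RLower ∧ ¬ SigmaEmbeddable RLower ℝ := by
  constructor
  · rintro ⟨A, hA, h⟩
    refine real_not_iUnion_subsingleton A hA fun n => ?_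
    obtain ⟨B, ⟨e⟩⟩ := h n
    have : T1Space B := e.symm.isEmbedding.t1Space
    have := RLower.subsingleton_of_t1 B
    exact e.toEquiv.subsingleton
  · rintro ⟨A, hA, h⟩
    refine real_not_iUnion_subsingleton A hA fun n => ?_
    obtain ⟨B, ⟨e⟩⟩ := h n
    have : T1Space (A n) := e.isEmbedding.t1Space
    exact RLower.subsingleton_of_t1 (A n)
end
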